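/- arXiv:1310.8623 — 3 statements merged into one kernel-verified Lean document; each statement's English description precedes it below -/
import Mathlib

section
/- Let p be a prime and let m, n be integers with gcd(m, n, p) = 1. Then |S(m,n;p)| ≤ 2√p. -/
/-- The Kloosterman sum `S(m,n;c)` (a real number). -/
noncomputable def Kloosterman (m n : ℤ) (c : ℕ) : ℝ :=
  ∑ a ∈ (Finset.range c).filter (fun a => Nat.Coprime a c),
    (Complex.exp (2 * Real.pi * Complex.I *
      (((m * a + n * (((a : ZMod c)⁻¹).val : ℤ) : ℤ) : ℂ) / c))).re


section Proof

open Polynomial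

lemma stepA_sq {F : Type*} [Field F] (f r s : F[X]) (e : F) (he : e ≠ 0)
    (hf : Squarefree f) (hu : ¬ IsUnit f) (h : r ^ 2 = s ^ 2 * (f * C e)) : r = 0 ∧ s = 0 := by
  by_cases hs : s = 0
  · subst hs
    simpa using h
  · exfalso
    have h1 : s ^ 2 ∣ r ^ 2 := ⟨_, h⟩
    have h2 : s ∣ r := (UniqueFactorizationMonoid.pow_dvd_pow_iff_dvd two_ne_zero).1 h1
    obtain ⟨t, rfl⟩ := h2
    have h3 : t ^ 2 = f * C e := by
      have : s ^ 2 * t ^ 2 = s ^ 2 * (f * C e) := by rw [← h]; ring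
      exact mul_left_cancel₀ (pow_ne_zero 2 hs) this
    have hCe : IsUnit (C e : F[X]) := isUnit_C.2 (isUnit_iff_ne_zero.2 he)
    have h4 : t * t ∣ f := by
      rw [← hCe.dvd_mul_right, ← h3, sq]
    have h5 := hf t h4
    have h6 : IsUnit (f * C e) := h3 ▸ h5.pow 2
    exact hu (isUnit_of_mul_isUnit_left h6)

lemma stepA_nonvanish {F : Type*} [Field F] (p μ : ℕ) [Fact p.Prime] [CharP F p]
    (f : F[X]) (hf : Squarefree f) (hu : ¬ IsUnit f) (h0 : f.eval 0 ≠ 0)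
    (b h : ℕ) (hh : 2 * h = p ^ μ + 1) (hb : 2 * b + f.natDegree < p ^ μ) (J : ℕ)
    (r s : Fin J → F[X]) (hr : ∀ j, (r j).natDegree ≤ b) (hs : ∀ j, (s j).natDegree ≤ b)
    (hQ : ∑ j : Fin J, (r j + s j * f ^ h) * X ^ ((j : ℕ) * p ^ μ) = 0) :
    ∀ j, r j = 0 ∧ s j = 0 := by
  induction J with
  | zero => intro j; exact j.elim0
  | succ J ih =>
    set M := p ^ μ with hM
    have hM0 : 0 < M := by omega
    obtain ⟨g, hg⟩ : ∃ g, f = C (f.eval 0) + X * g := by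
      have := Polynomial.X_dvd_sub_C (p := f)
      obtain ⟨g, hg⟩ := this
      refine ⟨g, ?_⟩
      rw [← hg, ← coeff_zero_eq_eval_zero]; ring
    have hfM : f ^ M = C (f.eval 0 ^ M) + X ^ M * g ^ M := by
      conv_lhs => rw [hg]
      rw [hM, add_pow_expChar_pow, mul_pow, C_pow]
    set A : F[X] := ∑ j : Fin J, r j.succ * X ^ ((j : ℕ) * M)
    set A' : F[X] := ∑ j : Fin J, s j.succ * X ^ ((j : ℕ) * M)
    have hsum : ∑ j : Fin J, (r j.succ + s j.succ * f ^ h) * X ^ ((j : ℕ) * M) = A + A' * f ^ h := by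
      simp only [A, A', Finset.sum_mul, ← Finset.sum_add_distrib]
      refine Finset.sum_congr rfl fun j _ => by ring
    have hQ' : r 0 + s 0 * f ^ h + X ^ M * (A + A' * f ^ h) = 0 := by
      rw [← hsum, ← hQ, Fin.sum_univ_succ, Finset.mul_sum]
      congr 1
      · simp
      · refine Finset.sum_congr rfl fun j _ => ?_
        rw [Fin.val_succ]; ring
    have key : r 0 ^ 2 = s 0 ^ 2 * (f * C (f.eval 0 ^ M)) := by
      have h1 : (r 0 + X ^ M * A) = - (s 0 + X ^ M * A') * f ^ h := by linear_combination hQ'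
      have h2 : (r 0 + X ^ M * A) ^ 2 = (s 0 + X ^ M * A') ^ 2 * (f * f ^ M) := by
        rw [h1, mul_pow, ← pow_mul, mul_comm h 2, hh]; ring
      rw [hfM] at h2
      have hd : X ^ M ∣ r 0 ^ 2 - s 0 ^ 2 * (f * C (f.eval 0 ^ M)) := by
        refine ⟨-(2 * r 0 * A + X ^ M * A ^ 2) + (2 * s 0 * A' + X ^ M * A' ^ 2) * f *
          (C (f.eval 0 ^ M) + X ^ M * g ^ M) + s 0 ^ 2 * f * g ^ M, ?_⟩
        linear_combination h2
      have hdeg : (r 0 ^ 2 - s 0 ^ 2 * (f * C (f.eval 0 ^ M))).natDegree < M := by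
        refine lt_of_le_of_lt ?_ hb
        have e1 := hr 0
        have e2 := hs 0
        refine (natDegree_sub_le _ _).trans (max_le ?_ ?_)
        · refine natDegree_pow_le.trans (by omega)
        · refine natDegree_mul_le.trans (add_le_add ?_ (natDegree_mul_C_le _ _))
          exact natDegree_pow_le.trans (by omega)
      have := Polynomial.eq_zero_of_dvd_of_natDegree_lt hd (by rw [natDegree_X_pow]; exact hdeg)
      exact sub_eq_zero.1 this
    obtain ⟨hr0, hs0⟩ := stepA_sq f (r 0) (s 0) _ (pow_ne_zero M h0) hf hu key
    have hrest : A + A' * f ^ h = 0 := by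
      rw [hr0, hs0] at hQ'
      simpa [hM0.ne', pow_eq_zero_iff] using hQ'
    have := ih (fun j => r j.succ) (fun j => s j.succ) (fun j => hr _) (fun j => hs _)
      (hsum.trans hrest)
    intro j
    refine Fin.cases ⟨hr0, hs0⟩ this j

lemma stepA_exists {F : Type*} [Field F] [Fintype F] (p μ : ℕ) [Fact p.Prime] [CharP F p]
    (f : F[X]) (b h J : ℕ)
    (hD : p ^ μ * b + f.natDegree * h + J < 2 * J * (b + 1)) :
    ∃ r s : Fin J → F[X], (∀ j, (r j).natDegree ≤ b) ∧ (∀ j, (s j).natDegree ≤ b) ∧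
      (∃ j, ¬ (r j = 0 ∧ s j = 0)) ∧
      ∑ j : Fin J, ((r j) ^ (p ^ μ) + (s j) ^ (p ^ μ) * f ^ h) * X ^ (j : ℕ) = 0 := by
  classical
  set D := p ^ μ * b + f.natDegree * h + J
  have nd : ∀ u : degreeLT F (b + 1), (u : F[X]).natDegree ≤ b := fun u =>
    by
    by_cases hu : (u : F[X]) = 0
    · simp [hu]
    · exact Nat.lt_succ_iff.1 ((natDegree_lt_iff_degree_lt hu).2 (mem_degreeLT.1 u.2))
  let Φ : (Fin J → degreeLT F (b + 1) × degreeLT F (b + 1)) → F[X] := fun u =>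
    ∑ j : Fin J, (((u j).1 : F[X]) ^ (p ^ μ) + ((u j).2 : F[X]) ^ (p ^ μ) * f ^ h) * X ^ (j : ℕ)
  have hΦ : ∀ u, Φ u ∈ degreeLT F D := by
    intro u
    refine Submodule.sum_mem _ fun j _ => ?_
    rw [mem_degreeLT]
    have e1 := nd (u j).1
    have e2 := nd (u j).2
    have hj := j.2
    refine lt_of_le_of_lt degree_le_natDegree ?_
    norm_cast
    have h1 : (((u j).1 : F[X]) ^ (p ^ μ)).natDegree ≤ p ^ μ * b :=
      natDegree_pow_le.trans (Nat.mul_le_mul_left _ e1)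
    have h2 : (((u j).2 : F[X]) ^ (p ^ μ) * f ^ h).natDegree ≤ p ^ μ * b + f.natDegree * h :=
      natDegree_mul_le.trans (add_le_add
        (natDegree_pow_le.trans (Nat.mul_le_mul_left _ e2))
        (natDegree_pow_le.trans (by rw [mul_comm])))
    have h3 := natDegree_add_le_of_degree_le
      (h1.trans (Nat.le_add_right _ (f.natDegree * h))) h2
    have h4 := (natDegree_mul_le (p := (((u j).1 : F[X]) ^ (p ^ μ) + ((u j).2 : F[X]) ^ (p ^ μ) * f ^ h)) (q := X ^ (j : ℕ)))
    rw [natDegree_X_pow] at h4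
    omega
  have fin1 : Finite (degreeLT F (b + 1)) := Finite.of_equiv _ (degreeLTEquiv F (b + 1)).toEquiv.symm
  have fin2 : Finite (degreeLT F D) := Finite.of_equiv _ (degreeLTEquiv F D).toEquiv.symm
  have c1 : ∀ n, Nat.card (degreeLT F n) = Fintype.card F ^ n := by
    intro n
    rw [Nat.card_congr (degreeLTEquiv F n).toEquiv]
    simp
  have hnotinj : ¬ Function.Injective (fun u => (⟨Φ u, hΦ u⟩ : degreeLT F D)) := by
    intro hinj
    have := Nat.card_le_card_of_injective _ hinj
    rw [Nat.card_fun, Nat.card_prod, c1, c1, ← pow_add, ← pow_mul, Nat.card_fin] at this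
    have h5 := (Nat.pow_le_pow_iff_right (Fintype.one_lt_card (α := F))).1 this
    have : (b + 1 + (b + 1)) * J = 2 * J * (b + 1) := by ring
    omega
  rw [Function.not_injective_iff] at hnotinj
  obtain ⟨u, v, huv, hne⟩ := hnotinj
  have huv' : Φ u = Φ v := congrArg Subtype.val huv
  refine ⟨fun j => (u j).1 - (v j).1, fun j => (u j).2 - (v j).2, fun j => ?_, fun j => ?_, ?_, ?_⟩
  · exact nd ((u j).1 - (v j).1)
  · exact nd ((u j).2 - (v j).2)
  · by_contra hcon
    push Not at hcon
    apply hne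
    funext j
    obtain ⟨h1, h2⟩ := hcon j
    exact Prod.ext (Subtype.ext (sub_eq_zero.1 h1)) (Subtype.ext (sub_eq_zero.1 h2))
  · rw [← sub_eq_zero.2 huv']
    simp only [Φ, ← Finset.sum_sub_distrib]
    refine Finset.sum_congr rfl fun j _ => ?_
    rw [sub_pow_expChar_pow, sub_pow_expChar_pow]
    ring

/-- Stepanov bound for square values of `f`. -/
lemma stepA_card {F : Type*} [Field F] [Fintype F] (p μ : ℕ) [Fact p.Prime] [CharP F p]
    (hq : Fintype.card F = p ^ μ * p ^ μ)
    (f : F[X]) (hf : Squarefree f) (hu : ¬ IsUnit f) (h0 : f.eval 0 ≠ 0)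
    (b h J : ℕ) (hh : 2 * h = p ^ μ + 1) (hb : 2 * b + f.natDegree < p ^ μ)
    (hD : p ^ μ * b + f.natDegree * h + J < 2 * J * (b + 1))
    (S : Finset F) (hS : ∀ y ∈ S, ∃ w, f.eval y = w ^ 2) :
    S.card ≤ b + f.natDegree * h + J * p ^ μ := by
  classical
  obtain ⟨r, s, hr, hs, ⟨j0, hj0⟩, hsum⟩ := stepA_exists p μ f b h J hD
  set M := p ^ μ with hM
  have hM0 : 0 < M := by omega
  set Q : F[X] := ∑ j : Fin J, (r j + s j * f ^ h) * X ^ ((j : ℕ) * M) with hQdef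
  have hQ : Q ≠ 0 := fun hQ0 => hj0 (stepA_nonvanish p μ f hf hu h0 b h hh hb J r s hr hs hQ0 j0)
  have hdeg : Q.natDegree ≤ b + f.natDegree * h + J * M := by
    refine natDegree_sum_le_of_forall_le _ _ fun j _ => ?_
    refine natDegree_mul_le.trans (add_le_add ?_ ?_)
    · refine natDegree_add_le_of_degree_le ((hr j).trans (Nat.le_add_right _ _)) ?_
      exact natDegree_mul_le.trans (add_le_add (hs j) (natDegree_pow_le.trans (by rw [mul_comm])))
    · rw [natDegree_X_pow]
      exact Nat.mul_le_mul_right _ j.2.le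
  refine le_trans ?_ hdeg
  refine le_trans (Finset.card_le_card (t := Q.roots.toFinset) ?_)
    ((Multiset.toFinset_card_le _).trans (card_roots' _))
  intro y hy
  rw [Multiset.mem_toFinset, mem_roots hQ, IsRoot]
  obtain ⟨w, hw⟩ := hS y hy
  have hyq : y ^ (M * M) = y := by rw [← hq]; exact FiniteField.pow_card y
  have hwM : w ^ (M * M) = w := by rw [← hq]; exact FiniteField.pow_card w
  have hfy : (f.eval y ^ h) ^ M = f.eval y ^ h := by
    rw [hw, ← pow_mul, ← pow_mul, ← mul_assoc, hh,
      show (M + 1) * M = M * M + M by ring, pow_add, hwM, ← pow_mul, hh, pow_succ, mul_comm]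
  have e1 := congrArg (eval y) hsum
  rw [eval_finsetSum, eval_zero] at e1
  have : (Q.eval y) ^ M = 0 := by
    rw [hQdef, eval_finsetSum, hM, sum_pow_char_pow, ← e1]
    refine Finset.sum_congr rfl fun j _ => ?_
    simp only [eval_mul, eval_add, eval_pow, eval_X]
    rw [← hM, mul_pow, ← pow_mul, mul_assoc, mul_comm (j : ℕ), pow_mul, hyq, hM, add_pow_expChar_pow,
      mul_pow, ← hM, hfy]
  exact pow_eq_zero_iff hM0.ne' |>.1 this

lemma stepB_poly {F : Type*} [Field F] (p : ℕ) [Fact p.Prime] [CharP F p] (h2 : (2 : F) ≠ 0)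
    (a d : F) (ha : a ≠ 0) :
    ((X ^ p - X + C d) ^ 2 - C (4 * a) : F[X]).natDegree = 2 * p ∧
      Squarefree ((X ^ p - X + C d) ^ 2 - C (4 * a) : F[X]) ∧
      ¬ IsUnit ((X ^ p - X + C d) ^ 2 - C (4 * a) : F[X]) := by
  have hp : 1 < p := (Fact.out : p.Prime).one_lt
  have hdeg : ((X ^ p - X + C d) ^ 2 - C (4 * a) : F[X]).natDegree = 2 * p := by
    rw [natDegree_sub_C, natDegree_pow, natDegree_add_C, FiniteField.X_pow_card_sub_X_natDegree_eq _ hp]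
  refine ⟨hdeg, ?_, ?_⟩
  · apply Separable.squarefree
    have h4 : (4 * a : F) ≠ 0 := mul_ne_zero (by
      rw [show (4 : F) = 2 * 2 by norm_num]; exact mul_ne_zero h2 h2) ha
    have hder : derivative ((X ^ p - X + C d) ^ 2 - C (4 * a) : F[X]) =
        - C 2 * (X ^ p - X + C d) := by
      simp [derivative_pow]
    rw [Separable, hder]
    refine ⟨-C (4 * a)⁻¹, -C ((4 * a)⁻¹ * 2⁻¹) * (X ^ p - X + C d), ?_⟩
    have e1 : C (4 * a)⁻¹ * C (4 * a) = (1 : F[X]) := by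
      rw [← C_mul, inv_mul_cancel₀ h4, C_1]
    have e2 : C (2 : F)⁻¹ * C 2 = (1 : F[X]) := by
      rw [← C_mul, inv_mul_cancel₀ h2, C_1]
    rw [C_mul (a := (4 * a)⁻¹)]
    linear_combination e1 + C (4 * a)⁻¹ * (X ^ p - X + C d) ^ 2 * e2
  · intro hu
    have := natDegree_eq_zero_of_isUnit hu
    omega

lemma stepB_num (p M : ℕ) (hM : 2 * p ^ 2 + 2 * p + 1 ≤ M) (hodd : Odd M) :
    ∃ b h J, 2 * h = M + 1 ∧ 2 * b + 2 * p < M ∧ M * b + 2 * p * h + J < 2 * J * (b + 1) ∧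
      2 * (b + 2 * p * h + J * M) ≤ M * M + (4 * p + 2) * M := by
  obtain ⟨k, rfl⟩ := hodd
  obtain ⟨b, hb⟩ : ∃ b, k = b + p := ⟨k - p, by nlinarith [Nat.sub_add_cancel (show p ≤ k by nlinarith)]⟩
  subst hb
  refine ⟨b, b + p + 1, b + p + 1 + p, by ring, by omega, ?_, ?_⟩
  · nlinarith
  · nlinarith

lemma stepB_count0 {F : Type*} [Field F] [Fintype F] [DecidableEq F] (p μ : ℕ) [Fact p.Prime]
    [CharP F p] (hp : 3 ≤ p) (hμ : 2 * p ^ 2 + 2 * p + 1 ≤ p ^ μ)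
    (hq : Fintype.card F = p ^ μ * p ^ μ) (a d : F) (ha : a ≠ 0) (hd : d ^ 2 ≠ 4 * a) :
    (Finset.univ.filter (fun t : F × F => t.1 ≠ 0 ∧ t.1 + a * t.1⁻¹ - t.2 ^ p + t.2 = d)).card
      ≤ p ^ μ * p ^ μ + (4 * p + 2) * p ^ μ := by
  have hpr : p.Prime := Fact.out
  have h2 : (2 : F) ≠ 0 := by
    intro h
    have : ((2 : ℕ) : F) = 0 := by exact_mod_cast h
    rw [CharP.cast_eq_zero_iff F p] at this
    exact absurd (Nat.le_of_dvd two_pos this) (by omega)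
  obtain ⟨hdeg, hsq, hun⟩ := stepB_poly (F := F) p h2 a d ha
  have hodd : Odd (p ^ μ) := (hpr.odd_of_ne_two (by omega)).pow
  obtain ⟨b, h, J, n1, n2, n3, n4⟩ := stepB_num p (p ^ μ) hμ hodd
  set T := Finset.univ.filter (fun t : F × F => t.1 ≠ 0 ∧ t.1 + a * t.1⁻¹ - t.2 ^ p + t.2 = d)
  have key : ∀ t ∈ T, t.1 ^ 2 - (t.2 ^ p - t.2 + d) * t.1 + a = 0 := by
    intro t ht
    obtain ⟨ht0, ht⟩ := (Finset.mem_filter.1 ht).2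
    rw [← ht]
    field_simp
    ring
  have hS := stepA_card p μ hq _ hsq hun (by
    rw [eval_sub, eval_pow, eval_add, eval_sub, eval_pow]
    simpa [hpr.ne_zero, sub_eq_zero] using hd) b h J n1 (by rw [hdeg]; exact n2)
    (by rw [hdeg]; exact n3) (T.image Prod.snd) (by
      intro y hy
      obtain ⟨t, ht, rfl⟩ := Finset.mem_image.1 hy
      refine ⟨2 * t.1 - (t.2 ^ p - t.2 + d), ?_⟩
      have := key t ht
      simp only [eval_sub, eval_pow, eval_add, eval_X, eval_C]
      linear_combination -4 * this)
  rw [hdeg] at hS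
  have hT : T.card ≤ 2 * (T.image Prod.snd).card := by
    refine Finset.card_le_mul_card_image T 2 fun y _ => ?_
    by_cases hne : (T.filter (fun t => t.2 = y)).Nonempty
    · obtain ⟨t0, ht0⟩ := hne
      rw [Finset.mem_filter] at ht0
      have k0 := key t0 ht0.1
      refine (Finset.card_le_card (t := {(t0.1, y), (y ^ p - y + d - t0.1, y)}) ?_).trans
        Finset.card_le_two
      intro t ht
      rw [Finset.mem_filter] at ht
      have k1 := key t ht.1
      rw [ht.2] at k1
      rw [ht0.2] at k0
      have : (t.1 - t0.1) * (t.1 - (y ^ p - y + d - t0.1)) = 0 := by linear_combination k1 - k0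
      rw [Finset.mem_insert, Finset.mem_singleton]
      rcases mul_eq_zero.1 this with h | h
      · exact Or.inl (Prod.ext (sub_eq_zero.1 h) ht.2)
      · exact Or.inr (Prod.ext (sub_eq_zero.1 h) ht.2)
    · rw [Finset.not_nonempty_iff_eq_empty.1 hne]; simp
  omega

lemma stepB_count {F : Type*} [Field F] [Fintype F] [DecidableEq F] (p μ : ℕ) [Fact p.Prime]
    [CharP F p] (hp : 3 ≤ p) (hμ : 2 * p ^ 2 + 2 * p + 1 ≤ p ^ μ)
    (hq : Fintype.card F = p ^ μ * p ^ μ) (a d : F) (ha : a ≠ 0) :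
    (Finset.univ.filter (fun t : F × F => t.1 ≠ 0 ∧ t.1 + a * t.1⁻¹ - t.2 ^ p + t.2 = d)).card
      ≤ p ^ μ * p ^ μ + (4 * p + 2) * p ^ μ := by
  have h2 : (2 : F) ≠ 0 := by
    intro h
    have : ((2 : ℕ) : F) = 0 := by exact_mod_cast h
    rw [CharP.cast_eq_zero_iff F p] at this
    exact absurd (Nat.le_of_dvd two_pos this) (by omega)
  obtain ⟨y0, hy0⟩ : ∃ y0 : F, (y0 ^ p - y0 + d) ^ 2 ≠ 4 * a := by
    by_contra hcon
    push Not at hcon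
    obtain ⟨hdeg, hsq, hun⟩ := stepB_poly (F := F) p h2 a d ha
    have : (Finset.univ : Finset F).card ≤ ((X ^ p - X + C d) ^ 2 - C (4 * a) : F[X]).natDegree := by
      refine le_trans (Finset.card_le_card (t := ((X ^ p - X + C d) ^ 2 - C (4 * a) : F[X]).roots.toFinset) ?_)
        ((Multiset.toFinset_card_le _).trans (card_roots' _))
      intro y _
      rw [Multiset.mem_toFinset, mem_roots hsq.ne_zero, IsRoot]
      simp [hcon y]
    rw [hdeg, Finset.card_univ, hq] at this
    nlinarith
  refine le_trans ?_ (stepB_count0 p μ hp hμ hq a (y0 ^ p - y0 + d) ha hy0)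
  refine Finset.card_le_card_of_injOn (fun t => (t.1, t.2 - y0)) ?_ ?_
  · intro t ht
    simp only [Finset.coe_filter, Finset.mem_univ, true_and, Set.mem_ofPred_eq] at ht ⊢
    refine ⟨ht.1, ?_⟩
    rw [sub_pow_char, ← ht.2]
    ring
  · intro t _ t' _ h
    simp only [Prod.mk.injEq, sub_left_inj] at h
    exact Prod.ext h.1 h.2

/-- The Kloosterman sum over a finite field, attached to an additive character. -/
noncomputable def ffKloo {F : Type*} [Field F] [Fintype F] (ψ : AddChar F ℂ) (a : F) : ℂ :=
  open Classical in ∑ x : F, if x = 0 then 0 else ψ (x + a * x⁻¹)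

lemma stepB_bound {F : Type*} [Field F] [Fintype F] (p μ : ℕ) [Fact p.Prime]
    [CharP F p] (hp : 3 ≤ p) (hμ : 2 * p ^ 2 + 2 * p + 1 ≤ p ^ μ)
    (hq : Fintype.card F = p ^ μ * p ^ μ) (a : F) (ha : a ≠ 0) (ψ : AddChar F ℂ) (hψ : ψ ≠ 1)
    (hfr : ∀ y, ψ (y ^ p) = ψ y) :
    ‖ffKloo ψ a‖ ≤ (4 * p + 2) * (p : ℝ) ^ μ + 1 := by
  classical
  set q : ℝ := (Fintype.card F : ℝ) with hqdef
  have hq0 : 0 < q := by rw [hqdef]; exact_mod_cast Fintype.card_pos (α := F)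
  set E : ℝ := (4 * p + 2) * (p : ℝ) ^ μ with hE
  have hqM : q = (p : ℝ) ^ μ * (p : ℝ) ^ μ := by rw [hqdef, hq]; push_cast; ring
  let T : Finset (F × F) := Finset.univ.filter (fun t => t.1 ≠ 0)
  let D : F × F → F := fun t => t.1 + a * t.1⁻¹ - t.2 ^ p + t.2
  let G : F → ℝ := fun d => ((T.filter (fun t => D t = d)).card : ℝ)
  have hG : ∀ d, G d ≤ q + E := by
    intro d
    have := stepB_count p μ hp hμ hq a d ha
    have h1 : T.filter (fun t => D t = d) =
      Finset.univ.filter (fun t : F × F => t.1 ≠ 0 ∧ t.1 + a * t.1⁻¹ - t.2 ^ p + t.2 = d) := by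
      ext t; simp [T, D]
    simp only [G, h1, hqM, hE]
    exact_mod_cast this
  have hT : (T.card : ℝ) = (q - 1) * q := by
    have : T = (Finset.univ.erase (0 : F)) ×ˢ Finset.univ := by
      ext t; simp [T]
    rw [this, Finset.card_product, Finset.card_erase_of_mem (Finset.mem_univ _), Finset.card_univ,
      Nat.cast_mul, Nat.cast_sub Fintype.card_pos]
    simp [hqdef]
  have hGsum : ∑ d, G d = (q - 1) * q := by
    rw [← hT]
    simp only [G]
    rw [← Nat.cast_sum, Finset.card_eq_sum_card_fiberwise (f := D) (t := Finset.univ) (fun _ _ => Finset.mem_coe.2 (Finset.mem_univ _))]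
  have hsum : ∑ d, ψ d * (G d : ℂ) = q * ffKloo ψ a := by
    have h1 : ∑ t ∈ T, ψ (D t) = ∑ d, ψ d * (G d : ℂ) := by
      rw [← Finset.sum_fiberwise T D]
      refine Finset.sum_congr rfl fun d _ => ?_
      rw [Finset.sum_congr rfl (g := fun _ => ψ d) (fun t ht => by rw [(Finset.mem_filter.1 ht).2])]
      simp [G, mul_comm]
    rw [← h1]
    have h2 : ∀ t, ψ (D t) = ψ (t.1 + a * t.1⁻¹) := by
      intro t
      have hne : ψ t.2 ≠ 0 := by
        intro h; have := ψ.norm_apply t.2; rw [h] at this; simp at this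
      simp only [D]
      rw [AddChar.map_add_eq_mul, AddChar.map_sub_eq_div, hfr, div_mul_cancel₀ _ hne]
    simp only [h2, T]
    rw [Finset.sum_filter, Fintype.sum_prod_type, ffKloo, Finset.mul_sum]
    refine Finset.sum_congr rfl fun x _ => ?_
    by_cases hx : x = 0
    · simp [hx]
    · simp [hx, hqdef]
  have h3 : ∑ d, ψ d * ((q + E - G d : ℝ) : ℂ) = - (q * ffKloo ψ a) := by
    rw [← hsum]
    push_cast
    simp only [mul_sub, Finset.sum_sub_distrib]
    rw [← Finset.sum_mul, AddChar.sum_eq_zero_of_ne_one hψ]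
    simp
  have h4 : q * ‖ffKloo ψ a‖ ≤ q * (E + 1) := by
    calc q * ‖ffKloo ψ a‖ = ‖∑ d, ψ d * ((q + E - G d : ℝ) : ℂ)‖ := by
          rw [h3, norm_neg, norm_mul, Complex.norm_real, Real.norm_of_nonneg hq0.le]
      _ ≤ ∑ d, ‖ψ d * ((q + E - G d : ℝ) : ℂ)‖ := norm_sum_le _ _
      _ = ∑ d, (q + E - G d) := by
          refine Finset.sum_congr rfl fun d _ => ?_
          rw [norm_mul, AddChar.norm_apply, one_mul, Complex.norm_real,
            Real.norm_of_nonneg (by linarith [hG d])]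
      _ = q * (E + 1) := by
          rw [Finset.sum_sub_distrib, hGsum, Finset.sum_const, Finset.card_univ, nsmul_eq_mul]
          ring
  exact le_of_mul_le_mul_left h4 hq0

lemma stepC_fibsum {α β : Type*} [Fintype α] [Fintype β] [DecidableEq β] (g : α → β) (w : β → ℂ) :
    ∑ u : α, w (g u) = ∑ v : β, ((Finset.univ.filter (fun u => g u = v)).card : ℂ) * w v := by
  rw [← Finset.sum_fiberwise Finset.univ g]
  refine Finset.sum_congr rfl fun v _ => ?_
  rw [Finset.sum_congr rfl (g := fun _ => w v) (fun t ht => by rw [(Finset.mem_filter.1 ht).2])]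
  simp

/-- The trace lift of an additive character. -/
noncomputable def liftChar {F : Type*} [Field F] (E : Type*) [Field E] [Algebra F E]
    (ψ : AddChar F ℂ) : AddChar E ℂ :=
  ψ.compAddMonoidHom (Algebra.trace F E).toAddMonoidHom

lemma liftChar_apply {F E : Type*} [Field F] [Field E] [Algebra F E] (ψ : AddChar F ℂ) (z : E) :
    liftChar E ψ z = ψ (Algebra.trace F E z) := rfl

section Quad

variable {F E : Type*} [Field F] [Fintype F] [Field E] [Fintype E] [Algebra F E]

lemma stepC_trace (hr : Module.finrank F E = 2) (z : E) :
    algebraMap F E (Algebra.trace F E z) = z + z ^ Fintype.card F := by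
  rw [FiniteField.algebraMap_trace_eq_sum_pow, hr]
  simp [Finset.sum_range_succ]

lemma stepC_norm (hr : Module.finrank F E = 2) (z : E) :
    algebraMap F E (Algebra.norm F z) = z * z ^ Fintype.card F := by
  rw [FiniteField.algebraMap_norm_eq_prod_pow, hr]
  simp [Finset.prod_range_succ]

lemma stepC_fiber [DecidableEq F] [DecidableEq E] (hr : Module.finrank F E = 2) (s t : F) :
    (Finset.univ.filter (fun u : F × F => (u.1 + u.2, u.1 * u.2) = (s, t))).card +
    (Finset.univ.filter (fun z : E => (Algebra.trace F E z, Algebra.norm F z) = (s, t))).card ≤ 2 := by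
  set P := Finset.univ.filter (fun u : F × F => (u.1 + u.2, u.1 * u.2) = (s, t)) with hP
  set Z := Finset.univ.filter (fun z : E => (Algebra.trace F E z, Algebra.norm F z) = (s, t)) with hZ
  have hinj := (algebraMap F E).injective
  have hPm : ∀ u ∈ P, u.1 + u.2 = s ∧ u.1 * u.2 = t := by
    intro u hu
    simpa [hP] using hu
  have hZm : ∀ z ∈ Z, z + z ^ Fintype.card F = algebraMap F E s ∧
      z * z ^ Fintype.card F = algebraMap F E t := by
    intro z hz
    have : Algebra.trace F E z = s ∧ Algebra.norm F z = t := by simpa [hZ] using hz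
    rw [← stepC_trace hr, ← stepC_norm hr, this.1, this.2]
    exact ⟨rfl, rfl⟩
  have hZq : ∀ z ∈ Z, z ^ 2 - algebraMap F E s * z + algebraMap F E t = 0 := by
    intro z hz
    obtain ⟨h1, h2⟩ := hZm z hz
    rw [← h1, ← h2]; ring
  by_cases hPn : P.Nonempty
  · obtain ⟨u, hu⟩ := hPn
    obtain ⟨hu1, hu2⟩ := hPm u hu
    have hPsub : P ⊆ {u, (u.2, u.1)} := by
      intro v hv
      obtain ⟨hv1, hv2⟩ := hPm v hv
      have : (v.1 - u.1) * (v.1 - u.2) = 0 := by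
        linear_combination v.1 * hv1 - hv2 - v.1 * hu1 + hu2
      rw [Finset.mem_insert, Finset.mem_singleton]
      rcases mul_eq_zero.1 this with h | h
      · exact Or.inl (Prod.ext (by linear_combination h) (by linear_combination hv1 - hu1 - h))
      · exact Or.inr (Prod.ext (by linear_combination h) (by linear_combination hv1 - hu1 - h))
    by_cases hZn : Z.Nonempty
    · have hfix : ∀ z ∈ Z, z = algebraMap F E u.1 ∧ u.1 = u.2 := by
        intro z hz
        have hz1 := hZq z hz
        obtain ⟨hz2, _⟩ := hZm z hz
        have : (z - algebraMap F E u.1) * (z - algebraMap F E u.2) = 0 := by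
          rw [← hz1, ← hu1, ← hu2, map_add, map_mul]; ring
        have hpow : ∀ c : F, (algebraMap F E c) ^ Fintype.card F = algebraMap F E c := by
          intro c; rw [← map_pow, FiniteField.pow_card]
        rcases mul_eq_zero.1 this with h | h
        · have hz3 := sub_eq_zero.1 h
          rw [hz3, hpow, ← map_add] at hz2
          have := hinj hz2
          exact ⟨hz3, by linear_combination this - hu1⟩
        · have hz3 := sub_eq_zero.1 h
          rw [hz3, hpow, ← map_add] at hz2
          have := hinj hz2
          have huu : u.1 = u.2 := by linear_combination hu1 - this
          exact ⟨by rw [huu]; exact hz3, huu⟩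
      have h12 := (hfix _ hZn.choose_spec).2
      have hP1 : P.card ≤ 1 := by
        refine (Finset.card_le_card hPsub).trans ?_
        have : (u.2, u.1) = u := Prod.ext h12.symm h12
        rw [this]; simp
      have hZ1 : Z.card ≤ 1 := by
        refine Finset.card_le_one.2 fun z hz z' hz' => ?_
        rw [(hfix z hz).1, (hfix z' hz').1]
      omega
    · rw [Finset.not_nonempty_iff_eq_empty.1 hZn, Finset.card_empty, add_zero]
      exact (Finset.card_le_card hPsub).trans Finset.card_le_two
  · rw [Finset.not_nonempty_iff_eq_empty.1 hPn, Finset.card_empty, zero_add]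
    by_cases hZn : Z.Nonempty
    · obtain ⟨z0, hz0⟩ := hZn
      refine (Finset.card_le_card (t := {z0, algebraMap F E s - z0}) ?_).trans Finset.card_le_two
      intro z hz
      have h0 := hZq z0 hz0
      have h1 := hZq z hz
      have : (z - z0) * (z - (algebraMap F E s - z0)) = 0 := by linear_combination h1 - h0
      rw [Finset.mem_insert, Finset.mem_singleton]
      rcases mul_eq_zero.1 this with h | h
      · exact Or.inl (sub_eq_zero.1 h)
      · exact Or.inr (sub_eq_zero.1 h)
    · rw [Finset.not_nonempty_iff_eq_empty.1 hZn]; simp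

lemma stepC_card (hr : Module.finrank F E = 2) : Fintype.card E = Fintype.card F ^ 2 := by
  rw [Module.card_eq_pow_finrank (K := F) (V := E), hr]

lemma stepC_fiber_eq [DecidableEq F] [DecidableEq E] (hr : Module.finrank F E = 2) (v : F × F) :
    (Finset.univ.filter (fun u : F × F => (u.1 + u.2, u.1 * u.2) = v)).card +
    (Finset.univ.filter (fun z : E => (Algebra.trace F E z, Algebra.norm F z) = v)).card = 2 := by
  have h1 : ∑ v : F × F,
      ((Finset.univ.filter (fun u : F × F => (u.1 + u.2, u.1 * u.2) = v)).card +
      (Finset.univ.filter (fun z : E => (Algebra.trace F E z, Algebra.norm F z) = v)).card)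
      = ∑ v : F × F, 2 := by
    rw [Finset.sum_add_distrib,
      ← Finset.card_eq_sum_card_fiberwise (f := fun u : F × F => (u.1 + u.2, u.1 * u.2))
        (s := Finset.univ) (t := Finset.univ) (fun _ _ => Finset.mem_coe.2 (Finset.mem_univ _)),
      ← Finset.card_eq_sum_card_fiberwise (f := fun z : E => (Algebra.trace F E z, Algebra.norm F z))
        (s := Finset.univ) (t := Finset.univ) (fun _ _ => Finset.mem_coe.2 (Finset.mem_univ _)),
      Finset.card_univ, Finset.card_univ, stepC_card hr, Fintype.card_prod, Finset.sum_const,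
      Finset.card_univ, Fintype.card_prod, smul_eq_mul]
    ring
  exact (Finset.sum_eq_sum_iff_of_le (fun v _ => stepC_fiber (E := E) hr v.1 v.2)).1 h1 v
    (Finset.mem_univ _)

/-- The quadratic case of the Hasse-Davenport relation for Kloosterman sums. -/
lemma stepC_main (hr : Module.finrank F E = 2) (ψ : AddChar F ℂ) (hψ : ψ ≠ 1) (a : F) (ha : a ≠ 0) :
    ffKloo ψ a ^ 2 + ffKloo (liftChar E ψ) (algebraMap F E a) = 2 * Fintype.card F := by
  classical
  have hinj := (algebraMap F E).injective
  let w : F × F → ℂ := fun v => if v.2 = 0 then 0 else ψ (v.1 * (1 + a * v.2⁻¹))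
  have h1 : ffKloo ψ a ^ 2 = ∑ u : F × F, w (u.1 + u.2, u.1 * u.2) := by
    rw [sq, ffKloo, Finset.sum_mul_sum, Fintype.sum_prod_type]
    refine Finset.sum_congr rfl fun x _ => Finset.sum_congr rfl fun y _ => ?_
    by_cases hx : x = 0
    · simp [hx, w]
    by_cases hy : y = 0
    · simp [hy, w]
    simp only [hx, hy, w, mul_eq_zero, or_self, if_false]
    rw [← AddChar.map_add_eq_mul]
    congr 1
    field_simp
    ring
  have h2 : ffKloo (liftChar E ψ) (algebraMap F E a) =
      ∑ z : E, w (Algebra.trace F E z, Algebra.norm F z) := by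
    rw [ffKloo]
    refine Finset.sum_congr rfl fun z _ => ?_
    by_cases hz : z = 0
    · simp [hz, w]
    have hN : Algebra.norm F z ≠ 0 := Algebra.norm_ne_zero_iff.2 hz
    simp only [hz, hN, w, if_false]
    rw [liftChar_apply]
    congr 1
    apply hinj
    rw [stepC_trace hr]
    simp only [map_mul, map_add, map_one, map_inv₀, stepC_trace hr, stepC_norm hr]
    have hfr : (z + algebraMap F E a * z⁻¹) ^ Fintype.card F =
        z ^ Fintype.card F + algebraMap F E a * (z ^ Fintype.card F)⁻¹ := by
      have := (FiniteField.frobeniusAlgHom F E).map_add z (algebraMap F E a * z⁻¹)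
      simpa [FiniteField.coe_frobeniusAlgHom, mul_pow, ← map_pow, FiniteField.pow_card] using this
    rw [hfr]
    have : z ^ Fintype.card F ≠ 0 := pow_ne_zero _ hz
    field_simp
    ring
  have h4 : ∑ v : F × F, w v = Fintype.card F := by
    rw [Fintype.sum_prod_type_right]
    have : ∀ t : F, ∑ s : F, w (s, t) = if t = -a then (Fintype.card F : ℂ) else 0 := by
      intro t
      by_cases ht : t = 0
      · have : (0 : F) ≠ -a := by simpa [eq_comm] using ha
        simp [ht, w, this]
      · simp only [w, ht, if_false]
        rw [AddChar.sum_mulShift _ (AddChar.IsPrimitive.of_ne_one hψ)]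
        have : 1 + a * t⁻¹ = 0 ↔ t = -a := by
          field_simp
          constructor
          · intro h; linear_combination h
          · intro h; linear_combination h
        simp [this]
    simp [this]
  rw [h1, h2, stepC_fibsum (fun u : F × F => (u.1 + u.2, u.1 * u.2)) w,
    stepC_fibsum (fun z : E => (Algebra.trace F E z, Algebra.norm F z)) w, ← Finset.sum_add_distrib, ← h4, Finset.mul_sum]
  refine Finset.sum_congr rfl fun v _ => ?_
  rw [← add_mul]
  congr 1
  exact_mod_cast stepC_fiber_eq (E := E) hr v

end Quad

lemma stepD_tower (p : ℕ) [Fact p.Prime] (ψ₀ : AddChar (ZMod p) ℂ) (hψ₀ : ψ₀ ≠ 1) (a₀ : ZMod p)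
    (ha₀ : a₀ ≠ 0) (δ : ℝ) (hδ : 0 ≤ δ) (hK : (2 + δ) * √p ≤ ‖ffKloo ψ₀ a₀‖) (k : ℕ) :
    ∃ (F : Type) (_ : Field F) (_ : Fintype F) (_ : CharP F p) (ψ : AddChar F ℂ) (a : F),
      ψ ≠ 1 ∧ a ≠ 0 ∧ (∀ y, ψ (y ^ p) = ψ y) ∧ Fintype.card F = p ^ (2 ^ k) ∧
      (2 + 4 ^ k * δ) * √(Fintype.card F) ≤ ‖ffKloo ψ a‖ := by
  induction k with
  | zero =>
    refine ⟨ZMod p, inferInstance, inferInstance, inferInstance, ψ₀, a₀, hψ₀, ha₀, ?_, ?_, ?_⟩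
    · intro y; rw [ZMod.pow_card]
    · simp [ZMod.card]
    · simpa [ZMod.card] using hK
  | succ k ih =>
    obtain ⟨F, _, _, _, ψ, a, hψ, ha, hfr, hcard, hbound⟩ := ih
    let E := FiniteField.Extension F p 2
    have hr : Module.finrank F E = 2 := FiniteField.finrank_extension F p 2
    let : Fintype E := Fintype.ofFinite E
    have hEc : CharP E p := charP_of_injective_algebraMap (algebraMap F E).injective p
    refine ⟨E, inferInstance, inferInstance, hEc, liftChar E ψ, algebraMap F E a, ?_, ?_, ?_, ?_, ?_⟩
    · intro h
      apply hψ
      ext x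
      obtain ⟨z, rfl⟩ := Algebra.trace_surjective F E x
      rw [← liftChar_apply, h]
      rfl
    · simpa using ha
    · intro y
      rw [liftChar_apply, liftChar_apply, ← hfr (Algebra.trace F E y)]
      congr 1
      apply (algebraMap F E).injective
      rw [map_pow (algebraMap F E), stepC_trace hr (y ^ p), stepC_trace hr y, add_pow_char, ← pow_mul, ← pow_mul, mul_comm]
    · rw [stepC_card (F := F) hr, hcard, ← pow_mul, pow_succ]
    · have h1 := stepC_main (E := E) hr ψ hψ a ha
      set q : ℝ := (Fintype.card F : ℝ) with hq
      have hq0 : 0 ≤ q := by positivity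
      have h2 : √(Fintype.card E : ℝ) = q := by
        rw [stepC_card (F := F) hr]; push_cast; exact Real.sqrt_sq hq0
      rw [h2]
      have h3 : ‖ffKloo ψ a‖ ^ 2 - 2 * q ≤ ‖ffKloo (liftChar E ψ) (algebraMap F E a)‖ := by
        have e : ffKloo (liftChar E ψ) (algebraMap F E a) = 2 * (Fintype.card F : ℂ) - ffKloo ψ a ^ 2 := by
          linear_combination h1
        rw [e, norm_sub_rev]
        have := norm_sub_norm_le (ffKloo ψ a ^ 2) (2 * (Fintype.card F : ℂ))
        rw [norm_pow, norm_mul, Complex.norm_natCast] at this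
        simpa using this
      refine le_trans ?_ h3
      have hx : 0 ≤ 4 ^ k * δ := by positivity
      have h4 : ((2 + 4 ^ k * δ) * √q) ^ 2 ≤ ‖ffKloo ψ a‖ ^ 2 :=
        pow_le_pow_left₀ (by positivity) hbound 2
      rw [mul_pow, Real.sq_sqrt hq0] at h4
      rw [pow_succ]
      nlinarith [mul_nonneg (sq_nonneg (4 ^ k * δ)) hq0]

lemma stepD_main (p : ℕ) [Fact p.Prime] (hp : 3 ≤ p) (ψ : AddChar (ZMod p) ℂ) (hψ : ψ ≠ 1)
    (a : ZMod p) (ha : a ≠ 0) : ‖ffKloo ψ a‖ ≤ 2 * √p := by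
  by_contra hcon
  push Not at hcon
  have hp0 : (0 : ℝ) < p := by exact_mod_cast (by omega : 0 < p)
  have hsp : 0 < √(p : ℝ) := Real.sqrt_pos.2 hp0
  set δ : ℝ := ‖ffKloo ψ a‖ / √p - 2 with hδdef
  have hδ : 0 < δ := by
    rw [hδdef, sub_pos, lt_div_iff₀ hsp]; exact hcon
  have hK : (2 + δ) * √p ≤ ‖ffKloo ψ a‖ := by
    rw [hδdef]; field_simp; linarith
  obtain ⟨n, hn⟩ := pow_unbounded_of_one_lt ((4 * p + 1) / δ) (show (1 : ℝ) < 4 by norm_num)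
  set k := n + 2 with hk
  obtain ⟨F, _, _, _, φ, b, hφ, hb, hfr, hcard, hbound⟩ :=
    stepD_tower p ψ hψ a ha δ hδ.le hK (k + 1)
  set μ := 2 ^ k with hμ
  have hμ3 : 3 ≤ μ := by
    have : 2 ^ 2 ≤ μ := Nat.pow_le_pow_right (by norm_num) (by omega)
    omega
  have hM : 2 * p ^ 2 + 2 * p + 1 ≤ p ^ μ := by
    have h1 : p ^ 3 ≤ p ^ μ := Nat.pow_le_pow_right (by omega) hμ3
    nlinarith [Nat.mul_le_mul hp (le_refl (p ^ 2)), Nat.mul_le_mul hp (le_refl p)]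
  have hcard' : Fintype.card F = p ^ μ * p ^ μ := by
    rw [hcard, pow_succ, ← pow_add]; congr 1; omega
  have h1 := stepB_bound p μ hp hM hcard' b hb φ hφ hfr
  set M : ℝ := (p : ℝ) ^ μ with hMdef
  have hM1 : 1 ≤ M := one_le_pow₀ (by exact_mod_cast (by omega : 1 ≤ p))
  have h2 : √(Fintype.card F : ℝ) = M := by
    rw [hcard']; push_cast; exact Real.sqrt_mul_self (by positivity)
  rw [h2] at hbound
  have h3 : (4 * p + 1 : ℝ) < 4 ^ (k + 1) * δ := by
    rw [div_lt_iff₀ hδ] at hn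
    refine hn.trans_le (mul_le_mul_of_nonneg_right ?_ hδ.le)
    exact pow_le_pow_right₀ (by norm_num) (by omega)
  nlinarith

lemma stepE_conv (p : ℕ) [Fact p.Prime] (m n : ℤ) :
    Kloosterman m n p = (∑ x : ZMod p, if x = 0 then 0 else
      (ZMod.stdAddChar ((m : ZMod p) * x + (n : ZMod p) * x⁻¹) : ℂ)).re := by
  have hpr : p.Prime := Fact.out
  rw [Complex.re_sum, Kloosterman]
  have : ∀ x : ZMod p, ((if x = 0 then 0 else
      (ZMod.stdAddChar ((m : ZMod p) * x + (n : ZMod p) * x⁻¹) : ℂ)) : ℂ).re =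
      if x ≠ 0 then (ZMod.stdAddChar ((m : ZMod p) * x + (n : ZMod p) * x⁻¹) : ℂ).re else 0 := by
    intro x; by_cases hx : x = 0 <;> simp [hx]
  simp only [this]
  rw [← Finset.sum_filter]
  refine Finset.sum_nbij' (fun a : ℕ => (a : ZMod p)) (fun x => x.val) ?_ ?_ ?_ ?_ ?_
  · intro a ha
    rw [Finset.mem_filter, Finset.mem_range] at ha
    simp only [Finset.mem_filter, Finset.mem_univ, true_and]
    rw [Ne, ZMod.natCast_eq_zero_iff]
    exact (hpr.coprime_iff_not_dvd.1 ha.2.symm)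
  · intro x hx
    simp only [Finset.mem_filter, Finset.mem_univ, true_and] at hx
    rw [Finset.mem_filter, Finset.mem_range]
    refine ⟨ZMod.val_lt x, ?_⟩
    rw [Nat.coprime_comm, hpr.coprime_iff_not_dvd, ← ZMod.natCast_eq_zero_iff, ZMod.natCast_zmod_val]
    exact hx
  · intro a ha
    rw [Finset.mem_filter, Finset.mem_range] at ha
    exact ZMod.val_cast_of_lt ha.1
  · intro x _
    exact ZMod.natCast_zmod_val x
  · intro a _
    have h1 : (m : ZMod p) * (a : ZMod p) + (n : ZMod p) * (a : ZMod p)⁻¹ =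
        ((m * a + n * (((a : ZMod p)⁻¹).val : ℤ) : ℤ) : ZMod p) := by
      push_cast
      rw [ZMod.natCast_zmod_val]
    rw [h1, ZMod.stdAddChar_coe]
    congr 2
    ring

lemma stepE_ram (p : ℕ) [Fact p.Prime] (n : ZMod p) (hn : n ≠ 0) :
    (∑ x : ZMod p, if x = 0 then 0 else (ZMod.stdAddChar (n * x) : ℂ)) = -1 := by
  have h1 := AddChar.sum_mulShift n (ZMod.isPrimitive_stdAddChar p)
  rw [if_neg hn] at h1
  have h2 : ∀ x : ZMod p, (if x = 0 then 0 else (ZMod.stdAddChar (n * x) : ℂ)) =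
      ZMod.stdAddChar (x * n) - if x = 0 then 1 else 0 := by
    intro x; by_cases hx : x = 0 <;> simp [hx, mul_comm]
  simp only [h2, Finset.sum_sub_distrib]
  rw [h1]; simp

lemma stepE_norm (p : ℕ) [Fact p.Prime] (m n : ZMod p) (h : m ≠ 0 ∨ n ≠ 0) :
    ‖∑ x : ZMod p, if x = 0 then 0 else (ZMod.stdAddChar (m * x + n * x⁻¹) : ℂ)‖ ≤ 2 * √p := by
  have hpr : p.Prime := Fact.out
  have h1p : (1 : ℝ) ≤ √p := Real.one_le_sqrt.2 (by exact_mod_cast hpr.one_lt.le)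
  by_cases hn : n = 0
  · have hm : m ≠ 0 := by tauto
    have := stepE_ram p m hm
    simp only [hn, zero_mul, add_zero, this]
    rw [norm_neg, norm_one]; linarith
  by_cases hm : m = 0
  · have h2 : ∑ x : ZMod p, (if x = 0 then 0 else (ZMod.stdAddChar (m * x + n * x⁻¹) : ℂ)) =
        ∑ x : ZMod p, (if x = 0 then 0 else (ZMod.stdAddChar (n * x) : ℂ)) := by
      refine Fintype.sum_equiv (⟨fun x => x⁻¹, fun x => x⁻¹, inv_inv, inv_inv⟩) _ _ fun x => ?_
      simp [hm]
    rw [h2, stepE_ram p n hn, norm_neg, norm_one]; linarith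
  rcases hpr.two_le.eq_or_lt with h2 | h3
  · have hle : ‖∑ x : ZMod p, if x = 0 then 0 else (ZMod.stdAddChar (m * x + n * x⁻¹) : ℂ)‖ ≤ 2 := by
      refine (norm_sum_le_of_le (f := fun x : ZMod p =>
        if x = 0 then 0 else (ZMod.stdAddChar (m * x + n * x⁻¹) : ℂ)) Finset.univ
        (n := fun _ => (1 : ℝ)) (fun x _ => ?_)).trans ?_
      · by_cases hx : x = 0 <;> simp [hx]
      · simp [ZMod.card, ← h2]
    linarith
  · have hψ : AddChar.mulShift (ZMod.stdAddChar (N := p)) m ≠ 1 := ZMod.isPrimitive_stdAddChar p hm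
    have := stepD_main p h3 _ hψ (m⁻¹ * n) (mul_ne_zero (inv_ne_zero hm) hn)
    rw [ffKloo] at this
    convert this using 4 with x _ 
    rw [AddChar.mulShift_apply]
    congr 1
    field_simp

end Proof

/-- Weil's bound for Kloosterman sums of prime moduli. -/
theorem weil_bound (p : ℕ) (hp : p.Prime) (m n : ℤ)
    (h : Int.gcd m (Int.gcd n (p : ℤ)) = 1) :
    |Kloosterman m n p| ≤ 2 * Real.sqrt p := by
  have : Fact p.Prime := ⟨hp⟩
  rw [stepE_conv]
  refine (Complex.abs_re_le_norm _).trans (stepE_norm p m n ?_)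
  by_contra hcon
  push Not at hcon
  rw [ZMod.intCast_zmod_eq_zero_iff_dvd, ZMod.intCast_zmod_eq_zero_iff_dvd] at hcon
  have h1 : (p : ℤ) ∣ (Int.gcd n (p : ℤ) : ℤ) := Int.dvd_coe_gcd hcon.2 dvd_rfl
  have h2 : (p : ℤ) ∣ (Int.gcd m (Int.gcd n (p : ℤ)) : ℤ) := Int.dvd_coe_gcd hcon.1 h1
  rw [h] at h2
  have h3 : p ∣ 1 := by exact_mod_cast h2
  exact hp.one_lt.ne' (Nat.dvd_one.1 h3)
end

section
/- Let c be a positive integer not divisible by 32, and let m, n be integers. Then |S(m,n;c)| ≤ c^{1/2} · gcd(m,n,c)^{1/2} · 2^{ω(c)}. -/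
section Stepanov
open Polynomial

lemma st_coeff {F : Type*} [Field F] (Q : ℕ) (P : F[X][X])
    (hP : ∀ j, (P.coeff j).degree < Q) (j i : ℕ) (hi : i < Q) :
    (P.eval (X ^ Q)).coeff (j * Q + i) = (P.coeff j).coeff i := by
  rw [eval_eq_sum_range' (n := P.natDegree + 1 + (j + 1)) (by omega), finsetSum_coeff]
  rw [Finset.sum_eq_single j]
  · rw [← pow_mul, mul_comm Q j, coeff_mul_X_pow', if_pos (by omega)]
    congr 1; omega
  · intro l _ hl
    rw [← pow_mul, mul_comm Q l, coeff_mul_X_pow']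
    split_ifs with h
    · apply coeff_eq_zero_of_degree_lt
      refine lt_of_lt_of_le (hP l) ?_
      norm_cast
      rcases lt_or_gt_of_ne hl with h1 | h1
      · have : (l + 1) * Q ≤ j * Q := Nat.mul_le_mul_right _ h1
        rw [add_mul] at this
        omega
      · have : (j + 1) * Q ≤ l * Q := Nat.mul_le_mul_right _ h1
        rw [add_mul] at this
        omega
    · rfl
  · intro h
    simp at h
    omega

lemma st_inj {F : Type*} [Field F] (Q : ℕ) (P : F[X][X])
    (hP : ∀ j, (P.coeff j).degree < Q) (h0 : P.eval (X ^ Q) = 0) : P = 0 := by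
  ext j i
  by_cases hi : i < Q
  · rw [← st_coeff Q P hP j i hi, h0]; simp
  · rw [coeff_eq_zero_of_degree_lt (lt_of_lt_of_le (hP j) (by exact_mod_cast not_lt.mp hi))]; simp

lemma st_nonsq {F : Type*} [Field F] (f : F[X]) (hsq : Squarefree f)
    (hd : 0 < f.natDegree) (g : F[X]) (hg : g.Monic) (R S : F[X][X])
    (h : R ^ 2 = C f * g.map C * S ^ 2) : R = 0 ∧ S = 0 := by
  have hS : S = 0 := by
    by_contra hS
    have h1 := congrArg leadingCoeff h
    rw [leadingCoeff_pow, leadingCoeff_mul, leadingCoeff_mul, leadingCoeff_pow, leadingCoeff_C,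
      (hg.map C).leadingCoeff, mul_one] at h1
    set r := R.leadingCoeff
    set s := S.leadingCoeff
    have hs : s ≠ 0 := leadingCoeff_ne_zero.mpr hS
    have : s ^ 2 ∣ r ^ 2 := ⟨f, by rw [h1]; ring⟩
    obtain ⟨t, ht⟩ := (show s ∣ r from (IsIntegrallyClosed.pow_dvd_pow_iff two_ne_zero).mp this)
    have : f = t * t := by
      apply mul_right_cancel₀ (pow_ne_zero 2 hs)
      rw [← h1, ht]; ring
    have hu := hsq t ⟨1, by rw [mul_one]; exact this⟩
    rw [this] at hd
    have := natDegree_eq_zero_of_isUnit (hu.mul hu)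
    omega
  refine ⟨?_, hS⟩
  rw [hS] at h
  simpa using h

lemma st_coeff_sum {R : Type*} [CommRing R] (J : ℕ) (r : Fin J → R) (j : ℕ) :
    (∑ i : Fin J, C (r i) * X ^ (i : ℕ)).coeff j = if h : j < J then r ⟨j, h⟩ else 0 := by
  rw [finsetSum_coeff]
  simp only [coeff_C_mul, coeff_X_pow]
  split_ifs with h
  · rw [Finset.sum_eq_single ⟨j, h⟩]
    · simp
    · intro b _ hb
      rw [if_neg, mul_zero]
      intro h'; apply hb; ext; exact h'.symm
    · simp
  · apply Finset.sum_eq_zero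
    intro b _
    rw [if_neg, mul_zero]
    have := b.2; omega

/-- coefficientwise degree bound -/
lemma st_deg_mul {F : Type*} [Field F] (a b : ℕ) (P R : F[X][X])
    (hP : ∀ j, (P.coeff j).degree ≤ a) (hR : ∀ j, (R.coeff j).degree ≤ b) (j : ℕ) :
    ((P * R).coeff j).degree ≤ (a + b : ℕ) := by
  rw [coeff_mul]
  refine (degree_sum_le _ _).trans ?_
  apply Finset.sup_le
  intro x _
  refine (degree_mul_le _ _).trans ?_
  push_cast
  exact add_le_add (hP _) (hR _)

lemma st_nonvanish {F : Type*} [Field F] (p : ℕ) [Fact p.Prime] [CharP F p] (k A J b : ℕ)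
    (hQ : p ^ k = 2 * A + 1)
    (f : F[X]) (hf : f.Monic) (hd0 : 0 < f.natDegree) (hd : f.natDegree + 2 * b ≤ 2 * A)
    (hsq : Squarefree f) (r s : Fin J → F[X]) (hr : ∀ j, (r j).degree ≤ A)
    (hs : ∀ j, (s j).degree ≤ b)
    (h : ∑ j : Fin J, (r j + s j * f ^ (A + 1)) * X ^ ((p ^ k) * j) = 0) :
    r = 0 ∧ s = 0 := by
  set Q := p ^ k with hQdef
  set R : F[X][X] := ∑ i : Fin J, C (r i) * X ^ (i : ℕ) with hR
  set S : F[X][X] := ∑ i : Fin J, C (s i) * X ^ (i : ℕ) with hS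
  have evR : R.eval (X ^ Q) = ∑ j : Fin J, r j * X ^ (Q * j) := by
    simp [hR, eval_finsetSum, pow_mul]
  have evS : S.eval (X ^ Q) = ∑ j : Fin J, s j * X ^ (Q * j) := by
    simp [hS, eval_finsetSum, pow_mul]
  set g := f.map (iterateFrobenius F p k) with hg
  have evg : (g.map C).eval (X ^ Q) = f ^ Q := by
    rw [hQdef, ← map_iterateFrobenius_expand p f k, map_expand, ← hg, eval_map]
    rfl
  have h1 : R.eval (X ^ Q) = - (S.eval (X ^ Q) * f ^ (A + 1)) := by
    rw [evR, evS, eq_neg_iff_add_eq_zero, ← h, Finset.sum_mul, ← Finset.sum_add_distrib]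
    refine Finset.sum_congr rfl fun j _ => ?_
    ring
  have h2 : R ^ 2 - C f * g.map C * S ^ 2 = 0 := by
    apply st_inj Q
    · intro j
      have dR : ∀ j, (R.coeff j).degree ≤ A := by
        intro j
        rw [hR, st_coeff_sum]
        split_ifs
        · exact hr _
        · simp
      have dS : ∀ j, (S.coeff j).degree ≤ b := by
        intro j
        rw [hS, st_coeff_sum]
        split_ifs
        · exact hs _
        · simp
      have dg : ∀ j, ((g.map C).coeff j).degree ≤ (0 : ℕ) := by
        intro j
        rw [coeff_map]
        exact degree_C_le
      have df : ∀ j, ((C f : F[X][X]).coeff j).degree ≤ f.natDegree := by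
        intro j
        rw [coeff_C]
        split_ifs
        · exact degree_le_natDegree
        · simp
      rw [coeff_sub, pow_two, pow_two]
      refine lt_of_le_of_lt (degree_sub_le _ _) (max_lt ?_ ?_)
      · refine lt_of_le_of_lt (st_deg_mul _ _ _ _ dR dR j) ?_
        norm_cast; omega
      · refine lt_of_le_of_lt (st_deg_mul _ _ _ _ (st_deg_mul _ _ _ _ df dg)
          (st_deg_mul _ _ _ _ dS dS) j) ?_
        norm_cast; omega
    · simp only [eval_sub, eval_mul, eval_pow, eval_C, evg]
      have : f * f ^ Q = (f ^ (A + 1)) ^ 2 := by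
        rw [← pow_succ', ← pow_mul]; congr 1; omega
      rw [h1, this]; ring
  obtain ⟨hR0, hS0⟩ := st_nonsq f hsq hd0 g (hf.map _) R S (sub_eq_zero.mp h2)
  constructor
  · ext1 j
    have := st_coeff_sum J r j
    rw [← hR, hR0] at this
    simpa using this.symm
  · ext1 j
    have := st_coeff_sum J s j
    rw [← hS, hS0] at this
    simpa using this.symm

lemma st_lt {F : Type*} [Field F] (g : F[X]) (n : ℕ) (h : g.degree < (n + 1 : ℕ)) :
    g.degree ≤ n := by
  rw [degree_le_iff_coeff_zero]
  intro m hm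
  apply (degree_lt_iff_coeff_zero _ _).mp h
  have : n < m := by exact_mod_cast hm
  omega

lemma st_exists {F : Type*} [Field F] (Q A p J b : ℕ) (f : F[X])
    (hdeg : f.natDegree = 2 * p) (hQ : Q = 2 * A + 1) (hb : A = b + p) (hJ : J = A + p)
    (hA : p < A) (hp0 : 0 < p) :
    ∃ r s : Fin J → F[X], (∀ j, (r j).degree ≤ A) ∧ (∀ j, (s j).degree ≤ b) ∧
      ¬ (r = 0 ∧ s = 0) ∧
      ∑ j : Fin J, (expand F Q (r j) + expand F Q (s j) * f ^ (A + 1)) * X ^ (j : ℕ) = 0 := by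
  set M := Q * A + p + J with hM
  let Φ : ((Fin J → degreeLT F (A + 1)) × (Fin J → degreeLT F (b + 1))) →ₗ[F] F[X] :=
    { toFun := fun v => ∑ j : Fin J,
        (expand F Q (v.1 j : F[X]) + expand F Q (v.2 j : F[X]) * f ^ (A + 1)) * X ^ (j : ℕ)
      map_add' := by
        intro v w
        rw [← Finset.sum_add_distrib]
        refine Finset.sum_congr rfl fun j _ => ?_
        simp only [Prod.fst_add, Prod.snd_add, Pi.add_apply, Submodule.coe_add, map_add]
        ring
      map_smul' := by
        intro c v
        rw [RingHom.id_apply, Finset.smul_sum]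
        refine Finset.sum_congr rfl fun j _ => ?_
        simp only [Prod.smul_fst, Prod.smul_snd, Pi.smul_apply, Submodule.coe_smul, map_smul,
          smul_mul_assoc, ← smul_add] }
  have dexp : ∀ (n : ℕ) (g : degreeLT F (n + 1)), (expand F Q (g : F[X])).natDegree ≤ n * Q := by
    intro n g
    rw [natDegree_expand]
    apply Nat.mul_le_mul_right
    have := mem_degreeLT.mp g.2
    have h2 : (g : F[X]).natDegree < n + 1 := by
      rw [Nat.lt_succ_iff]
      apply natDegree_le_of_degree_le
      exact st_lt _ _ this
    omega
  have hΦ : ∀ v, Φ v ∈ degreeLT F M := by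
    intro v
    change ∑ j : Fin J, (expand F Q (v.1 j : F[X]) + expand F Q (v.2 j : F[X]) * f ^ (A + 1)) *
      X ^ (j : ℕ) ∈ _
    apply Submodule.sum_mem
    intro j _
    rw [mem_degreeLT]
    refine lt_of_le_of_lt degree_le_natDegree ?_
    norm_cast
    have h1 := dexp A (v.1 j)
    have h2 := dexp b (v.2 j)
    have h3 : (f ^ (A + 1)).natDegree ≤ (A + 1) * (2 * p) := by
      rw [← hdeg]; exact natDegree_pow_le
    have h4 := natDegree_mul_le (p := expand F Q (v.1 j : F[X]) + expand F Q (v.2 j : F[X]) * f ^ (A + 1)) (q := X ^ (j : ℕ))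
    have h5 := natDegree_add_le (expand F Q (v.1 j : F[X])) (expand F Q (v.2 j : F[X]) * f ^ (A + 1))
    have h6 := natDegree_mul_le (p := expand F Q (v.2 j : F[X])) (q := f ^ (A + 1))
    rw [natDegree_X_pow] at h4
    have h7 := j.2
    have h8 : b * Q + (A + 1) * (2 * p) = A * Q + p := by
      rw [hQ, hb]; ring
    have h9 : max (expand F Q (v.1 j : F[X])).natDegree (expand F Q (v.2 j : F[X]) * f ^ (A + 1)).natDegree ≤ A * Q + p := by
      apply max_le <;> omega
    rw [hM, mul_comm Q A]
    omega
  let Ψ := Φ.codRestrict (degreeLT F M) hΦ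
  have e1 : Module.Finite F (degreeLT F M) := Module.Finite.equiv (degreeLTEquiv F M).symm
  have e2 : Module.Finite F (degreeLT F (A + 1)) := Module.Finite.equiv (degreeLTEquiv F _).symm
  have e3 : Module.Finite F (degreeLT F (b + 1)) := Module.Finite.equiv (degreeLTEquiv F _).symm
  have hk : LinearMap.ker Ψ ≠ ⊥ := by
    apply LinearMap.ker_ne_bot_of_finrank_lt
    rw [Module.finrank_prod, Module.finrank_pi_fintype, Module.finrank_pi_fintype,
      (degreeLTEquiv F M).finrank_eq, (degreeLTEquiv F (A + 1)).finrank_eq,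
      (degreeLTEquiv F (b + 1)).finrank_eq]
    simp only [Module.finrank_fin_fun, Finset.sum_const, Finset.card_univ, Fintype.card_fin,
      smul_eq_mul]
    rw [hM, hJ, hQ]
    have : 0 ≤ b := Nat.zero_le _
    subst hb
    have hb' : 1 ≤ b := by omega
    nlinarith [Nat.mul_pos hb' hp0]
  obtain ⟨v, hv, hv0⟩ := (Submodule.ne_bot_iff _).mp hk
  refine ⟨fun j => v.1 j, fun j => v.2 j, fun j => ?_, fun j => ?_, ?_, ?_⟩
  · have := mem_degreeLT.mp (v.1 j).2
    exact st_lt _ _ this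
  · have := mem_degreeLT.mp (v.2 j).2
    exact st_lt _ _ this
  · rintro ⟨h1, h2⟩
    apply hv0
    ext j : 3
    · exact congrFun h1 j
    · exact congrFun h2 j
  · have := LinearMap.mem_ker.mp hv
    exact congrArg Subtype.val this

theorem stepanov {F : Type*} [Field F] [Fintype F] [DecidableEq F] (p : ℕ) [Fact p.Prime]
    [CharP F p] (hp : p ≠ 2) (k : ℕ) (hk : 2 ≤ k) (hq : Fintype.card F = (p ^ k) ^ 2)
    (f : F[X]) (hf : f.Monic) (hdeg : f.natDegree = 2 * p) (hsq : Squarefree f)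
    (T : Finset F) (hT : ∀ y ∈ T, IsSquare (f.eval y)) :
    2 * T.card ≤ (p ^ k) ^ 2 + 4 * p * p ^ k := by
  have hpp : p.Prime := Fact.out
  have hodd : Odd (p ^ k) := (hpp.odd_of_ne_two hp).pow
  obtain ⟨A, hA⟩ := hodd
  have hp3 : 3 ≤ p := by
    have := hpp.two_le; omega
  have hpA : p < A := by
    have : p ^ 2 ≤ p ^ k := Nat.pow_le_pow_right (by omega) hk
    nlinarith
  obtain ⟨b, hb⟩ : ∃ b, A = b + p := ⟨A - p, by omega⟩
  obtain ⟨r, s, hr, hs, hne, heq⟩ := st_exists (p ^ k) A p (A + p) b f hdeg hA hb rfl hpA (by omega)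
  set φ := iterateFrobenius F p k with hφ
  set Q := p ^ k with hQ
  have φφ : ∀ x, φ (φ x) = x := by
    intro x
    rw [hφ, iterateFrobenius_def, iterateFrobenius_def, ← pow_mul, ← pow_two, ← hQ, ← hq,
      FiniteField.pow_card]
  have mapmap : ∀ g : F[X], (g.map φ).map φ = g := by
    intro g
    ext i
    simp [φφ]
  have hφ0 : ∀ g : F[X], g.map φ = 0 → g = 0 := by
    intro g h
    rw [← mapmap g, h, Polynomial.map_zero]
  set G : F[X] := ∑ j : Fin (A + p), ((r j).map φ + (s j).map φ * f ^ (A + 1)) * X ^ (Q * j) with hG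
  have hG0 : G ≠ 0 := by
    intro h0
    have := st_nonvanish p k A (A + p) b hA f hf (by omega) (by omega) hsq
      (fun j => (r j).map φ) (fun j => (s j).map φ)
      (fun j => degree_map_le.trans (hr j)) (fun j => degree_map_le.trans (hs j)) h0
    apply hne
    refine ⟨?_, ?_⟩
    · ext1 j; exact hφ0 _ (congrFun this.1 j)
    · ext1 j; exact hφ0 _ (congrFun this.2 j)
  have evφ : ∀ (g : F[X]) (y : F), ((g.map φ).eval y) ^ Q = (expand F Q g).eval y := by
    intro g y
    rw [hQ, ← iterateFrobenius_def, ← hφ, eval_map, hom_eval₂, expand_eval, ← hQ]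
    have : φ y = y ^ Q := iterateFrobenius_def p k y
    rw [this, eval, eval₂_eq_sum, eval₂_eq_sum]
    simp [φφ]
  have hroot : ∀ y ∈ T, G.eval y = 0 := by
    intro y hy
    have h1 : (f.eval y ^ (A + 1)) ^ Q = f.eval y ^ (A + 1) := by
      obtain ⟨z, hz⟩ := hT y hy
      have e1 : f.eval y ^ (A + 1) = z * z ^ Q := by
        rw [hz, ← pow_two, ← pow_mul, ← pow_succ']; congr 1; omega
      rw [e1, mul_pow, ← pow_mul, ← pow_two, ← hq, FiniteField.pow_card, mul_comm]
    have h2 : (G.eval y) ^ Q = 0 := by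
      rw [hG, eval_finsetSum, hQ, ← iterateFrobenius_def, map_sum, ← hQ]
      have := congrArg (eval y) heq
      rw [eval_finsetSum, eval_zero] at this
      rw [← this]
      refine Finset.sum_congr rfl fun j _ => ?_
      rw [iterateFrobenius_def, ← hQ]
      simp only [eval_mul, eval_add, eval_pow, eval_X]
      rw [mul_pow, hQ, add_pow_expChar_pow, ← hQ, mul_pow, h1, evφ, evφ, ← pow_mul,
        mul_right_comm, ← pow_two, ← hq, pow_mul, FiniteField.pow_card]
    exact pow_eq_zero_iff (by positivity) |>.mp h2
  have hcard : T.card ≤ G.natDegree := by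
    apply card_le_degree_of_subset_roots
    intro y hy
    rw [mem_roots hG0]
    exact hroot y hy
  have hGdeg : G.natDegree ≤ (A + p) * Q + p * Q := by
    apply natDegree_sum_le_of_forall_le
    intro j _
    have h3 : (f ^ (A + 1)).natDegree ≤ (A + 1) * (2 * p) := by
      rw [← hdeg]; exact natDegree_pow_le
    have h4 := natDegree_mul_le (p := (r j).map φ + (s j).map φ * f ^ (A + 1)) (q := X ^ (Q * (j : ℕ)))
    have h5 := natDegree_add_le ((r j).map φ) ((s j).map φ * f ^ (A + 1))
    have h6 := natDegree_mul_le (p := (s j).map φ) (q := f ^ (A + 1))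
    rw [natDegree_X_pow] at h4
    have h1 : ((r j).map φ).natDegree ≤ A :=
      natDegree_map_le.trans (natDegree_le_of_degree_le (hr j))
    have h2 : ((s j).map φ).natDegree ≤ b :=
      natDegree_map_le.trans (natDegree_le_of_degree_le (hs j))
    have h7 := j.2
    have h8 : (A + 1) * (2 * p) = p * Q + p := by
      rw [hA]; ring
    have h9 : max ((r j).map φ).natDegree ((s j).map φ * f ^ (A + 1)).natDegree ≤ Q + p * Q := by
      apply max_le
      · nlinarith
      · omega
    have h10 : Q * (j + 1) ≤ Q * (A + p) := Nat.mul_le_mul_left _ h7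
    rw [mul_add, mul_one] at h10
    rw [mul_comm (A + p) Q]
    omega
  have : 2 * ((A + p) * Q + p * Q) + Q = Q ^ 2 + 4 * p * Q := by
    have : 2 * ((A + p) * Q + p * Q) + Q = (2 * A + 1) * Q + 4 * p * Q := by ring
    rw [this, ← hA]; ring
  omega
end Stepanov
section CharBound
open Polynomial

lemma cb_poly {F : Type*} [Field F] (p : ℕ) [Fact p.Prime] [CharP F p] (hp : p ≠ 2)
    (m n γ : F) (hm : m ≠ 0) (hn : n ≠ 0) :
    ((X ^ p - X + C γ) ^ 2 - C (4 * m * n) : F[X]).Monic ∧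
    ((X ^ p - X + C γ) ^ 2 - C (4 * m * n) : F[X]).natDegree = 2 * p ∧
    Squarefree ((X ^ p - X + C γ) ^ 2 - C (4 * m * n) : F[X]) := by
  have hpp : p.Prime := Fact.out
  have hp1 := hpp.two_le
  have h2 : (2 : F) ≠ 0 := by
    intro h
    have : ((2 : ℕ) : F) = 0 := by exact_mod_cast h
    rw [CharP.cast_eq_zero_iff F p] at this
    exact hp ((Nat.prime_dvd_prime_iff_eq hpp Nat.prime_two).mp this)
  set h : F[X] := X ^ p - X + C γ with hh
  have hform : h = X ^ p + (- X + C γ) := by rw [hh]; ring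
  have hd1 : (- X + C γ : F[X]).degree < (p : ℕ) := by
    refine lt_of_le_of_lt (degree_add_le _ _) (max_lt ?_ ?_)
    · rw [degree_neg, degree_X]; exact_mod_cast hp1
    · exact lt_of_le_of_lt degree_C_le (by exact_mod_cast hpp.pos)
  have hmon : h.Monic := by
    rw [hform]; exact monic_X_pow_add hd1
  have hdeg : h.natDegree = p := by
    rw [hform, natDegree_add_eq_left_of_degree_lt, natDegree_X_pow]
    rwa [degree_X_pow]
  have hmon2 : (h ^ 2).Monic := hmon.pow 2
  have hdeg2 : (h ^ 2).natDegree = 2 * p := by rw [natDegree_pow, hdeg]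
  have hlt : (C (4 * m * n) : F[X]).degree < (h ^ 2).degree := by
    refine lt_of_le_of_lt degree_C_le ?_
    rw [degree_eq_natDegree hmon2.ne_zero, hdeg2]
    exact_mod_cast (by omega : 0 < 2 * p)
  refine ⟨hmon2.sub_of_left hlt, ?_, ?_⟩
  · rw [natDegree_sub_eq_left_of_natDegree_lt, hdeg2]
    rw [natDegree_C, hdeg2]; omega
  · apply Separable.squarefree
    have hder : derivative h = -1 := by
      rw [hh]; simp [derivative_X_pow]
    refine ⟨C (-(4 * m * n)⁻¹), C (-(4 * m * n)⁻¹) * C (2⁻¹) * h, ?_⟩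
    have e1 : (C (-(4 * m * n)⁻¹) : F[X]) * C (4 * m * n) = -1 := by
      rw [← C_mul, neg_mul, inv_mul_cancel₀]
      · simp
      · have : (4 : F) = 2 * 2 := by norm_num
        rw [this]
        exact mul_ne_zero (mul_ne_zero (mul_ne_zero h2 h2) hm) hn
    have e2 : (C (2⁻¹) : F[X]) * 2 = 1 := by
      rw [show (2 : F[X]) = C 2 from (map_ofNat C 2).symm, ← C_mul, inv_mul_cancel₀ h2, C_1]
    rw [derivative_sub, derivative_C, derivative_pow, hder]
    simp only [Nat.cast_ofNat, Nat.add_one_sub_one, pow_one, map_ofNat]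
    linear_combination (-1 : F[X]) * e1 - C (-(4 * m * n)⁻¹) * h ^ 2 * e2

lemma cb_count {F : Type*} [Field F] [Fintype F] [DecidableEq F] (p : ℕ) [Fact p.Prime]
    [CharP F p] (hp : p ≠ 2) (k : ℕ) (hk : 2 ≤ k) (hq : Fintype.card F = (p ^ k) ^ 2)
    (m n γ : F) (hm : m ≠ 0) (hn : n ≠ 0) :
    ((Finset.univ : Finset (Fˣ × F)).filter
      (fun z => γ = m * z.1 + n * (z.1 : F)⁻¹ - (z.2 ^ p - z.2))).card ≤
      (p ^ k) ^ 2 + 4 * p * p ^ k := by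
  obtain ⟨h1, h2, h3⟩ := cb_poly p hp m n γ hm hn
  set f : F[X] := (X ^ p - X + C γ) ^ 2 - C (4 * m * n) with hf
  set T : Finset F := Finset.univ.filter (fun y => IsSquare (f.eval y)) with hT
  refine le_trans ?_ (stepanov p hp k hk hq f h1 h2 h3 T (by simp [hT]))
  apply Finset.card_le_mul_card_image_of_maps_to (f := fun z => z.2)
  · rintro ⟨x, y⟩ hz
    simp only [Finset.mem_filter, Finset.mem_univ, true_and] at hz
    simp only [hT, Finset.mem_filter, Finset.mem_univ, true_and]
    refine ⟨m * x - n * (x : F)⁻¹, ?_⟩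
    simp only [hf, eval_sub, eval_pow, eval_add, eval_X, eval_C]
    have hx : (x : F) ≠ 0 := x.ne_zero
    rw [hz]
    field_simp
    ring
  · intro y _
    by_contra hcon
    push Not at hcon
    obtain ⟨⟨a, y1⟩, ⟨b, y2⟩, ⟨c, y3⟩, ha, hb, hc, hab, hac, hbc⟩ := Finset.two_lt_card_iff.mp hcon
    simp only [Finset.mem_filter, Finset.mem_univ, true_and] at ha hb hc
    obtain ⟨ha, rfl⟩ := ha
    obtain ⟨hb, rfl⟩ := hb
    obtain ⟨hc, rfl⟩ := hc
    have key : ∀ u v : Fˣ, u ≠ v → m * u + n * (u : F)⁻¹ = m * v + n * (v : F)⁻¹ →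
        m * u * v = n := by
      intro u v huv h
      have hu := u.ne_zero
      have hv := v.ne_zero
      have hd : (u : F) - v ≠ 0 := by
        intro h; apply huv; ext; exact sub_eq_zero.mp h
      apply mul_right_cancel₀ hd
      field_simp at h
      linear_combination h
    have k1 := key a b (by rintro rfl; exact hab rfl) (by linear_combination hb - ha)
    have k2 := key a c (by rintro rfl; exact hac rfl) (by linear_combination hc - ha)
    apply hbc
    have : b = c := by
      ext
      apply mul_left_cancel₀ (mul_ne_zero hm a.ne_zero)
      rw [k1, k2]
    rw [this]

theorem cb_bound {F : Type*} [Field F] [Fintype F] [DecidableEq F] (p : ℕ) [Fact p.Prime]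
    [CharP F p] (hp : p ≠ 2) (k : ℕ) (hk : 2 ≤ k) (hq : Fintype.card F = (p ^ k) ^ 2)
    (m n : F) (hm : m ≠ 0) (hn : n ≠ 0) (ψ : AddChar F ℂ) (hψ : ψ ≠ 1)
    (hψp : ∀ y, ψ (y ^ p) = ψ y) :
    ‖∑ x : Fˣ, ψ (m * x + n * (x : F)⁻¹)‖ ≤ 4 * p * p ^ k + 1 := by
  set K := ∑ x : Fˣ, ψ (m * x + n * (x : F)⁻¹) with hK
  set q : ℝ := (p ^ k : ℝ) ^ 2 with hqr
  have hcard : (Fintype.card F : ℝ) = q := by rw [hq, hqr]; push_cast; rfl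
  have hq0 : 0 < q := by
    have : 0 < p := (Fact.out : p.Prime).pos
    positivity
  let N : F → ℕ := fun γ => ((Finset.univ : Finset (Fˣ × F)).filter
      (fun z => γ = m * z.1 + n * (z.1 : F)⁻¹ - (z.2 ^ p - z.2))).card
  set B : ℝ := q + 4 * p * p ^ k with hB
  have hN : ∀ γ, (N γ : ℝ) ≤ B := by
    intro γ
    have : N γ ≤ _ := cb_count p hp k hk hq m n γ hm hn
    rw [hB, hqr]
    exact_mod_cast this
  have hsumN : ∑ γ, (N γ : ℝ) = (q - 1) * q := by
    have : ∑ γ, N γ = (Finset.univ : Finset (Fˣ × F)).card := by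
      rw [Finset.card_eq_sum_card_fiberwise (t := Finset.univ)
        (f := fun z : Fˣ × F => m * z.1 + n * (z.1 : F)⁻¹ - (z.2 ^ p - z.2)) (by simp)]
      refine Finset.sum_congr rfl fun γ _ => ?_
      change Finset.card _ = _
      refine congrArg Finset.card ?_
      ext z
      simp [eq_comm]
    rw [← Nat.cast_sum, this, Finset.card_univ, Fintype.card_prod, Fintype.card_units,
      Nat.cast_mul, Nat.cast_sub Fintype.card_pos, hcard]
    simp
  have hsumψ : ∑ γ, (N γ : ℂ) * ψ γ = q * K := by
    have h1 : ∀ γ, (N γ : ℂ) * ψ γ = ∑ z : Fˣ × F,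
        if γ = m * z.1 + n * (z.1 : F)⁻¹ - (z.2 ^ p - z.2) then ψ γ else 0 := by
      intro γ
      rw [← Finset.sum_filter, Finset.sum_const, nsmul_eq_mul]
    simp_rw [h1]
    rw [Finset.sum_comm]
    simp only [Finset.sum_ite_eq', Finset.mem_univ, if_true]
    rw [Fintype.sum_prod_type, hK, Finset.mul_sum]
    refine Finset.sum_congr rfl fun x _ => ?_
    have h2 : ∀ y : F, ψ (m * x + n * (x : F)⁻¹ - (y ^ p - y)) = ψ (m * x + n * (x : F)⁻¹) := by
      intro y
      rw [AddChar.map_sub_eq_div, AddChar.map_sub_eq_div, hψp, div_self, div_one]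
      exact ψ.val_isUnit y |>.ne_zero
    simp only [h2, Finset.sum_const, Finset.card_univ, nsmul_eq_mul]
    rw [← hcard]; simp
  have hψ0 : ∑ γ, ψ γ = 0 := AddChar.sum_eq_zero_of_ne_one hψ
  have h3 : (q : ℂ) * K = ∑ γ, ((N γ : ℂ) - B) * ψ γ := by
    simp only [sub_mul]
    rw [Finset.sum_sub_distrib, ← Finset.mul_sum, hψ0, mul_zero, sub_zero, hsumψ]
  have h4 : q * ‖K‖ ≤ q * (4 * p * p ^ k + 1) := by
    calc q * ‖K‖ = ‖(q : ℂ) * K‖ := by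
          rw [norm_mul, Complex.norm_real, Real.norm_of_nonneg hq0.le]
      _ ≤ ∑ γ, (B - N γ) := by
          rw [h3]
          refine (norm_sum_le _ _).trans (Finset.sum_le_sum fun γ _ => ?_)
          rw [norm_mul, AddChar.norm_apply, mul_one, ← Complex.ofReal_natCast, ← Complex.ofReal_sub,
            Complex.norm_real, Real.norm_eq_abs, abs_sub_comm, abs_of_nonneg]
          linarith [hN γ]
      _ = q * (4 * p * p ^ k + 1) := by
          rw [Finset.sum_sub_distrib, hsumN, Finset.sum_const, Finset.card_univ, nsmul_eq_mul,
            hcard, hB]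
          ring
  exact le_of_mul_le_mul_left h4 hq0
end CharBound
section LFun
open Polynomial

/-- monic polynomials of degree `d` over `ZMod p` -/
noncomputable def kloMon (p : ℕ) [Fact p.Prime] (d : ℕ) : Finset (ZMod p)[X] :=
  (Finset.univ : Finset (Fin d → ZMod p)).image
    (fun a => X ^ d + ∑ i : Fin d, C (a i) * X ^ (i : ℕ))

lemma mem_kloMon {p d : ℕ} [Fact p.Prime] {f : (ZMod p)[X]} :
    f ∈ kloMon p d ↔ f.Monic ∧ f.natDegree = d := by
  constructor
  · intro h
    obtain ⟨a, -, rfl⟩ := Finset.mem_image.mp h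
    have hd : (∑ i : Fin d, C (a i) * X ^ (i : ℕ)).degree < (d : WithBot ℕ) := by
      refine lt_of_le_of_lt (degree_sum_le _ _) ?_
      rw [Finset.sup_lt_iff (by exact_mod_cast WithBot.bot_lt_coe d)]
      intro i _
      refine lt_of_le_of_lt (degree_C_mul_X_pow_le _ _) ?_
      exact_mod_cast i.2
    refine ⟨monic_X_pow_add hd, ?_⟩
    rw [natDegree_add_eq_left_of_degree_lt, natDegree_X_pow]
    rwa [degree_X_pow]
  · rintro ⟨h1, h2⟩
    refine Finset.mem_image.mpr ⟨fun i => f.coeff i, Finset.mem_univ _, ?_⟩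
    conv_rhs => rw [h1.as_sum, h2]
    rw [Finset.sum_range]

/-- monic irreducible polynomials of degree at most `d` over `ZMod p` -/
noncomputable def kloIrr (p : ℕ) [Fact p.Prime] (d : ℕ) : Finset (ZMod p)[X] :=
  open Classical in
  ((Finset.range (d + 1)).biUnion (kloMon p)).filter (fun P => Irreducible P)

lemma mem_kloIrr {p d : ℕ} [Fact p.Prime] {f : (ZMod p)[X]} :
    f ∈ kloIrr p d ↔ f.Monic ∧ Irreducible f ∧ f.natDegree ≤ d := by
  classical
  simp only [kloIrr, Finset.mem_filter, Finset.mem_biUnion, Finset.mem_range, mem_kloMon]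
  constructor
  · rintro ⟨⟨e, he, h1, h2⟩, h3⟩
    exact ⟨h1, h3, by omega⟩
  · rintro ⟨h1, h2, h3⟩
    exact ⟨⟨_, by omega, h1, rfl⟩, h2⟩

/-- the completely multiplicative function attached to a Kloosterman sum -/
noncomputable def kloLam {p : ℕ} [Fact p.Prime] (ψ : AddChar (ZMod p) ℂ) (m n : ZMod p)
    (f : (ZMod p)[X]) : ℂ :=
  if f.coeff 0 = 0 then 0 else ψ (-(m * f.nextCoeff) - n * (f.coeff 1 / f.coeff 0))

lemma kloLam_one {p : ℕ} [Fact p.Prime] (ψ : AddChar (ZMod p) ℂ) (m n : ZMod p) :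
    kloLam ψ m n 1 = 1 := by
  simp [kloLam, coeff_one, nextCoeff]

lemma kloLam_mul {p : ℕ} [Fact p.Prime] (ψ : AddChar (ZMod p) ℂ) (m n : ZMod p)
    (f g : (ZMod p)[X]) (hf : f.Monic) (hg : g.Monic) :
    kloLam ψ m n (f * g) = kloLam ψ m n f * kloLam ψ m n g := by
  unfold kloLam
  rw [mul_coeff_zero, mul_coeff_one, hf.nextCoeff_mul hg]
  by_cases h1 : f.coeff 0 = 0
  · simp [h1]
  by_cases h2 : g.coeff 0 = 0
  · simp [h2]
  rw [if_neg (mul_ne_zero h1 h2), if_neg h1, if_neg h2, ← AddChar.map_add_eq_mul]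
  congr 1
  field_simp
  ring

lemma kloLam_pow {p : ℕ} [Fact p.Prime] (ψ : AddChar (ZMod p) ℂ) (m n : ZMod p)
    (f : (ZMod p)[X]) (hf : f.Monic) (k : ℕ) :
    kloLam ψ m n (f ^ k) = kloLam ψ m n f ^ k := by
  induction k with
  | zero => simp [kloLam_one]
  | succ k ih => rw [pow_succ, kloLam_mul _ _ _ _ _ (hf.pow k) hf, ih, pow_succ]

lemma klo_deg {p d : ℕ} [Fact p.Prime] (f : (ZMod p)[X]) (hf : f.Monic) (hd : f.natDegree = d) :
    d = ∑ j ∈ Finset.Icc 1 d, ∑ P ∈ (kloIrr p d).filter (fun P => P.natDegree ∣ j),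
      open Classical in if P ^ (j / P.natDegree) ∣ f then P.natDegree else 0 := by
  classical
  have hf0 := hf.ne_zero
  set s := UniqueFactorizationMonoid.normalizedFactors f with hs
  have hmem : ∀ P, P ∈ s ↔ Irreducible P ∧ P.Monic ∧ P ∣ f :=
    fun P => Polynomial.mem_normalizedFactors_iff hf0
  have hprod : s.prod = f := by
    rw [hs, UniqueFactorizationMonoid.prod_normalizedFactors_eq hf0, hf.normalize_eq_self]
  have hsum : d = ∑ P ∈ kloIrr p d, s.count P * P.natDegree := by
    rw [← hd]
    conv_lhs => rw [← hprod]
    rw [natDegree_multiset_prod_of_monic _ (fun P hP => ((hmem P).mp hP).2.1),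
      Finset.sum_multiset_map_count]
    simp only [smul_eq_mul]
    apply Finset.sum_subset
    · intro P hP
      rw [Multiset.mem_toFinset, hmem] at hP
      rw [mem_kloIrr]
      exact ⟨hP.2.1, hP.1, natDegree_le_of_dvd hP.2.2 hf0⟩
    · intro P _ hP
      rw [Multiset.mem_toFinset] at hP
      rw [Multiset.count_eq_zero_of_notMem hP, zero_mul]
  simp only [Finset.sum_filter]
  rw [Finset.sum_comm]
  conv_lhs => rw [hsum]
  refine Finset.sum_congr rfl fun P hP => ?_
  obtain ⟨hP1, hP2, hP3⟩ := mem_kloIrr.mp hP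
  have hPd : 0 < P.natDegree := hP2.natDegree_pos
  have hdvd : ∀ k, P ^ k ∣ f ↔ k ≤ s.count P := by
    intro k
    rw [pow_dvd_iff_le_emultiplicity,
      UniqueFactorizationMonoid.emultiplicity_eq_count_normalizedFactors hP2 hf0,
      hP1.normalize_eq_self]
    norm_cast
  have hle : s.count P * P.natDegree ≤ d := by
    have := natDegree_le_of_dvd ((hdvd _).mpr le_rfl) hf0
    rwa [natDegree_pow, hd] at this
  have : ∀ j, (if P.natDegree ∣ j then (if P ^ (j / P.natDegree) ∣ f then P.natDegree else 0) else 0)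
      = if (P.natDegree ∣ j ∧ P ^ (j / P.natDegree) ∣ f) then P.natDegree else 0 := by
    intro j
    rw [ite_and]
  simp only [this]
  rw [← Finset.sum_filter, Finset.sum_const, smul_eq_mul]
  congr 1
  have himg : (Finset.Icc 1 d).filter (fun j => P.natDegree ∣ j ∧ P ^ (j / P.natDegree) ∣ f)
      = (Finset.Icc 1 (s.count P)).image (fun k => k * P.natDegree) := by
    ext j
    simp only [Finset.mem_filter, Finset.mem_Icc, Finset.mem_image, hdvd]
    constructor
    · rintro ⟨⟨h1, h2⟩, ⟨k, rfl⟩, h3⟩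
      rw [Nat.mul_div_cancel_left _ hPd] at h3
      refine ⟨k, ⟨?_, h3⟩, mul_comm _ _⟩
      rcases Nat.eq_zero_or_pos k with rfl | h
      · simp at h1
      · exact h
    · rintro ⟨k, ⟨h1, h2⟩, rfl⟩
      rw [Nat.mul_div_cancel _ hPd]
      refine ⟨⟨Nat.mul_pos h1 hPd, ?_⟩, Dvd.intro_left k rfl, h2⟩
      exact (Nat.mul_le_mul_right _ h2).trans hle
  rw [himg, Finset.card_image_of_injective, Nat.card_Icc, Nat.add_sub_cancel]
  intro a b h
  exact Nat.eq_of_mul_eq_mul_right hPd h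

noncomputable def kloC {p : ℕ} [Fact p.Prime] (ψ : AddChar (ZMod p) ℂ) (m n : ZMod p) (d : ℕ) : ℂ :=
  ∑ f ∈ kloMon p d, kloLam ψ m n f

noncomputable def kloK {p : ℕ} [Fact p.Prime] (ψ : AddChar (ZMod p) ℂ) (m n : ZMod p) (j : ℕ) : ℂ :=
  ∑ P ∈ (kloIrr p j).filter (fun P => P.natDegree ∣ j),
    (P.natDegree : ℂ) * kloLam ψ m n P ^ (j / P.natDegree)

lemma klo_rec {p : ℕ} [Fact p.Prime] (ψ : AddChar (ZMod p) ℂ) (m n : ZMod p) (d : ℕ) :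
    (d : ℂ) * kloC ψ m n d = ∑ j ∈ Finset.Icc 1 d, kloK ψ m n j * kloC ψ m n (d - j) := by
  classical
  have h1 : (d : ℂ) * kloC ψ m n d = ∑ f ∈ kloMon p d, ∑ j ∈ Finset.Icc 1 d,
      ∑ P ∈ (kloIrr p d).filter (fun P => P.natDegree ∣ j),
      if P ^ (j / P.natDegree) ∣ f then (P.natDegree : ℂ) * kloLam ψ m n f else 0 := by
    rw [kloC, Finset.mul_sum]
    refine Finset.sum_congr rfl fun f hf => ?_
    obtain ⟨hf1, hf2⟩ := mem_kloMon.mp hf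
    have := congrArg (Nat.cast : ℕ → ℂ) (klo_deg f hf1 hf2)
    rw [this]
    push_cast
    rw [Finset.sum_mul]
    refine Finset.sum_congr rfl fun j _ => ?_
    rw [Finset.sum_mul]
    refine Finset.sum_congr rfl fun P _ => ?_
    split_ifs <;> simp
  rw [h1, Finset.sum_comm]
  refine Finset.sum_congr rfl fun j hj => ?_
  rw [Finset.mem_Icc] at hj
  rw [Finset.sum_comm, kloK, Finset.sum_mul]
  have hset : (kloIrr p d).filter (fun P => P.natDegree ∣ j) =
      (kloIrr p j).filter (fun P => P.natDegree ∣ j) := by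
    ext P
    simp only [Finset.mem_filter, mem_kloIrr]
    constructor
    · rintro ⟨⟨a, b, c⟩, h⟩
      exact ⟨⟨a, b, Nat.le_of_dvd hj.1 h⟩, h⟩
    · rintro ⟨⟨a, b, c⟩, h⟩
      exact ⟨⟨a, b, c.trans hj.2⟩, h⟩
  rw [hset]
  refine Finset.sum_congr rfl fun P hP => ?_
  rw [Finset.mem_filter, mem_kloIrr] at hP
  obtain ⟨⟨hP1, hP2, -⟩, hPj⟩ := hP
  set k := j / P.natDegree with hk
  have hdk : (P ^ k).natDegree = j := by
    rw [natDegree_pow, hk, Nat.div_mul_cancel hPj]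
  have hmon : (P ^ k).Monic := hP1.pow k
  rw [← Finset.sum_filter, ← Finset.mul_sum, mul_assoc, kloC]
  congr 1
  rw [Finset.mul_sum]
  symm
  refine Finset.sum_bij (fun g _ => P ^ k * g) ?_ ?_ ?_ ?_
  · intro g hg
    obtain ⟨g1, g2⟩ := mem_kloMon.mp hg
    rw [Finset.mem_filter, mem_kloMon]
    refine ⟨⟨hmon.mul g1, ?_⟩, dvd_mul_right _ _⟩
    rw [hmon.natDegree_mul g1, hdk, g2]; omega
  · intro a _ b _ h
    exact mul_left_cancel₀ hmon.ne_zero h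
  · intro f hf
    rw [Finset.mem_filter, mem_kloMon] at hf
    obtain ⟨⟨f1, f2⟩, g, rfl⟩ := hf
    have hg : g.Monic := hmon.of_mul_monic_left f1
    refine ⟨g, ?_, rfl⟩
    rw [mem_kloMon]
    refine ⟨hg, ?_⟩
    rw [hmon.natDegree_mul hg, hdk] at f2
    omega
  · intro g hg
    obtain ⟨g1, g2⟩ := mem_kloMon.mp hg
    rw [kloLam_mul _ _ _ _ _ hmon g1, kloLam_pow _ _ _ _ hP1]

lemma kloC_zero {p : ℕ} [Fact p.Prime] (ψ : AddChar (ZMod p) ℂ) (m n : ZMod p) :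
    kloC ψ m n 0 = 1 := by
  have : kloMon p 0 = {1} := by
    ext f
    rw [mem_kloMon, Finset.mem_singleton]
    constructor
    · rintro ⟨h1, h2⟩
      exact h1.natDegree_eq_zero.mp h2
    · rintro rfl
      exact ⟨monic_one, natDegree_one⟩
  rw [kloC, this, Finset.sum_singleton, kloLam_one]

lemma kloC_two {p : ℕ} [Fact p.Prime] (ψ : AddChar (ZMod p) ℂ) (hψ : ψ.IsPrimitive) (m n : ZMod p)
    (hm : m ≠ 0) (hn : n ≠ 0) : kloC ψ m n 2 = p := by
  have hset : kloMon p 2 = (Finset.univ : Finset (ZMod p × ZMod p)).image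
      (fun z => X ^ 2 + C z.1 * X + C z.2) := by
    ext f
    simp only [kloMon, Finset.mem_image, Finset.mem_univ, true_and, Fin.sum_univ_two]
    constructor
    · rintro ⟨a, rfl⟩
      exact ⟨(a 1, a 0), by simp; ring⟩
    · rintro ⟨z, rfl⟩
      exact ⟨![z.2, z.1], by simp; ring⟩
  have hc0 : ∀ a b : ZMod p, (X ^ 2 + C a * X + C b).coeff 0 = b := by
    intro a b; simp
  have hc1 : ∀ a b : ZMod p, (X ^ 2 + C a * X + C b).coeff 1 = a := by
    intro a b; simp [coeff_X_pow, coeff_C]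
  have hnd : ∀ a b : ZMod p, (X ^ 2 + C a * X + C b).natDegree = 2 := by
    intro a b; compute_degree!
  rw [kloC, hset, Finset.sum_image]
  · rw [Fintype.sum_prod_type, Finset.sum_comm]
    have h1 : ∀ b : ZMod p, ∑ a : ZMod p, kloLam ψ m n (X ^ 2 + C a * X + C b) =
        if b = - n / m then (p : ℂ) else 0 := by
      intro b
      by_cases hb : b = 0
      · rw [if_neg]
        · apply Finset.sum_eq_zero
          intro a _
          rw [kloLam, hc0, if_pos hb]
        · rw [hb]; intro h
          rw [eq_comm, div_eq_zero_iff] at h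
          simp_all
      · have h2 : ∀ a : ZMod p, kloLam ψ m n (X ^ 2 + C a * X + C b) =
            ψ (a * (-m - n / b)) := by
          intro a
          rw [kloLam, hc0, if_neg hb, nextCoeff_of_natDegree_pos (by rw [hnd]; norm_num), hnd,
            hc1]
          congr 1
          field_simp
        simp only [h2]
        rw [AddChar.sum_mulShift _ hψ]
        have : (-m - n / b = 0) ↔ b = - n / m := by
          rw [eq_div_iff hm]
          field_simp
          constructor
          · intro h; linear_combination -h
          · intro h; linear_combination -h
        simp only [this, ZMod.card]
        split_ifs <;> simp
    simp only [h1]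
    simp
  · rintro ⟨a, b⟩ _ ⟨a', b'⟩ _ h
    have e0 := congrArg (fun f => coeff f 0) h
    have e1 := congrArg (fun f => coeff f 1) h
    simp only [hc0, hc1] at e0 e1
    rw [e0, e1]

lemma kloC_big {p : ℕ} [Fact p.Prime] (ψ : AddChar (ZMod p) ℂ) (hψ : ψ.IsPrimitive) (m n : ZMod p)
    (hm : m ≠ 0) (d : ℕ) (hd : 3 ≤ d) : kloC ψ m n d = 0 := by
  have hne : ψ ≠ 1 := by
    have := hψ (one_ne_zero)
    rwa [AddChar.mulShift_one] at this
  obtain ⟨u, hu⟩ := AddChar.ne_one_iff.mp hne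
  set t := - u / m with ht
  have hmt : -(m * t) = u := by rw [ht]; field_simp
  have hdeg : ∀ f : (ZMod p)[X], f ∈ kloMon p d → ∀ t : ZMod p, f + C t * X ^ (d - 1) ∈ kloMon p d := by
    intro f hf t
    obtain ⟨f1, f2⟩ := mem_kloMon.mp hf
    have hlt : (C t * X ^ (d - 1) : (ZMod p)[X]).degree < f.degree := by
      rw [degree_eq_natDegree f1.ne_zero, f2]
      refine lt_of_le_of_lt (degree_C_mul_X_pow_le _ _) ?_
      exact_mod_cast (by omega)
    rw [mem_kloMon]
    refine ⟨f1.add_of_left hlt, ?_⟩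
    rw [natDegree_add_eq_left_of_degree_lt hlt, f2]
  have key : kloC ψ m n d = ψ u * kloC ψ m n d := by
    conv_rhs => rw [kloC, Finset.mul_sum]
    rw [kloC]
    symm
    refine Finset.sum_bij' (fun f _ => f + C t * X ^ (d - 1)) (fun f _ => f + C (-t) * X ^ (d - 1))
      (fun f hf => hdeg f hf _) (fun f hf => hdeg f hf _) ?_ ?_ ?_
    · intro f _; simp
    · intro f _; simp
    · intro f hf
      have hf' := hdeg f hf t
      obtain ⟨f1, f2⟩ := mem_kloMon.mp hf
      obtain ⟨f3, f4⟩ := mem_kloMon.mp hf'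
      have e0 : (f + C t * X ^ (d - 1)).coeff 0 = f.coeff 0 := by
        rw [coeff_add, coeff_C_mul_X_pow, if_neg (by omega), add_zero]
      have e1 : (f + C t * X ^ (d - 1)).coeff 1 = f.coeff 1 := by
        rw [coeff_add, coeff_C_mul_X_pow, if_neg (by omega), add_zero]
      have e2 : (f + C t * X ^ (d - 1)).nextCoeff = f.nextCoeff + t := by
        rw [nextCoeff_of_natDegree_pos (by omega), nextCoeff_of_natDegree_pos (by omega), f4, f2,
          coeff_add, coeff_C_mul_X_pow, if_pos rfl]
      unfold kloLam
      rw [e0, e1, e2]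
      split_ifs
      · simp
      · rw [← AddChar.map_add_eq_mul, ← hmt]
        congr 1
        ring
  have : (1 - ψ u) * kloC ψ m n d = 0 := by linear_combination key
  rcases mul_eq_zero.mp this with h | h
  · exact absurd (by linear_combination -h) hu
  · exact h
end LFun
section WeilPrime
open Polynomial IntermediateField

lemma klo_minpoly_inv {k F : Type*} [Field k] [Field F] [Algebra k F] [FiniteDimensional k F]
    (x : F) (hx : x ≠ 0) :
    (minpoly k x⁻¹).nextCoeff = (minpoly k x).coeff 1 / (minpoly k x).coeff 0 ∧
    k⟮x⁻¹⟯ = k⟮x⟯ := by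
  have hitg : IsIntegral k x := IsIntegral.of_finite k x
  have hitg' : IsIntegral k x⁻¹ := IsIntegral.of_finite k x⁻¹
  have hadj : k⟮x⁻¹⟯ = k⟮x⟯ := by
    apply le_antisymm
    · rw [adjoin_simple_le_iff]
      exact inv_mem (mem_adjoin_simple_self k x)
    · rw [adjoin_simple_le_iff]
      have := inv_mem (mem_adjoin_simple_self k x⁻¹)
      rwa [inv_inv] at this
  refine ⟨?_, hadj⟩
  set P := minpoly k x with hP
  have h0 : P.coeff 0 ≠ 0 := minpoly.coeff_zero_ne_zero hitg hx
  have hdpos : 0 < P.natDegree := minpoly.natDegree_pos hitg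
  have hd : (minpoly k x⁻¹).natDegree = P.natDegree := by
    rw [← adjoin.finrank hitg', hadj, adjoin.finrank hitg]
  set R := C (P.coeff 0)⁻¹ * P.reverse with hR
  have hRd : R.natDegree = P.natDegree := by
    rw [hR, natDegree_C_mul (inv_ne_zero h0), reverse_natDegree,
      natTrailingDegree_eq_zero.mpr (Or.inr h0), Nat.sub_zero]
  have hRm : R.Monic := by
    rw [Monic, hR, leadingCoeff_mul, leadingCoeff_C, reverse_leadingCoeff,
      trailingCoeff_eq_coeff_zero h0, inv_mul_cancel₀ h0]
  have hRz : aeval x⁻¹ R = 0 := by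
    rw [hR, map_mul]
    have hz : aeval x⁻¹ P.reverse = 0 := by
      letI : Invertible x := invertibleOfNonzero hx
      have := (eval₂_reverse_eq_zero_iff (algebraMap k F) x P).mpr (minpoly.aeval k x)
      rwa [invOf_eq_inv] at this
    rw [hz, mul_zero]
  have hdvd : minpoly k x⁻¹ ∣ R := minpoly.dvd k _ hRz
  have heq : R = minpoly k x⁻¹ :=
    eq_of_monic_of_dvd_of_natDegree_le (minpoly.monic hitg') hRm hdvd (by omega)
  rw [← heq, nextCoeff_of_natDegree_pos (by omega), hRd, hR, coeff_C_mul, coeff_reverse,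
    revAt_le (by omega), show P.natDegree - (P.natDegree - 1) = 1 by omega]
  field_simp

lemma kloLam_minpoly {p : ℕ} [Fact p.Prime] {F : Type*} [Field F] [Algebra (ZMod p) F]
    [FiniteDimensional (ZMod p) F] (ψ : AddChar (ZMod p) ℂ) (m n : ZMod p) (x : F) (hx : x ≠ 0) :
    kloLam ψ m n (minpoly (ZMod p) x) ^ (Module.finrank (ZMod p) F / (minpoly (ZMod p) x).natDegree)
     = ψ (Algebra.trace (ZMod p) F (algebraMap (ZMod p) F m * x + algebraMap (ZMod p) F n * x⁻¹)) := by
  have hitg : IsIntegral (ZMod p) x := IsIntegral.of_finite _ x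
  obtain ⟨h1, h2⟩ := klo_minpoly_inv (k := ZMod p) x hx
  have h0 : (minpoly (ZMod p) x).coeff 0 ≠ 0 := minpoly.coeff_zero_ne_zero hitg hx
  have hdpos : 0 < (minpoly (ZMod p) x).natDegree := minpoly.natDegree_pos hitg
  have hfr : Module.finrank (ZMod p) F / (minpoly (ZMod p) x).natDegree =
      Module.finrank (ZMod p)⟮x⟯ F := by
    rw [← Module.finrank_mul_finrank (ZMod p) (ZMod p)⟮x⟯ F, adjoin.finrank hitg,
      Nat.mul_div_cancel_left _ hdpos]
  have hfr2 : Module.finrank (ZMod p)⟮x⁻¹⟯ F = Module.finrank (ZMod p)⟮x⟯ F := by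
    rw [h2]
  rw [hfr, kloLam, if_neg h0, ← AddChar.map_nsmul_eq_pow]
  congr 1
  rw [← Algebra.smul_def, ← Algebra.smul_def, map_add, map_smul, map_smul,
    trace_eq_finrank_mul_minpoly_nextCoeff, trace_eq_finrank_mul_minpoly_nextCoeff, h1, hfr2]
  simp only [smul_eq_mul, nsmul_eq_mul]
  ring

lemma klo_field {p : ℕ} [Fact p.Prime] {F : Type*} [Field F] [Fintype F] [DecidableEq F] [Algebra (ZMod p) F]
    (ψ : AddChar (ZMod p) ℂ) (m n : ZMod p) :
    kloK ψ m n (Module.finrank (ZMod p) F) = ∑ x : Fˣ,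
      ψ (Algebra.trace (ZMod p) F
        (algebraMap (ZMod p) F m * x + algebraMap (ZMod p) F n * (x : F)⁻¹)) := by
  set j := Module.finrank (ZMod p) F with hj
  have hj0 : 0 < j := Module.finrank_pos
  have hcard : Fintype.card F = p ^ j := by
    rw [Module.card_eq_pow_finrank (K := ZMod p) (V := F), ZMod.card]
  have hstep : ∑ x : Fˣ,
      ψ (Algebra.trace (ZMod p) F
        (algebraMap (ZMod p) F m * x + algebraMap (ZMod p) F n * (x : F)⁻¹)) =
      ∑ x : F, kloLam ψ m n (minpoly (ZMod p) x) ^ (j / (minpoly (ZMod p) x).natDegree) := by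
    have hz : kloLam ψ m n (minpoly (ZMod p) (0 : F)) ^
        (j / (minpoly (ZMod p) (0 : F)).natDegree) = 0 := by
      rw [minpoly.zero, natDegree_X, Nat.div_one, kloLam, if_pos (by simp), zero_pow hj0.ne']
    rw [← Finset.sum_erase (s := Finset.univ) (a := (0:F)) (f := fun x : F =>
      kloLam ψ m n (minpoly (ZMod p) x) ^ (j / (minpoly (ZMod p) x).natDegree)) hz]
    refine Finset.sum_bij (fun x _ => (x : F)) ?_ ?_ ?_ ?_
    · intro x _
      simp
    · intro a _ b _ h
      exact Units.ext h
    · intro b hb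
      exact ⟨Units.mk0 b (Finset.ne_of_mem_erase hb), Finset.mem_univ _, rfl⟩
    · intro x _
      exact (kloLam_minpoly ψ m n (x : F) x.ne_zero).symm
  rw [hstep, kloK]
  have hmaps : ∀ x ∈ (Finset.univ : Finset F),
      minpoly (ZMod p) x ∈ (kloIrr p j).filter (fun P => P.natDegree ∣ j) := by
    intro x _
    have hitg : IsIntegral (ZMod p) x := IsIntegral.of_finite _ x
    have hdv : (minpoly (ZMod p) x).natDegree ∣ j := by
      rw [← adjoin.finrank hitg]
      exact ⟨_, (Module.finrank_mul_finrank (ZMod p) (ZMod p)⟮x⟯ F).symm⟩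
    rw [Finset.mem_filter, mem_kloIrr]
    exact ⟨⟨minpoly.monic hitg, minpoly.irreducible hitg, Nat.le_of_dvd hj0 hdv⟩, hdv⟩
  rw [← Finset.sum_fiberwise_of_maps_to hmaps]
  refine Finset.sum_congr rfl fun P hP => ?_
  rw [Finset.mem_filter, mem_kloIrr] at hP
  obtain ⟨⟨hP1, hP2, -⟩, hPj⟩ := hP
  have hfib : ((Finset.univ : Finset F).filter (fun x => minpoly (ZMod p) x = P)).card
      = P.natDegree := by
    have hdvd : P ∣ X ^ Fintype.card F - X := by
      have := hP2.natDegree_dvd_iff_dvd_X_pow_card_pow_sub_X.mp hPj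
      rwa [Nat.card_zmod, ← hcard] at this
    have hsp : (P.map (algebraMap (ZMod p) F)).Splits := by
      refine Splits.of_dvd (FiniteField.splits_X_pow_card_sub_X p (K := F)) ?_
        (Polynomial.map_dvd _ hdvd)
      rw [Polynomial.map_ne_zero_iff (algebraMap (ZMod p) F).injective]
      exact FiniteField.X_pow_card_sub_X_ne_zero _ Fintype.one_lt_card
    have := card_rootSet_eq_natDegree (PerfectField.separable_of_irreducible hP2) hsp
    rw [← this, ← Set.toFinset_card]
    congr 1
    ext x
    simp only [Finset.mem_filter, Finset.mem_univ, true_and, Set.mem_toFinset,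
      mem_rootSet_of_ne hP2.ne_zero]
    constructor
    · rintro rfl
      exact minpoly.aeval _ _
    · intro h
      exact (minpoly.eq_of_irreducible_of_monic hP2 h hP1).symm
  rw [Finset.sum_congr rfl (g := fun _ => kloLam ψ m n P ^ (j / P.natDegree))]
  · rw [Finset.sum_const, hfib, nsmul_eq_mul]
  · intro x hx
    rw [(Finset.mem_filter.mp hx).2]

lemma kloK_bound {p : ℕ} [Fact p.Prime] (hp : p ≠ 2) (ψ : AddChar (ZMod p) ℂ) (hψ : ψ ≠ 1)
    (m n : ZMod p) (hm : m ≠ 0) (hn : n ≠ 0) (k : ℕ) (hk : 2 ≤ k) :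
    ‖kloK ψ m n (2 * k)‖ ≤ 4 * p * p ^ k + 1 := by
  classical
  let F := GaloisField p (2 * k)
  letI : Fintype F := Fintype.ofFinite F
  have hfr : Module.finrank (ZMod p) F = 2 * k := GaloisField.finrank p (by omega)
  have hcard : Fintype.card F = (p ^ k) ^ 2 := by
    rw [Module.card_eq_pow_finrank (K := ZMod p) (V := F), ZMod.card, hfr, ← pow_mul, mul_comm]
  have h := klo_field (F := F) ψ m n
  rw [hfr] at h
  rw [h]
  let Ψ : AddChar F ℂ := ψ.compAddMonoidHom (Algebra.trace (ZMod p) F).toAddMonoidHom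
  have hΨ : ∀ x, Ψ x = ψ (Algebra.trace (ZMod p) F x) := fun x => rfl
  simp only [← hΨ]
  haveI : CharP F p := charP_of_injective_algebraMap (algebraMap (ZMod p) F).injective p
  apply cb_bound p hp k hk hcard
  · simpa using hm
  · simpa using hn
  · obtain ⟨u, hu⟩ := AddChar.ne_one_iff.mp hψ
    obtain ⟨x, hx⟩ := Algebra.trace_surjective (ZMod p) F u
    rw [AddChar.ne_one_iff]
    exact ⟨x, by rw [hΨ, hx]; exact hu⟩
  · intro y
    rw [hΨ, hΨ]
    congr 1
    have := Algebra.trace_eq_of_algEquiv (FiniteField.frobeniusAlgEquivOfAlgebraic (ZMod p) F) y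
    rw [FiniteField.coe_frobeniusAlgEquivOfAlgebraic] at this
    simpa only [ZMod.card] using this

lemma klo_seq (K : ℕ → ℂ) (p : ℝ) (hp : 1 < p) (C : ℝ)
    (h2 : K 2 = 2 * p - K 1 ^ 2) (h3 : ∀ d, 3 ≤ d → K d + K (d - 1) * K 1 + K (d - 2) * p = 0)
    (hb : ∀ k, 2 ≤ k → ‖K (2 * k)‖ ≤ C * p ^ k) : ‖K 1‖ ≤ 2 * Real.sqrt p := by
  obtain ⟨δ, hδ⟩ := IsAlgClosed.exists_pow_nat_eq (K 1 ^ 2 - 4 * p : ℂ) (n := 2) (by norm_num)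
  set α := (-K 1 + δ) / 2 with hα
  set β := (-K 1 - δ) / 2 with hβ
  have hs : α + β = - K 1 := by rw [hα, hβ]; ring
  have hpr : α * β = p := by
    rw [hα, hβ]; linear_combination (-1/4 : ℂ) * hδ
  have hK : ∀ d, K (d + 1) = -(α ^ (d + 1) + β ^ (d + 1)) ∧
      K (d + 2) = -(α ^ (d + 2) + β ^ (d + 2)) := by
    intro d
    induction d with
    | zero =>
      refine ⟨?_, ?_⟩
      · simp only [zero_add, pow_one]; rw [hs]; ring
      · rw [zero_add, h2, ← hpr]
        linear_combination (α + β - K 1) * hs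
    | succ d ih =>
      obtain ⟨i1, i2⟩ := ih
      refine ⟨i2, ?_⟩
      have := h3 (d + 1 + 2) (by omega)
      rw [show d + 1 + 2 - 1 = d + 2 by omega, show d + 1 + 2 - 2 = d + 1 by omega, i1, i2,
        ← hpr] at this
      have hK1 : K 1 = -(α + β) := by rw [hs]; ring
      rw [hK1] at this
      linear_combination this
  have key : ∀ a b : ℂ, a * b = p → (∀ k, 2 ≤ k → ‖a ^ (2 * k) + b ^ (2 * k)‖ ≤ C * p ^ k) →
      ‖a‖ ≤ Real.sqrt p := by
    intro a b hab hk
    by_contra hcon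
    push Not at hcon
    have hp0 : 0 < p := by linarith
    have hsp := Real.sqrt_pos.mpr hp0
    have hsq := Real.sq_sqrt hp0.le
    have ha2 : p < ‖a‖ ^ 2 := by nlinarith
    have hn : ‖a‖ * ‖b‖ = p := by
      rw [← norm_mul, hab, Complex.norm_real, Real.norm_of_nonneg hp0.le]
    have hb2 : ‖b‖ ^ 2 ≤ p := by
      have h5 : ‖a‖ ^ 2 * ‖b‖ ^ 2 = p ^ 2 := by rw [← mul_pow, hn]
      by_contra h6
      push Not at h6
      nlinarith
    set ρ := ‖a‖ ^ 2 / p with hρ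
    have hρ1 : 1 < ρ := by rw [hρ, lt_div_iff₀ hp0]; linarith
    obtain ⟨N, hN⟩ := pow_unbounded_of_one_lt (C + 1) hρ1
    have hN2 : C + 1 < ρ ^ (N + 2) :=
      lt_of_lt_of_le hN (pow_le_pow_right₀ hρ1.le (by omega))
    have h7 := hk (N + 2) (by omega)
    have h8 : ‖a‖ ^ (2 * (N + 2)) ≤ C * p ^ (N + 2) + p ^ (N + 2) := by
      have h9 : ‖a ^ (2 * (N + 2))‖ ≤ ‖a ^ (2 * (N + 2)) + b ^ (2 * (N + 2))‖ +
          ‖b ^ (2 * (N + 2))‖ := by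
        have := norm_sub_le (a ^ (2 * (N + 2)) + b ^ (2 * (N + 2))) (b ^ (2 * (N + 2)))
        simpa using this
      rw [norm_pow, norm_pow b] at h9
      have h10 : ‖b‖ ^ (2 * (N + 2)) ≤ p ^ (N + 2) := by
        rw [pow_mul]; exact pow_le_pow_left₀ (by positivity) hb2 _
      linarith
    have h11 : ρ ^ (N + 2) ≤ C + 1 := by
      rw [hρ, div_pow, div_le_iff₀ (by positivity), ← pow_mul]
      linarith
    linarith
  have hbb : ∀ k, 2 ≤ k → ‖α ^ (2 * k) + β ^ (2 * k)‖ ≤ C * p ^ k := by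
    intro k hk
    have := (hK (2 * k - 1)).1
    rw [show 2 * k - 1 + 1 = 2 * k by omega] at this
    have h5 := hb k hk
    rwa [this, norm_neg] at h5
  have ha := key α β hpr hbb
  have hb' := key β α (by rw [mul_comm, hpr]) (fun k hk => by rw [add_comm]; exact hbb k hk)
  have : K 1 = -(α + β) := by rw [hs]; ring
  rw [this, norm_neg]
  linarith [norm_add_le α β]

theorem weil_prime {p : ℕ} [Fact p.Prime] (hp : p ≠ 2) (ψ : AddChar (ZMod p) ℂ)
    (hψ : ψ.IsPrimitive) (m n : ZMod p) (hm : m ≠ 0) (hn : n ≠ 0) :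
    ‖∑ x : (ZMod p)ˣ, ψ (m * x + n * (x : ZMod p)⁻¹)‖ ≤ 2 * Real.sqrt p := by
  have hne : ψ ≠ 1 := by
    have := hψ (one_ne_zero)
    rwa [AddChar.mulShift_one] at this
  have h1 := klo_field (F := ZMod p) ψ m n
  rw [Module.finrank_self] at h1
  simp only [Algebra.trace_self_apply, Algebra.algebraMap_self_apply] at h1
  rw [← h1]
  have c0 := kloC_zero ψ m n
  have c1 : kloC ψ m n 1 = kloK ψ m n 1 := by
    have := klo_rec ψ m n 1
    simpa [c0] using this
  have c2 := kloC_two ψ hψ m n hm hn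
  have hp1 : 1 < p := (Fact.out : p.Prime).one_lt
  apply klo_seq (kloK ψ m n) p (by exact_mod_cast hp1) (4 * p + 1)
  · have := klo_rec ψ m n 2
    rw [c2, show Finset.Icc 1 2 = {1, 2} by rfl] at this
    simp [c0, c1] at this
    push_cast
    linear_combination -this
  · intro d hd
    have := klo_rec ψ m n d
    rw [kloC_big ψ hψ m n hm d hd, mul_zero] at this
    rw [← Finset.sum_subset (s₁ := {d, d - 1, d - 2})] at this
    · rw [Finset.sum_insert, Finset.sum_insert, Finset.sum_singleton, Nat.sub_self,
        show d - (d - 1) = 1 by omega, show d - (d - 2) = 2 by omega, c0, c1, c2] at this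
      · push_cast
        linear_combination -this
      · simp; omega
      · simp; omega
    · intro x hx
      simp at hx
      rw [Finset.mem_Icc]; omega
    · intro x hx hx'
      simp at hx'
      rw [Finset.mem_Icc] at hx
      rw [kloC_big ψ hψ m n hm (d - x) (by omega), mul_zero]
  · intro k hk
    refine (kloK_bound hp ψ hne m n hm hn k hk).trans ?_
    have : (1 : ℝ) ≤ (p : ℝ) ^ k := one_le_pow₀ (by exact_mod_cast hp1.le)
    linarith
end WeilPrime
section PrimePower

lemma pp_stat {R : Type*} [CommRing R] [Fintype R] [DecidableEq R] (χ : AddChar R ℂ)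
    (hχ : χ.IsPrimitive) (m n a : R) (ha : a * a = 0) :
    ∑ u : Rˣ, χ (m * u + n * (u⁻¹ : Rˣ)) =
      ∑ u : Rˣ with a * (m * u - n * (u⁻¹ : Rˣ)) = 0, χ (m * u + n * (u⁻¹ : Rˣ)) := by
  classical
  have hcard : (Fintype.card R : ℂ) ≠ 0 := by
    exact_mod_cast Fintype.card_ne_zero
  let w : R → Rˣ := fun t => ⟨1 + a * t, 1 - a * t, by linear_combination (-t^2) * ha,
    by linear_combination (-t^2) * ha⟩
  have h1 : ∀ t : R, ∑ u : Rˣ, χ (m * u + n * (u⁻¹ : Rˣ)) =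
      ∑ u : Rˣ, χ (m * u + n * (u⁻¹ : Rˣ)) * χ (t * (a * (m * u - n * (u⁻¹ : Rˣ)))) := by
    intro t
    rw [← Equiv.sum_comp (Equiv.mulRight (w t))]
    refine Finset.sum_congr rfl fun u _ => ?_
    rw [← AddChar.map_add_eq_mul]
    congr 1
    rw [Equiv.coe_mulRight, mul_inv, Units.val_mul, Units.val_mul]
    change m * (u * (1 + a * t)) + n * ((u⁻¹ : Rˣ) * (1 - a * t)) = _
    ring
  have h2 : (Fintype.card R : ℂ) * ∑ u : Rˣ, χ (m * u + n * (u⁻¹ : Rˣ)) =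
      ∑ t : R, ∑ u : Rˣ, χ (m * u + n * (u⁻¹ : Rˣ)) *
        χ (t * (a * (m * u - n * (u⁻¹ : Rˣ)))) := by
    rw [← Finset.sum_congr rfl (fun t _ => h1 t), Finset.sum_const, Finset.card_univ,
      nsmul_eq_mul]
  rw [Finset.sum_comm] at h2
  apply mul_left_cancel₀ hcard
  rw [h2, Finset.mul_sum, Finset.sum_filter]
  refine Finset.sum_congr rfl fun u _ => ?_
  rw [← Finset.mul_sum, AddChar.sum_mulShift _ hχ]
  split_ifs <;> simp [mul_comm]

lemma pp_units {R : Type*} [CommRing R] [IsLocalRing R] (m n a : R) (ha0 : a ≠ 0)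
    (hmn : IsUnit m ∨ IsUnit n) (u : Rˣ) (hu : a * (m * u - n * (u⁻¹ : Rˣ)) = 0) :
    IsUnit m ∧ IsUnit n := by
  have hd : m * u - n * (u⁻¹ : Rˣ) ∈ nonunits R := by
    intro h
    exact ha0 (h.mul_left_eq_zero.mp hu)
  constructor
  · by_contra hm
    have hn := hmn.resolve_left hm
    have h1 : m * u ∈ nonunits R := by
      intro h
      exact hm (isUnit_of_mul_isUnit_left h)
    have h2 := IsLocalRing.nonunits_add h1 (b := -(m * u - n * (u⁻¹ : Rˣ))) (by
      intro h; exact hd (by simpa using h.neg))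
    apply h2
    rw [show m * u + -(m * u - n * (u⁻¹ : Rˣ)) = n * (u⁻¹ : Rˣ) by ring]
    exact hn.mul (Units.isUnit _)
  · by_contra hn
    have hm := hmn.resolve_right hn
    have h1 : n * (u⁻¹ : Rˣ) ∈ nonunits R := by
      intro h
      exact hn (isUnit_of_mul_isUnit_left h)
    have h2 := IsLocalRing.nonunits_add h1 hd
    apply h2
    rw [show n * (u⁻¹ : Rˣ) + (m * u - n * (u⁻¹ : Rˣ)) = m * u by ring]
    exact hm.mul (Units.isUnit _)

lemma pp_count {R : Type*} [CommRing R] [Fintype R] [DecidableEq R] [IsLocalRing R]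
    (h2 : IsUnit (2 : R)) (m n a : R) (ha0 : a ≠ 0) (hmn : IsUnit m ∨ IsUnit n) :
    ((Finset.univ : Finset Rˣ).filter (fun u => a * (m * u - n * (u⁻¹ : Rˣ)) = 0)).card ≤
      2 * ((Finset.univ : Finset R).filter (fun x => a * x = 0)).card := by
  classical
  set U := (Finset.univ : Finset Rˣ).filter (fun u => a * (m * u - n * (u⁻¹ : Rˣ)) = 0) with hU
  set K := (Finset.univ : Finset R).filter (fun x => a * x = 0) with hK
  rcases U.eq_empty_or_nonempty with h | ⟨v, hv⟩
  · rw [h]; simp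
  have hv' := (Finset.mem_filter.mp hv).2
  have hm := (pp_units m n a ha0 hmn v hv').1
  have hsub : U ⊆ U.filter (fun u : Rˣ => a * ((u : R) - v) = 0) ∪ U.filter (fun u : Rˣ => a * ((u : R) + v) = 0) := by
    intro u hu
    have hu' := (Finset.mem_filter.mp hu).2
    rw [Finset.mem_union, Finset.mem_filter (s := U), Finset.mem_filter (s := U)]
    have e1 : a * (m * u ^ 2 - n) = 0 := by
      have : (u : R) * (u⁻¹ : Rˣ) = 1 := Units.mul_inv u
      linear_combination (u : R) * hu' + a * n * this
    have e2 : a * (m * v ^ 2 - n) = 0 := by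
      have : (v : R) * (v⁻¹ : Rˣ) = 1 := Units.mul_inv v
      linear_combination (v : R) * hv' + a * n * this
    have e3 : a * ((u : R) - v) * (u + v) = 0 := by
      have : m * (a * ((u : R) - v) * (u + v)) = 0 := by linear_combination e1 - e2
      exact hm.mul_right_eq_zero.mp this
    by_cases hp : IsUnit ((u : R) + v)
    · left; exact ⟨hu, hp.mul_left_eq_zero.mp e3⟩
    · right
      refine ⟨hu, ?_⟩
      have hq : IsUnit ((u : R) - v) := by
        by_contra hq
        have := IsLocalRing.nonunits_add (show (u : R) + v ∈ nonunits R from hp)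
          (show (u : R) - v ∈ nonunits R from hq)
        apply this
        rw [show (u : R) + v + (u - v) = 2 * u by ring]
        exact h2.mul u.isUnit
      have : (a * ((u : R) + v)) * (u - v) = 0 := by linear_combination e3
      exact hq.mul_left_eq_zero.mp this
  have hc1 : (U.filter (fun u : Rˣ => a * ((u : R) - v) = 0)).card ≤ K.card := by
    apply Finset.card_le_card_of_injOn (fun u : Rˣ => (u : R) - v)
    · intro u hu
      simpa [hK] using (Finset.mem_filter.mp hu).2
    · intro x _ y _ h
      exact Units.ext (sub_left_injective h)
  have hc2 : (U.filter (fun u : Rˣ => a * ((u : R) + v) = 0)).card ≤ K.card := by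
    apply Finset.card_le_card_of_injOn (fun u : Rˣ => (u : R) + v)
    · intro u hu
      simpa [hK] using (Finset.mem_filter.mp hu).2
    · intro x _ y _ h
      exact Units.ext (add_left_injective _ h)
  calc U.card ≤ _ := Finset.card_le_card hsub
    _ ≤ _ := Finset.card_union_le _ _
    _ ≤ _ := by omega

lemma pp_even {R : Type*} [CommRing R] [Fintype R] [DecidableEq R] [IsLocalRing R]
    (χ : AddChar R ℂ) (hχ : χ.IsPrimitive)
    (h2 : IsUnit (2 : R)) (m n a : R) (ha : a * a = 0) (ha0 : a ≠ 0) (hmn : IsUnit m ∨ IsUnit n) :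
    ‖∑ u : Rˣ, χ (m * u + n * (u⁻¹ : Rˣ))‖ ≤
      2 * ((Finset.univ : Finset R).filter (fun x => a * x = 0)).card := by
  rw [pp_stat χ hχ m n a ha]
  refine (norm_sum_le _ _).trans ?_
  simp only [AddChar.norm_apply, Finset.sum_const, nsmul_eq_mul, mul_one]
  exact_mod_cast pp_count h2 m n a ha0 hmn

lemma pp_gauss {R : Type*} [CommRing R] [Fintype R] [DecidableEq R]
    (χ : AddChar R ℂ) (hχ : χ.IsPrimitive) (β γ : R) :
    ‖∑ t : R, χ (t * β + γ * t ^ 2)‖ ^ 2 ≤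
      Fintype.card R * ((Finset.univ : Finset R).filter (fun x => 2 * γ * x = 0)).card := by
  set G := ∑ t : R, χ (t * β + γ * t ^ 2) with hG
  have h1 : G * (starRingEnd ℂ) G = ∑ h : R, χ (h * β + γ * h ^ 2) * ∑ s : R, χ (s * (2 * γ * h)) := by
    have : (starRingEnd ℂ) G = ∑ s : R, χ (-(s * β + γ * s ^ 2)) := by
      rw [hG, map_sum]
      exact Finset.sum_congr rfl fun s _ => (AddChar.map_neg_eq_conj χ _).symm
    rw [this, Finset.mul_sum]
    simp_rw [Finset.mul_sum]
    rw [Finset.sum_comm (s := (Finset.univ : Finset R)) (t := (Finset.univ : Finset R))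
      (f := fun h s => χ (h * β + γ * h ^ 2) * χ (s * (2 * γ * h)))]
    refine Finset.sum_congr rfl fun s _ => ?_
    rw [hG, Finset.sum_mul, ← Equiv.sum_comp (Equiv.addRight s)]
    refine Finset.sum_congr rfl fun h _ => ?_
    rw [← AddChar.map_add_eq_mul, ← AddChar.map_add_eq_mul, Equiv.coe_addRight]
    congr 1
    ring
  have h3 : ((‖G‖ ^ 2 : ℝ) : ℂ) = G * (starRingEnd ℂ) G := by
    rw [Complex.mul_conj, Complex.normSq_eq_norm_sq]
  have h4 : ‖G‖ ^ 2 = ‖G * (starRingEnd ℂ) G‖ := by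
    rw [← h3, Complex.norm_real, Real.norm_of_nonneg (by positivity)]
  rw [h4, h1]
  refine (norm_sum_le _ _).trans ?_
  simp only [AddChar.sum_mulShift _ hχ, norm_mul, AddChar.norm_apply, one_mul]
  rw [Finset.card_filter]
  push_cast
  rw [Finset.mul_sum]
  refine Finset.sum_le_sum fun h _ => ?_
  split_ifs <;> simp

lemma pp_odd {R : Type*} [CommRing R] [Fintype R] [DecidableEq R] [IsLocalRing R]
    (χ : AddChar R ℂ) (hχ : χ.IsPrimitive)
    (h2 : IsUnit (2 : R)) (m n a b : R) (ha : a * a = 0) (ha0 : a ≠ 0)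
    (hab : a * b = 0) (hb : b ^ 3 = 0) (hmn : IsUnit m ∨ IsUnit n) :
    Fintype.card R * ‖∑ u : Rˣ, χ (m * u + n * (u⁻¹ : Rˣ))‖ ≤
      2 * ((Finset.univ : Finset R).filter (fun x => a * x = 0)).card *
      Real.sqrt (Fintype.card R * ((Finset.univ : Finset R).filter (fun x => b ^ 2 * x = 0)).card) := by
  classical
  rw [pp_stat χ hχ m n a ha]
  set U := (Finset.univ : Finset Rˣ).filter (fun u => a * (m * u - n * (u⁻¹ : Rˣ)) = 0) with hU
  let w : R → Rˣ := fun t => ⟨1 + b * t, 1 - b * t + b ^ 2 * t ^ 2, by linear_combination t^3 * hb,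
    by linear_combination t^3 * hb⟩
  have h1 : ∀ t : R, ∑ u ∈ U, χ (m * u + n * (u⁻¹ : Rˣ)) =
      ∑ u ∈ U, χ (m * u + n * (u⁻¹ : Rˣ)) *
        χ (t * (b * (m * u - n * (u⁻¹ : Rˣ))) + (b ^ 2 * (n * (u⁻¹ : Rˣ))) * t ^ 2) := by
    intro t
    rw [hU, Finset.sum_filter, Finset.sum_filter, ← Equiv.sum_comp (Equiv.mulRight (w t))]
    refine Finset.sum_congr rfl fun u _ => ?_
    have e1 : ((u * w t : Rˣ) : R) = u * (1 + b * t) := rfl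
    have e2 : (((u * w t)⁻¹ : Rˣ) : R) = (u⁻¹ : Rˣ) * (1 - b * t + b ^ 2 * t ^ 2) := by
      rw [mul_inv]; rfl
    rw [Equiv.coe_mulRight]
    rw [e1, e2]
    have e3 : a * (m * (u * (1 + b * t)) - n * ((u⁻¹ : Rˣ) * (1 - b * t + b ^ 2 * t ^ 2))) =
        a * (m * u - n * (u⁻¹ : Rˣ)) := by
      linear_combination (m * u * t + n * (u⁻¹ : Rˣ) * t - n * (u⁻¹ : Rˣ) * b * t ^ 2) * hab
    rw [e3]
    split_ifs
    · rw [← AddChar.map_add_eq_mul]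
      congr 1
      ring
    · rfl
  have h3 : (Fintype.card R : ℂ) * ∑ u ∈ U, χ (m * u + n * (u⁻¹ : Rˣ)) =
      ∑ u ∈ U, χ (m * u + n * (u⁻¹ : Rˣ)) * ∑ t : R,
        χ (t * (b * (m * u - n * (u⁻¹ : Rˣ))) + (b ^ 2 * (n * (u⁻¹ : Rˣ))) * t ^ 2) := by
    simp_rw [Finset.mul_sum (s := (Finset.univ : Finset R))]
    rw [Finset.sum_comm, ← Finset.sum_congr rfl (fun t _ => h1 t), Finset.sum_const,
      Finset.card_univ, nsmul_eq_mul]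
  have h4 : (Fintype.card R : ℝ) * ‖∑ u ∈ U, χ (m * u + n * (u⁻¹ : Rˣ))‖ =
      ‖(Fintype.card R : ℂ) * ∑ u ∈ U, χ (m * u + n * (u⁻¹ : Rˣ))‖ := by
    rw [norm_mul, Complex.norm_natCast]
  rw [h4, h3]
  refine (norm_sum_le _ _).trans ?_
  have h5 : ∀ u ∈ U, ‖χ (m * u + n * (u⁻¹ : Rˣ)) * ∑ t : R,
        χ (t * (b * (m * u - n * (u⁻¹ : Rˣ))) + (b ^ 2 * (n * (u⁻¹ : Rˣ))) * t ^ 2)‖ ≤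
      Real.sqrt (Fintype.card R *
        ((Finset.univ : Finset R).filter (fun x => b ^ 2 * x = 0)).card) := by
    intro u hu
    have hn := (pp_units m n a ha0 hmn u (Finset.mem_filter.mp hu).2).2
    rw [norm_mul, AddChar.norm_apply, one_mul]
    apply Real.le_sqrt_of_sq_le
    refine (pp_gauss χ hχ _ _).trans ?_
    refine mul_le_mul_of_nonneg_left ?_ (by positivity)
    rw [Nat.cast_le]
    refine Finset.card_le_card (Finset.monotone_filter_right _ ?_)
    intro x _ hx
    have hun : IsUnit (2 * (n * (u⁻¹ : Rˣ))) := h2.mul (hn.mul (Units.isUnit _))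
    apply hun.mul_right_eq_zero.mp
    linear_combination hx
  refine (Finset.sum_le_sum h5).trans ?_
  rw [Finset.sum_const, nsmul_eq_mul]
  gcongr
  exact_mod_cast pp_count h2 m n a ha0 hmn

end PrimePower
section Assemble

/-- The complex Kloosterman sum over units of `ZMod c`. -/
noncomputable def KS (m n : ℤ) (c : ℕ) [NeZero c] : ℂ :=
  ∑ u : (ZMod c)ˣ, ZMod.stdAddChar ((m : ZMod c) * (u : ZMod c) + (n : ZMod c) * ((u⁻¹ : (ZMod c)ˣ) : ZMod c))

lemma KS_trivial (m n : ℤ) (c : ℕ) [NeZero c] : ‖KS m n c‖ ≤ c.totient := by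
  refine (norm_sum_le _ _).trans ?_
  simp [AddChar.norm_apply, ZMod.card_units_eq_totient]

lemma std_mul (p c : ℕ) [NeZero c] [NeZero (p * c)] (x : ZMod (p * c)) :
    ZMod.stdAddChar ((p : ZMod (p * c)) * x) =
      ZMod.stdAddChar (ZMod.castHom (Dvd.intro_left p rfl : c ∣ p * c) (ZMod c) x) := by
  obtain ⟨z, rfl⟩ := ZMod.intCast_surjective x
  have hpc : p * c ≠ 0 := NeZero.ne _
  have hp : (p : ℂ) ≠ 0 := by exact_mod_cast left_ne_zero_of_mul hpc
  have hc : (c : ℂ) ≠ 0 := by exact_mod_cast right_ne_zero_of_mul hpc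
  rw [map_intCast, show (p : ZMod (p * c)) * (z : ZMod (p * c)) = ((p * z : ℤ) : ZMod (p * c)) by
    push_cast; rfl, ZMod.stdAddChar_coe, ZMod.stdAddChar_coe]
  congr 1
  push_cast
  field_simp

lemma std_crt (c d : ℕ) [NeZero c] [NeZero d] [NeZero (c * d)] (s t : ℤ) (h : s * d + t * c = 1)
    (x : ZMod (c * d)) :
    ZMod.stdAddChar x =
      ZMod.stdAddChar ((s : ZMod c) * ZMod.castHom (Dvd.intro d rfl : c ∣ c * d) (ZMod c) x) *
      ZMod.stdAddChar ((t : ZMod d) *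
        ZMod.castHom (Dvd.intro_left c rfl : d ∣ c * d) (ZMod d) x) := by
  obtain ⟨z, rfl⟩ := ZMod.intCast_surjective x
  have hc : (c : ℂ) ≠ 0 := by exact_mod_cast NeZero.ne c
  have hd : (d : ℂ) ≠ 0 := by exact_mod_cast NeZero.ne d
  have e1 := map_intCast (ZMod.castHom (Dvd.intro d rfl : c ∣ c * d) (ZMod c)) z
  have e2 := map_intCast (ZMod.castHom (Dvd.intro_left c rfl : d ∣ c * d) (ZMod d)) z
  rw [e1, e2, ← Int.cast_mul, ← Int.cast_mul, ZMod.stdAddChar_coe,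
    ZMod.stdAddChar_coe, ZMod.stdAddChar_coe, ← Complex.exp_add]
  congr 1
  have h' : (s : ℂ) * d + t * c = 1 := by exact_mod_cast h
  push_cast
  field_simp
  linear_combination (-(z : ℂ)) * h'

lemma crt_apply (c d : ℕ) (hcd : c.Coprime d) (x : ZMod (c * d)) :
    ZMod.chineseRemainder hcd x =
      (ZMod.castHom (Dvd.intro d rfl : c ∣ c * d) (ZMod c) x,
        ZMod.castHom (Dvd.intro_left c rfl : d ∣ c * d) (ZMod d) x) := by
  obtain ⟨z, rfl⟩ := ZMod.intCast_surjective x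
  rw [map_intCast, map_intCast, map_intCast]
  rfl

lemma KS_mul (c d : ℕ) [NeZero c] [NeZero d] [NeZero (c * d)] (s t : ℤ) (h : s * d + t * c = 1)
    (hcd : c.Coprime d) (m n : ℤ) :
    KS m n (c * d) = KS (m * s) (n * s) c * KS (m * t) (n * t) d := by
  classical
  rw [KS, KS, KS, Finset.sum_mul_sum, ← Finset.sum_product']
  refine Finset.sum_bij (fun u _ => (ZMod.unitsMap (Dvd.intro d rfl : c ∣ c * d) u,
    ZMod.unitsMap (Dvd.intro_left c rfl : d ∣ c * d) u)) ?_ ?_ ?_ ?_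
  · intro u _; simp
  · intro u _ v _ huv
    have hinj := (ZMod.chineseRemainder hcd).injective
    apply Units.ext
    apply hinj
    have h1 := congrArg Units.val (congrArg Prod.fst huv)
    have h2 := congrArg Units.val (congrArg Prod.snd huv)
    rw [crt_apply, crt_apply]
    exact Prod.ext h1 h2
  · rintro ⟨a, b⟩ _
    let e := Units.mapEquiv (ZMod.chineseRemainder hcd).toMulEquiv
    refine ⟨e.symm (MulEquiv.prodUnits.symm (a, b)), Finset.mem_univ _, ?_⟩
    have hh : e (e.symm (MulEquiv.prodUnits.symm (a, b))) = MulEquiv.prodUnits.symm (a, b) :=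
      e.apply_symm_apply _
    have h0 := congrArg Units.val hh
    have h0' : ZMod.chineseRemainder hcd
        ((e.symm (MulEquiv.prodUnits.symm (a, b)) : (ZMod (c * d))ˣ) : ZMod (c * d)) =
        ((a : ZMod c), (b : ZMod d)) := h0
    rw [crt_apply] at h0'
    exact Prod.ext (Units.ext (congrArg Prod.fst h0')) (Units.ext (congrArg Prod.snd h0'))
  · intro u _
    rw [std_crt c d s t h]
    simp only [map_add, map_mul, map_intCast]
    congr 2
    · rw [ZMod.unitsMap_def, ← map_inv]
      simp only [Units.coe_map, MonoidHom.coe_coe]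
      push_cast
      ring
    · rw [ZMod.unitsMap_def, ← map_inv]
      simp only [Units.coe_map, MonoidHom.coe_coe]
      push_cast
      ring

lemma KS_lift (p c : ℕ) [NeZero c] [NeZero (p * c)] (htot : (p * c).totient = p * c.totient)
    (m n : ℤ) : KS (p * m) (p * n) (p * c) = p * KS m n c := by
  classical
  set π := ZMod.unitsMap (Dvd.intro_left p rfl : c ∣ p * c) with hπ
  have hsurj : Function.Surjective π := ZMod.unitsMap_surjective _
  let g : (ZMod c)ˣ → ℂ := fun u =>
    ZMod.stdAddChar ((m : ZMod c) * (u : ZMod c) + (n : ZMod c) * ((u⁻¹ : (ZMod c)ˣ) : ZMod c))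
  have h1 : KS (p * m) (p * n) (p * c) = ∑ u, g (π u) := by
    rw [KS]
    refine Finset.sum_congr rfl fun u _ => ?_
    rw [show (((p * m : ℤ) : ZMod (p * c)) * (u : ZMod (p * c)) +
      ((p * n : ℤ) : ZMod (p * c)) * ((u⁻¹ : (ZMod (p * c))ˣ) : ZMod (p * c))) =
      (p : ZMod (p * c)) * ((m : ZMod (p * c)) * (u : ZMod (p * c)) +
        (n : ZMod (p * c)) * ((u⁻¹ : (ZMod (p * c))ˣ) : ZMod (p * c))) by
        push_cast; ring, std_mul]
    simp only [g]
    congr 1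
    rw [map_add, map_mul, map_mul, map_intCast, map_intCast, hπ, ZMod.unitsMap_def, ← map_inv]
    rfl
  have hfib : ∀ v : (ZMod c)ˣ, (Finset.univ.filter (fun u => π u = v)).card =
      (Finset.univ.filter (fun u => π u = 1)).card := fun v =>
    MonoidHom.card_fiber_eq_of_mem_range π (hsurj v) (hsurj 1)
  have hN : (Finset.univ.filter (fun u => π u = 1)).card = p := by
    have h2 : Fintype.card (ZMod (p * c))ˣ =
        ∑ v : (ZMod c)ˣ, (Finset.univ.filter (fun u => π u = v)).card := by
      rw [← Finset.card_univ]
      exact Finset.card_eq_sum_card_fiberwise (fun _ _ => Finset.mem_coe.mpr (Finset.mem_univ _))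
    rw [Finset.sum_congr rfl (fun v _ => hfib v), Finset.sum_const, Finset.card_univ,
      ZMod.card_units_eq_totient, ZMod.card_units_eq_totient, htot, smul_eq_mul, mul_comm] at h2
    exact (Nat.eq_of_mul_eq_mul_left (Nat.totient_pos.mpr (NeZero.pos c)) h2).symm
  rw [h1, Finset.sum_comp, Finset.image_univ_of_surjective hsurj, KS, Finset.mul_sum]
  refine Finset.sum_congr rfl fun v _ => ?_
  rw [hfib, hN, nsmul_eq_mul]

lemma isUnit_int_pp {p : ℕ} (hp : p.Prime) (k : ℕ) (hk : k ≠ 0) (z : ℤ) :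
    IsUnit (z : ZMod (p ^ k)) ↔ ¬ (p : ℤ) ∣ z := by
  rw [ZMod.coe_int_isUnit_iff_isCoprime]
  push_cast
  rw [IsCoprime.pow_left_iff (Nat.pos_of_ne_zero hk), Prime.coprime_iff_not_dvd (Nat.prime_iff_prime_int.mp hp)]

lemma local_pp {p : ℕ} (hp : p.Prime) (k : ℕ) (hk : k ≠ 0) : IsLocalRing (ZMod (p ^ k)) := by
  have : Fact (1 < p ^ k) := ⟨Nat.one_lt_pow hk hp.one_lt⟩
  apply IsLocalRing.of_isUnit_or_isUnit_one_sub_self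
  intro a
  obtain ⟨z, rfl⟩ := ZMod.intCast_surjective a
  rw [show (1 : ZMod (p ^ k)) - (z : ZMod (p ^ k)) = ((1 - z : ℤ) : ZMod (p ^ k)) by push_cast; rfl,
    isUnit_int_pp hp k hk, isUnit_int_pp hp k hk]
  by_contra! h
  have := dvd_add h.1 h.2
  rw [add_sub_cancel] at this
  exact hp.one_lt.ne' (by exact_mod_cast Int.eq_one_of_dvd_one (by positivity) this)

lemma ker_pp {c : ℕ} [NeZero c] (a : ℕ) (ha : 0 < a) :
    ((Finset.univ : Finset (ZMod c)).filter (fun x => (a : ZMod c) * x = 0)).card ≤ a := by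
  have := IsAddCyclic.card_nsmul_eq_zero_le (α := ZMod c) ha
  simpa only [nsmul_eq_mul] using this

lemma pp_unit_bound {p : ℕ} (hp : p.Prime) (hp2 : p ≠ 2) (k : ℕ) (hk : 2 ≤ k) [NeZero (p ^ k)]
    (m n : ℤ) (hmn : ¬ ((p : ℤ) ∣ m ∧ (p : ℤ) ∣ n)) :
    ‖KS m n (p ^ k)‖ ≤ 2 * Real.sqrt ((p ^ k : ℕ) : ℝ) := by
  have hk0 : k ≠ 0 := by omega
  have := local_pp hp k hk0
  have hpp : 0 < p := hp.pos
  have h2 : IsUnit (2 : ZMod (p ^ k)) := by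
    have := (isUnit_int_pp hp k hk0 2).mpr (by
      intro h
      have h' : p ∣ 2 := by exact_mod_cast h
      exact hp2 ((Nat.prime_dvd_prime_iff_eq hp Nat.prime_two).mp h'))
    exact_mod_cast this
  have hmn' : IsUnit (m : ZMod (p ^ k)) ∨ IsUnit (n : ZMod (p ^ k)) := by
    rw [isUnit_int_pp hp k hk0, isUnit_int_pp hp k hk0]
    tauto
  have hz : ∀ j, k ≤ j → ((p ^ j : ℕ) : ZMod (p ^ k)) = 0 := by
    intro j hj
    rw [ZMod.natCast_eq_zero_iff]
    exact pow_dvd_pow p hj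
  have hnz : ∀ j, j < k → ((p ^ j : ℕ) : ZMod (p ^ k)) ≠ 0 := by
    intro j hj h
    rw [ZMod.natCast_eq_zero_iff, Nat.pow_dvd_pow_iff_le_right hp.one_lt] at h
    omega
  have hχ := ZMod.isPrimitive_stdAddChar (p ^ k)
  rcases Nat.even_or_odd' k with ⟨r, hr | hr⟩
  · have h := pp_even _ hχ h2 m n ((p ^ r : ℕ) : ZMod (p ^ k)) (by
      rw [← Nat.cast_mul, ← pow_add]; exact hz _ (by omega)) (hnz r (by omega)) hmn'
    refine h.trans ?_
    have h3 : (((Finset.univ : Finset (ZMod (p ^ k))).filter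
      (fun x => ((p ^ r : ℕ) : ZMod (p ^ k)) * x = 0)).card : ℝ) ≤ (p ^ r : ℕ) := by
      exact_mod_cast ker_pp (c := p ^ k) (p ^ r) (by positivity)
    have h4 : Real.sqrt ((p ^ k : ℕ) : ℝ) = (p ^ r : ℕ) := by
      rw [hr, mul_comm, pow_mul]
      push_cast
      exact Real.sqrt_sq (by positivity)
    rw [h4]
    linarith
  · have h := pp_odd _ hχ h2 m n ((p ^ (r + 1) : ℕ) : ZMod (p ^ k)) ((p ^ r : ℕ) : ZMod (p ^ k)) (by
      rw [← Nat.cast_mul, ← pow_add]; exact hz _ (by omega)) (hnz _ (by omega))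
      (by rw [← Nat.cast_mul, ← pow_add]; exact hz _ (by omega))
      (by rw [← Nat.cast_pow, ← pow_mul]; exact hz _ (by omega)) hmn'
    have h3 : (((Finset.univ : Finset (ZMod (p ^ k))).filter
      (fun x => ((p ^ (r + 1) : ℕ) : ZMod (p ^ k)) * x = 0)).card : ℝ) ≤ (p ^ (r + 1) : ℕ) := by
      exact_mod_cast ker_pp (c := p ^ k) (p ^ (r + 1)) (by positivity)
    have h4 : (((Finset.univ : Finset (ZMod (p ^ k))).filter
      (fun x => ((p ^ r : ℕ) : ZMod (p ^ k)) ^ 2 * x = 0)).card : ℝ) ≤ ((p ^ r : ℕ) : ℝ) ^ 2 := by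
      have := ker_pp (c := p ^ k) ((p ^ r) ^ 2) (by positivity)
      rw [Nat.cast_pow] at this
      exact_mod_cast this
    rw [ZMod.card] at h
    change ((p ^ k : ℕ) : ℝ) * ‖KS m n (p ^ k)‖ ≤ _ at h
    set Q := ((p ^ k : ℕ) : ℝ) with hQ
    have hQ0 : 0 < Q := by rw [hQ]; positivity
    have hprod : ((p ^ (r + 1) : ℕ) : ℝ) * ((p ^ r : ℕ) : ℝ) = Q := by
      rw [hQ, hr]; push_cast; ring
    have h5 : Q * ‖KS m n (p ^ k)‖ ≤ 2 * (p ^ (r + 1) : ℕ) * Real.sqrt (Q * ((p ^ r : ℕ) : ℝ) ^ 2) := by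
      refine h.trans ?_
      gcongr
    rw [Real.sqrt_mul hQ0.le, Real.sqrt_sq (by positivity)] at h5
    have h6 : Q * ‖KS m n (p ^ k)‖ ≤ Q * (2 * Real.sqrt Q) := by
      calc _ ≤ _ := h5
        _ = (((p ^ (r + 1) : ℕ) : ℝ) * ((p ^ r : ℕ) : ℝ)) * (2 * Real.sqrt Q) := by ring
        _ = _ := by rw [hprod]
    exact le_of_mul_le_mul_left h6 hQ0

lemma p_unit_bound {p : ℕ} (hp : p.Prime) (hp2 : p ≠ 2) (c : ℕ) (hc : c = p) [NeZero c]
    (m n : ℤ) (hmn : ¬ ((p : ℤ) ∣ m ∧ (p : ℤ) ∣ n)) :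
    ‖KS m n c‖ ≤ 2 * Real.sqrt (c : ℝ) := by
  subst hc
  have : Fact c.Prime := ⟨hp⟩
  have hχ := ZMod.isPrimitive_stdAddChar c
  have hs : 1 ≤ Real.sqrt (c : ℝ) := by
    rw [Real.one_le_sqrt]
    exact_mod_cast hp.one_lt.le
  have ram : ∀ a : ZMod c, a ≠ 0 → ‖∑ u : (ZMod c)ˣ, ZMod.stdAddChar (a * (u : ZMod c))‖ ≤ 1 := by
    intro a ha
    have h1 : ∑ x : ZMod c, ZMod.stdAddChar (x * a) = 0 := by
      rw [AddChar.sum_mulShift _ hχ, if_neg ha]; simp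
    rw [← Finset.add_sum_erase _ _ (Finset.mem_univ (0 : ZMod c))] at h1
    have h2 : ∑ x ∈ Finset.univ.erase (0 : ZMod c), ZMod.stdAddChar (x * a) =
        ∑ u : (ZMod c)ˣ, ZMod.stdAddChar (a * (u : ZMod c)) := by
      symm
      refine Finset.sum_bij (fun x _ => (x : ZMod c)) ?_ ?_ ?_ ?_
      · intro x _
        simp
      · intro a _ b _ h
        exact Units.ext h
      · intro b hb
        exact ⟨Units.mk0 b (Finset.ne_of_mem_erase hb), Finset.mem_univ _, rfl⟩
      · intro x _
        rw [mul_comm]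
    rw [h2, zero_mul, AddChar.map_zero_eq_one] at h1
    rw [show ∑ u : (ZMod c)ˣ, ZMod.stdAddChar (a * (u : ZMod c)) = -1 by linear_combination h1]
    simp
  by_cases hm : (m : ZMod c) = 0
  · by_cases hn : (n : ZMod c) = 0
    · exact absurd ⟨(ZMod.intCast_zmod_eq_zero_iff_dvd m c).mp hm,
        (ZMod.intCast_zmod_eq_zero_iff_dvd n c).mp hn⟩ hmn
    · have := ram _ hn
      rw [← Equiv.sum_comp (Equiv.inv (ZMod c)ˣ)] at this
      rw [KS]
      simp only [hm, zero_mul, zero_add]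
      simp only [Equiv.inv_apply] at this
      linarith
  · by_cases hn : (n : ZMod c) = 0
    · have := ram _ hm
      rw [KS]
      simp only [hn, zero_mul, add_zero]
      linarith
    · have := weil_prime hp2 _ hχ _ _ hm hn
      rw [KS]
      simpa only [Units.val_inv_eq_inv_val] using this

lemma gcd3_pos (m n : ℤ) (c : ℕ) (hc : 0 < c) : 1 ≤ Int.gcd m (Int.gcd n (c : ℤ)) := by
  apply Nat.pos_of_ne_zero
  intro h
  have h1 := (Int.gcd_eq_zero_iff.mp h).2
  have h2 := (Int.gcd_eq_zero_iff.mp (by exact_mod_cast h1)).2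
  omega

lemma pp_odd_bound {p : ℕ} (hp : p.Prime) (hp2 : p ≠ 2) (k : ℕ) : ∀ (c : ℕ) [NeZero c],
    c = p ^ (k + 1) → ∀ m n : ℤ,
    ‖KS m n c‖ ≤ Real.sqrt c * Real.sqrt (Int.gcd m (Int.gcd n (c : ℤ))) * 2 := by
  have weaken : ∀ (c : ℕ) (m n : ℤ) (A : ℝ), 0 < c → A ≤ 2 * Real.sqrt c →
      A ≤ Real.sqrt c * Real.sqrt (Int.gcd m (Int.gcd n (c : ℤ))) * 2 := by
    intro c m n A hc hA
    have h1 : 1 ≤ Real.sqrt (Int.gcd m (Int.gcd n (c : ℤ))) := by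
      rw [Real.one_le_sqrt]
      exact_mod_cast gcd3_pos m n c hc
    have := Real.sqrt_nonneg (c : ℝ)
    nlinarith
  induction k with
  | zero =>
    intro c _ hc m n
    rw [zero_add, pow_one] at hc
    by_cases h : (p : ℤ) ∣ m ∧ (p : ℤ) ∣ n
    · have hg : c ≤ Int.gcd m (Int.gcd n (c : ℤ)) := by
        apply Nat.le_of_dvd (gcd3_pos m n c (NeZero.pos c))
        rw [← hc] at h
        apply Int.dvd_gcd h.1
        exact_mod_cast Int.dvd_gcd h.2 (dvd_refl _)
      have h1 := KS_trivial m n c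
      have h2 : (c.totient : ℝ) ≤ c := by exact_mod_cast Nat.totient_le c
      have h3 : Real.sqrt c ≤ Real.sqrt (Int.gcd m (Int.gcd n (c : ℤ))) :=
        Real.sqrt_le_sqrt (by exact_mod_cast hg)
      have h4 := Real.sq_sqrt (Nat.cast_nonneg (α := ℝ) c)
      have h5 := Real.sqrt_nonneg (c : ℝ)
      nlinarith
    · exact weaken c m n _ (NeZero.pos c) (p_unit_bound hp hp2 c hc m n h)
  | succ k ih =>
    intro c _ hc m n
    by_cases h : (p : ℤ) ∣ m ∧ (p : ℤ) ∣ n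
    · obtain ⟨⟨m, rfl⟩, ⟨n, rfl⟩⟩ := h
      have hc' : c = p * p ^ (k + 1) := by rw [hc]; ring
      clear hc
      obtain ⟨d, hd⟩ : ∃ d, d = p ^ (k + 1) := ⟨_, rfl⟩
      rw [← hd] at hc'
      subst hc'
      have : NeZero d := ⟨by rw [hd]; exact pow_ne_zero _ hp.ne_zero⟩
      rw [KS_lift p d (Nat.totient_mul_of_prime_of_dvd hp (by
        rw [hd]; exact dvd_pow_self p (by omega))), norm_mul, Complex.norm_natCast]
      have h1 := ih d hd m n
      have hg : Int.gcd (p * m) (Int.gcd (p * n) ((p * d : ℕ) : ℤ)) =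
          p * Int.gcd m (Int.gcd n (d : ℤ)) := by
        rw [Nat.cast_mul, Int.gcd_mul_left, Int.natAbs_natCast, Nat.cast_mul, Int.gcd_mul_left,
          Int.natAbs_natCast]
      rw [hg, Nat.cast_mul, Nat.cast_mul, Real.sqrt_mul (by positivity),
        Real.sqrt_mul (by positivity)]
      have h4 := Real.mul_self_sqrt (Nat.cast_nonneg (α := ℝ) p)
      calc _ ≤ (p : ℝ) * _ := mul_le_mul_of_nonneg_left h1 (by positivity)
        _ = _ := by
          linear_combination (-(Real.sqrt d * Real.sqrt (Int.gcd m (Int.gcd n (d : ℤ))) * 2)) * h4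
    · subst hc
      exact weaken _ m n _ (NeZero.pos _) (pp_unit_bound hp hp2 _ (by omega) m n h)

lemma pp_two_bound (k : ℕ) (hk : k + 1 < 5) (c : ℕ) [NeZero c] (hc : c = 2 ^ (k + 1)) (m n : ℤ) :
    ‖KS m n c‖ ≤ Real.sqrt c * Real.sqrt (Int.gcd m (Int.gcd n (c : ℤ))) * 2 := by
  have h1 : 1 ≤ Real.sqrt (Int.gcd m (Int.gcd n (c : ℤ))) := by
    rw [Real.one_le_sqrt]
    exact_mod_cast gcd3_pos m n c (NeZero.pos c)
  have h2 := KS_trivial m n c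
  have h3 : c.totient = 2 ^ k := by
    rw [hc, Nat.totient_prime_pow_succ Nat.prime_two]; simp
  have h4 : ((2 : ℝ) ^ k / 2) ≤ Real.sqrt c := by
    apply Real.le_sqrt_of_sq_le
    rw [hc]
    push_cast
    have : k ≤ 3 := by omega
    interval_cases k <;> norm_num
  rw [h3] at h2
  push_cast at h2
  have := Real.sqrt_nonneg (c : ℝ)
  nlinarith

lemma gcd_crt (m n s t : ℤ) (c d : ℕ) (hc : 0 < c) (hd : 0 < d) (h : s * d + t * c = 1)
    (hcd : c.Coprime d) :
    Int.gcd (m * s) (Int.gcd (n * s) (c : ℤ)) * Int.gcd (m * t) (Int.gcd (n * t) (d : ℤ)) ≤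
      Int.gcd m (Int.gcd n ((c * d : ℕ) : ℤ)) := by
  have key : ∀ (s t : ℤ) (c d : ℕ), s * d + t * c = 1 →
      ((Int.gcd (m * s) (Int.gcd (n * s) (c : ℤ)) : ℕ) : ℤ) ∣ m ∧
      ((Int.gcd (m * s) (Int.gcd (n * s) (c : ℤ)) : ℕ) : ℤ) ∣ n ∧
      ((Int.gcd (m * s) (Int.gcd (n * s) (c : ℤ)) : ℕ) : ℤ) ∣ c := by
    intro s t c d h
    set g := ((Int.gcd (m * s) (Int.gcd (n * s) (c : ℤ)) : ℕ) : ℤ) with hg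
    have h1 : g ∣ m * s := Int.gcd_dvd_left ..
    have h2 : g ∣ (Int.gcd (n * s) (c : ℤ) : ℤ) := Int.gcd_dvd_right ..
    have h3 : g ∣ n * s := h2.trans (Int.gcd_dvd_left ..)
    have h4 : g ∣ c := h2.trans (Int.gcd_dvd_right ..)
    have hco : IsCoprime g s := by
      have : IsCoprime (c : ℤ) s := ⟨t, d, by linarith⟩
      exact this.of_isCoprime_of_dvd_left h4
    exact ⟨hco.dvd_of_dvd_mul_right h1, hco.dvd_of_dvd_mul_right h3, h4⟩
  obtain ⟨a1, a2, a3⟩ := key s t c d h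
  obtain ⟨b1, b2, b3⟩ := key t s d c (by linarith)
  have hco : IsCoprime ((Int.gcd (m * s) (Int.gcd (n * s) (c : ℤ)) : ℕ) : ℤ)
      ((Int.gcd (m * t) (Int.gcd (n * t) (d : ℤ)) : ℕ) : ℤ) := by
    have : IsCoprime (c : ℤ) (d : ℤ) := Nat.isCoprime_iff_coprime.mpr hcd
    exact (this.of_isCoprime_of_dvd_left a3).of_isCoprime_of_dvd_right b3
  apply Nat.le_of_dvd (gcd3_pos m n (c * d) (by positivity))
  apply Int.dvd_gcd
  · push_cast
    exact hco.mul_dvd a1 b1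
  · have : Int.gcd (m * s) (Int.gcd (n * s) (c : ℤ)) * Int.gcd (m * t) (Int.gcd (n * t) (d : ℤ)) ∣
        Int.gcd n ((c * d : ℕ) : ℤ) := by
      apply Int.dvd_gcd
      · push_cast
        exact hco.mul_dvd a2 b2
      · push_cast
        exact mul_dvd_mul a3 b3
    exact_mod_cast this

lemma KS_bound (c : ℕ) : ∀ [NeZero c], ¬ (32 ∣ c) → ∀ m n : ℤ,
    ‖KS m n c‖ ≤ Real.sqrt c * Real.sqrt (Int.gcd m (Int.gcd n (c : ℤ))) *
        2 ^ c.primeFactors.card := by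
  induction c using Nat.recOnPosPrimePosCoprime with
  | zero =>
    intro h
    exact absurd rfl h.out
  | one =>
    intro _ _ m n
    have := KS_trivial m n 1
    simpa using this
  | prime_pow p k hp hk =>
    intro _ h32 m n
    obtain ⟨k, rfl⟩ : ∃ j, k = j + 1 := ⟨k - 1, by omega⟩
    rw [Nat.primeFactors_prime_pow (by omega) hp, Finset.card_singleton, pow_one]
    by_cases h2 : p = 2
    · subst h2
      apply pp_two_bound k _ _ rfl
      by_contra hcon
      exact h32 (pow_dvd_pow 2 (show 5 ≤ k + 1 by omega))
    · exact pp_odd_bound hp h2 k _ rfl m n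
  | coprime c d hc hd hcd ihc ihd =>
    intro _ h32 m n
    have : NeZero c := ⟨by omega⟩
    have : NeZero d := ⟨by omega⟩
    obtain ⟨t, s, h⟩ : IsCoprime (c : ℤ) (d : ℤ) := Nat.isCoprime_iff_coprime.mpr hcd
    have h' : s * d + t * c = 1 := by linarith
    rw [KS_mul c d s t h' hcd, norm_mul]
    have h1 := ihc (fun hh => h32 (hh.mul_right d)) (m * s) (n * s)
    have h2 := ihd (fun hh => h32 (hh.mul_left c)) (m * t) (n * t)
    have hg := gcd_crt m n s t c d (by omega) (by omega) h' hcd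
    rw [hcd.primeFactors_mul, Finset.card_union_of_disjoint hcd.disjoint_primeFactors, pow_add]
    have hgs : Real.sqrt (Int.gcd (m * s) (Int.gcd (n * s) (c : ℤ))) *
        Real.sqrt (Int.gcd (m * t) (Int.gcd (n * t) (d : ℤ))) ≤
        Real.sqrt (Int.gcd m (Int.gcd n ((c * d : ℕ) : ℤ))) := by
      rw [← Real.sqrt_mul (by positivity)]
      exact Real.sqrt_le_sqrt (by exact_mod_cast hg)
    calc _ ≤ _ := mul_le_mul h1 h2 (norm_nonneg _) (by positivity)
      _ = (Real.sqrt c * Real.sqrt d) * (Real.sqrt (Int.gcd (m * s) (Int.gcd (n * s) (c : ℤ))) *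
        Real.sqrt (Int.gcd (m * t) (Int.gcd (n * t) (d : ℤ)))) *
        (2 ^ c.primeFactors.card * 2 ^ d.primeFactors.card) := by ring
      _ ≤ _ := by
        rw [← Real.sqrt_mul (by positivity), ← Nat.cast_mul]
        gcongr

lemma Kloosterman_eq (m n : ℤ) (c : ℕ) [NeZero c] : Kloosterman m n c = (KS m n c).re := by
  rw [Kloosterman, KS, Complex.re_sum]
  symm
  refine Finset.sum_bij (fun u _ => (u : ZMod c).val) ?_ ?_ ?_ ?_
  · intro u _
    rw [Finset.mem_filter, Finset.mem_range]
    exact ⟨ZMod.val_lt _, ZMod.val_coe_unit_coprime u⟩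
  · intro u _ v _ h
    exact Units.ext (ZMod.val_injective c h)
  · intro a ha
    rw [Finset.mem_filter, Finset.mem_range] at ha
    exact ⟨ZMod.unitOfCoprime a ha.2, Finset.mem_univ _, by
      rw [ZMod.coe_unitOfCoprime, ZMod.val_natCast, Nat.mod_eq_of_lt ha.1]⟩
  · intro u _
    congr 1
    have e : (m : ZMod c) * (u : ZMod c) + (n : ZMod c) * ((u⁻¹ : (ZMod c)ˣ) : ZMod c) =
        ((m * ((u : ZMod c).val : ℕ) +
          n * (((((u : ZMod c).val : ℕ) : ZMod c)⁻¹).val : ℤ) : ℤ) : ZMod c) := by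
      push_cast
      rw [ZMod.natCast_zmod_val, ZMod.natCast_zmod_val, ZMod.inv_coe_unit]
    rw [e, ZMod.stdAddChar_coe]
    congr 1
    rw [mul_div_assoc]

end Assemble
/-- Estermann's bound for Kloosterman sums with modulus not divisible by 32. -/
theorem estermann_bound (c : ℕ) (hc : 0 < c) (h32 : ¬ (32 ∣ c)) (m n : ℤ) :
    |Kloosterman m n c| ≤
      Real.sqrt c * Real.sqrt (Int.gcd m (Int.gcd n (c : ℤ))) *
        2 ^ c.primeFactors.card := by
  have : NeZero c := ⟨hc.ne'⟩
  rw [Kloosterman_eq]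
  exact (Complex.abs_re_le_norm _).trans (KS_bound c h32 m n)
end

section
/- Define F: [0,1] → [0,1] by F(x) = (2/π)(x√(1−x²) + arcsin x). For each x ∈ [0,1] let y(x) ∈ [0,1] be the unique solution of F(y(x)) = 1 − F(x). Then ∫₀¹ x · y(x) · (4/π)√(1−x²) dx ≥ 0.11109. -/
open MeasureTheory

/-- The cumulative distribution function `F(x) = μ^{(1)}([−x,x])
= (2/π)(x√(1−x²) + arcsin x)` of the Sato–Tate measure in `cos θ`. -/
noncomputable def satoTateCDF (x : ℝ) : ℝ :=
  (2 / Real.pi) * (x * Real.sqrt (1 - x ^ 2) + Real.arcsin x)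

lemma st_F_cont : Continuous satoTateCDF := by
  unfold satoTateCDF
  have := Real.continuous_arcsin
  fun_prop

lemma st_F_deriv {x : ℝ} (h0 : 0 < x) (h1 : x < 1) :
    HasStrictDerivAt satoTateCDF (4 / Real.pi * Real.sqrt (1 - x ^ 2)) x := by
  have hp : 0 < 1 - x ^ 2 := by nlinarith
  have hs : 0 < Real.sqrt (1 - x ^ 2) := Real.sqrt_pos.mpr hp
  have hsq : Real.sqrt (1 - x ^ 2) ^ 2 = 1 - x ^ 2 := Real.sq_sqrt hp.le
  have ha := Real.hasStrictDerivAt_arcsin (x := x) (by linarith) (by linarith)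
  have hb : HasStrictDerivAt (fun z : ℝ => 1 - z ^ 2) (-(2 * x)) x := by
    have := ((hasStrictDerivAt_id x).pow 2).const_sub 1
    simpa using this
  have hc := hb.sqrt hp.ne'
  have hd := (((hasStrictDerivAt_id x).mul hc).add ha).const_mul (2 / Real.pi)
  have heq : 2 / Real.pi * (1 * Real.sqrt (1 - x ^ 2) +
      id x * (-(2 * x) / (2 * Real.sqrt (1 - x ^ 2))) + 1 / Real.sqrt (1 - x ^ 2))
      = 4 / Real.pi * Real.sqrt (1 - x ^ 2) := by
    have hpi := Real.pi_ne_zero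
    simp only [id]
    field_simp
    rw [hsq]
    ring
  rw [← heq]
  exact hd

lemma st_F_mono : StrictMonoOn satoTateCDF (Set.Icc 0 1) := by
  apply strictMonoOn_of_deriv_pos (convex_Icc 0 1) st_F_cont.continuousOn
  intro x hx
  rw [interior_Icc] at hx
  rw [(st_F_deriv hx.1 hx.2).hasDerivAt.deriv]
  have : 0 < 1 - x ^ 2 := by nlinarith [hx.1, hx.2]
  have := Real.sqrt_pos.mpr this
  have := Real.pi_pos
  positivity

lemma st_F_zero : satoTateCDF 0 = 0 := by simp [satoTateCDF]

lemma st_F_one : satoTateCDF 1 = 1 := by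
  have := Real.pi_ne_zero
  simp [satoTateCDF]

/-- Partial first moment. -/
noncomputable def stH (x : ℝ) : ℝ :=
  4 / (3 * Real.pi) * (1 - (1 - x ^ 2) * Real.sqrt (1 - x ^ 2))

lemma st_H_cont : Continuous stH := by
  unfold stH
  fun_prop

lemma st_H_deriv {x : ℝ} (h0 : 0 < x) (h1 : x < 1) :
    HasDerivAt stH (x * (4 / Real.pi * Real.sqrt (1 - x ^ 2))) x := by
  have hp : 0 < 1 - x ^ 2 := by nlinarith
  have hs : 0 < Real.sqrt (1 - x ^ 2) := Real.sqrt_pos.mpr hp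
  have hsq : Real.sqrt (1 - x ^ 2) ^ 2 = 1 - x ^ 2 := Real.sq_sqrt hp.le
  have hb : HasDerivAt (fun z : ℝ => 1 - z ^ 2) (-(2 * x)) x := by
    have := ((hasDerivAt_id x).pow 2).const_sub 1
    simpa using this
  have hc := hb.sqrt hp.ne'
  have hd := ((hb.mul hc).const_sub 1).const_mul (4 / (3 * Real.pi))
  have heq : 4 / (3 * Real.pi) * -(-(2 * x) * Real.sqrt (1 - x ^ 2) +
      (1 - x ^ 2) * (-(2 * x) / (2 * Real.sqrt (1 - x ^ 2))))
      = x * (4 / Real.pi * Real.sqrt (1 - x ^ 2)) := by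
    have hpi := Real.pi_ne_zero
    rw [← hsq]
    rw [Real.sqrt_sq hs.le]
    field_simp
    ring
  rw [← heq]
  exact hd

lemma st_y_cont (y : ℝ → ℝ)
    (hy : ∀ x ∈ Set.Icc (0 : ℝ) 1, y x ∈ Set.Icc (0 : ℝ) 1 ∧
      satoTateCDF (y x) = 1 - satoTateCDF x) :
    ContinuousOn y (Set.Icc 0 1) := by
  rw [continuousOn_iff_continuous_domRestrict]
  let FI : Set.Icc (0:ℝ) 1 → ℝ := fun x => satoTateCDF x
  have hFI : Continuous FI := st_F_cont.comp continuous_subtype_val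
  have hinj : Function.Injective FI := fun a b h =>
    Subtype.ext (st_F_mono.injOn a.2 b.2 h)
  have hemb := hFI.isClosedEmbedding hinj
  let Y : Set.Icc (0:ℝ) 1 → Set.Icc (0:ℝ) 1 := fun x => ⟨y x, (hy x x.2).1⟩
  have hY : Continuous Y := by
    rw [hemb.isInducing.continuous_iff]
    have : FI ∘ Y = fun x => 1 - FI x := by
      funext x
      exact (hy x x.2).2
    rw [this]
    fun_prop
  exact continuous_subtype_val.comp hY

lemma st_y_anti (y : ℝ → ℝ)
    (hy : ∀ x ∈ Set.Icc (0 : ℝ) 1, y x ∈ Set.Icc (0 : ℝ) 1 ∧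
      satoTateCDF (y x) = 1 - satoTateCDF x) : AntitoneOn y (Set.Icc 0 1) := by
  intro a ha b hb hab
  rw [← st_F_mono.le_iff_le (hy b hb).1 (hy a ha).1, (hy a ha).2, (hy b hb).2]
  have := (st_F_mono.le_iff_le ha hb).2 hab
  linarith

lemma st_y_one (y : ℝ → ℝ)
    (hy : ∀ x ∈ Set.Icc (0 : ℝ) 1, y x ∈ Set.Icc (0 : ℝ) 1 ∧
      satoTateCDF (y x) = 1 - satoTateCDF x) : y 1 = 0 := by
  have h1 : (1:ℝ) ∈ Set.Icc (0:ℝ) 1 := by simp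
  have h0 : (0:ℝ) ∈ Set.Icc (0:ℝ) 1 := by simp
  apply st_F_mono.injOn (hy 1 h1).1 h0
  rw [(hy 1 h1).2, st_F_one, st_F_zero]; norm_num

lemma st_y_mem (y : ℝ → ℝ)
    (hy : ∀ x ∈ Set.Icc (0 : ℝ) 1, y x ∈ Set.Icc (0 : ℝ) 1 ∧
      satoTateCDF (y x) = 1 - satoTateCDF x) {x : ℝ} (hx : x ∈ Set.Ioo (0:ℝ) 1) : y x ∈ Set.Ioo (0:ℝ) 1 := by
  have hx' : x ∈ Set.Icc (0:ℝ) 1 := Set.Ioo_subset_Icc_self hx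
  have h1 : (1:ℝ) ∈ Set.Icc (0:ℝ) 1 := by simp
  have h0 : (0:ℝ) ∈ Set.Icc (0:ℝ) 1 := by simp
  have hh := hy x hx'
  have a := st_F_mono h0 hx' hx.1
  have b := st_F_mono hx' h1 hx.2
  rw [st_F_zero] at a
  rw [st_F_one] at b
  constructor
  · rw [← st_F_mono.lt_iff_lt h0 hh.1, hh.2, st_F_zero]; linarith
  · rw [← st_F_mono.lt_iff_lt hh.1 h1, hh.2, st_F_one]; linarith

lemma st_y_deriv (y : ℝ → ℝ)
    (hy : ∀ x ∈ Set.Icc (0 : ℝ) 1, y x ∈ Set.Icc (0 : ℝ) 1 ∧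
      satoTateCDF (y x) = 1 - satoTateCDF x) {x : ℝ} (hx : x ∈ Set.Ioo (0:ℝ) 1) :
    HasDerivAt y ((4 / Real.pi * Real.sqrt (1 - y x ^ 2))⁻¹ *
      (-(4 / Real.pi * Real.sqrt (1 - x ^ 2)))) x := by
  have hm := st_y_mem y hy hx
  have hF := st_F_deriv hm.1 hm.2
  have hne : 4 / Real.pi * Real.sqrt (1 - y x ^ 2) ≠ 0 := by
    have : 0 < 1 - y x ^ 2 := by nlinarith [hm.1, hm.2]
    have := Real.sqrt_pos.mpr this
    have := Real.pi_pos
    positivity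
  have hnhds : Set.Icc (0:ℝ) 1 ∈ nhds x := Icc_mem_nhds hx.1 hx.2
  have hc : ContinuousAt y x := (st_y_cont y hy).continuousAt hnhds
  have hL := (hF.to_localInverse hne).hasDerivAt
  rw [(hy x (Set.Ioo_subset_Icc_self hx)).2] at hL
  have h2 := (st_F_deriv hx.1 hx.2).hasDerivAt.const_sub 1
  have h3 := HasDerivAt.comp x hL h2
  refine h3.congr_of_eventuallyEq ?_
  have hev := hc.eventually (hF.eventually_left_inverse hne)
  filter_upwards [hev, hnhds] with z hz hz2
  rw [Function.comp_apply, ← (hy z hz2).2, hz]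

lemma st_p_anti (y : ℝ → ℝ)
    (hy : ∀ x ∈ Set.Icc (0 : ℝ) 1, y x ∈ Set.Icc (0 : ℝ) 1 ∧
      satoTateCDF (y x) = 1 - satoTateCDF x) : AntitoneOn (fun x => y x * (4 / Real.pi * Real.sqrt (1 - x ^ 2)))
    (Set.Icc 0 1) := by
  intro a ha b hb hab
  have h1 := st_y_anti y hy ha hb hab
  have h2 : Real.sqrt (1 - b ^ 2) ≤ Real.sqrt (1 - a ^ 2) :=
    Real.sqrt_le_sqrt (by nlinarith [ha.1])
  have h3 := (hy a ha).1.1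
  have hpi := Real.pi_pos
  have := Real.sqrt_nonneg (1 - b ^ 2)
  dsimp only
  gcongr

lemma st_p_cont (y : ℝ → ℝ)
    (hy : ∀ x ∈ Set.Icc (0 : ℝ) 1, y x ∈ Set.Icc (0 : ℝ) 1 ∧
      satoTateCDF (y x) = 1 - satoTateCDF x) : ContinuousOn (fun x => y x * (4 / Real.pi * Real.sqrt (1 - x ^ 2)))
    (Set.Icc 0 1) := by
  apply (st_y_cont y hy).mul
  fun_prop

lemma st_G (y : ℝ → ℝ)
    (hy : ∀ x ∈ Set.Icc (0 : ℝ) 1, y x ∈ Set.Icc (0 : ℝ) 1 ∧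
      satoTateCDF (y x) = 1 - satoTateCDF x) {m : ℝ} (hm : m ∈ Set.Icc (0:ℝ) 1) :
    ∫ x in m..1, y x * (4 / Real.pi * Real.sqrt (1 - x ^ 2)) = stH (y m) := by
  have hsub : Set.Icc m 1 ⊆ Set.Icc 0 1 := Set.Icc_subset_Icc_left hm.1
  have h := intervalIntegral.integral_eq_sub_of_hasDerivAt_of_le (f := fun x => - stH (y x))
    (f' := fun x => y x * (4 / Real.pi * Real.sqrt (1 - x ^ 2))) hm.2
    ((st_H_cont.comp_continuousOn ((st_y_cont y hy).mono hsub)).neg) ?_ ?_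
  · rw [h, st_y_one y hy]
    simp [stH]
  · intro x hx
    have hx' : x ∈ Set.Ioo (0:ℝ) 1 := ⟨hm.1.trans_lt hx.1, hx.2⟩
    have hm := st_y_mem y hy hx'
    have hne : Real.sqrt (1 - y x ^ 2) ≠ 0 := by
      have : 0 < 1 - y x ^ 2 := by nlinarith [hm.1, hm.2]
      exact (Real.sqrt_pos.mpr this).ne'
    have hd := ((st_H_deriv hm.1 hm.2).comp x (st_y_deriv y hy hx')).neg
    have hpi := Real.pi_ne_zero
    have heq : y x * (4 / Real.pi * Real.sqrt (1 - x ^ 2)) =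
        -(y x * (4 / Real.pi * Real.sqrt (1 - y x ^ 2)) *
          ((4 / Real.pi * Real.sqrt (1 - y x ^ 2))⁻¹ *
            -(4 / Real.pi * Real.sqrt (1 - x ^ 2)))) := by
      field_simp
    rw [heq]
    exact hd
  · apply ContinuousOn.intervalIntegrable
    rw [Set.uIcc_of_le hm.2]
    exact (st_p_cont y hy).mono hsub

lemma st_cell (y : ℝ → ℝ)
    (hy : ∀ x ∈ Set.Icc (0 : ℝ) 1, y x ∈ Set.Icc (0 : ℝ) 1 ∧
      satoTateCDF (y x) = 1 - satoTateCDF x) {a m b : ℝ} (ha : 0 ≤ a) (ham : a ≤ m) (hmb : m ≤ b) (hb : b ≤ 1)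
    (hmid : m - a = b - m) :
    (b - a) * stH (y m) + a * stH (y a) - b * stH (y b) ≤
      ∫ x in a..b, x * (y x * (4 / Real.pi * Real.sqrt (1 - x ^ 2))) := by
  have hanti := st_p_anti y hy
  have hcont := st_p_cont y hy
  have hGa := st_G y hy (m := a) ⟨ha, by linarith⟩
  have hGm := st_G y hy (m := m) ⟨by linarith, by linarith⟩
  have hGb := st_G y hy (m := b) ⟨by linarith, by linarith⟩
  generalize hp : (fun x => y x * (4 / Real.pi * Real.sqrt (1 - x ^ 2))) = p at *
  have hp' : ∀ x, y x * (4 / Real.pi * Real.sqrt (1 - x ^ 2)) = p x := fun x => by rw [← hp]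
  simp only [hp'] at *
  have hI : ∀ u v, 0 ≤ u → u ≤ v → v ≤ 1 → IntervalIntegrable p volume u v := by
    intro u v hu huv hv
    apply ContinuousOn.intervalIntegrable
    rw [Set.uIcc_of_le huv]
    exact hcont.mono (Set.Icc_subset_Icc hu hv)
  have hJ : ∀ u v, 0 ≤ u → u ≤ v → v ≤ 1 →
      IntervalIntegrable (fun x => x * p x) volume u v := by
    intro u v hu huv hv
    apply ContinuousOn.intervalIntegrable
    rw [Set.uIcc_of_le huv]
    exact continuousOn_id.mul (hcont.mono (Set.Icc_subset_Icc hu hv))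
  have i1 := hI a m ha ham (by linarith)
  have i2 := hI m b (by linarith) hmb hb
  have i3 := hI b 1 (by linarith) hb le_rfl
  have e1 := intervalIntegral.integral_add_adjacent_intervals i2 i3
  have e2 := intervalIntegral.integral_add_adjacent_intervals i1 (i2.trans i3)
  have e3 := intervalIntegral.integral_add_adjacent_intervals
    (hJ a m ha ham (by linarith)) (hJ m b (by linarith) hmb hb)
  have L1 : ∫ x in a..m, (a * p x + (x - a) * p m) ≤ ∫ x in a..m, x * p x := by
    apply intervalIntegral.integral_mono_on ham _ (hJ a m ha ham (by linarith))
    · intro x hx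
      have := hanti (a := x) ⟨by linarith [hx.1], by linarith [hx.2]⟩
        (b := m) ⟨by linarith, by linarith⟩ hx.2
      nlinarith [hx.1]
    · exact (i1.const_mul a).add (Continuous.intervalIntegrable (by fun_prop) _ _)
  have L2 : ∫ x in m..b, (b * p x + (x - b) * p m) ≤ ∫ x in m..b, x * p x := by
    apply intervalIntegral.integral_mono_on hmb _ (hJ m b (by linarith) hmb hb)
    · intro x hx
      have := hanti (b := x) (a := m) ⟨by linarith, by linarith⟩
        ⟨by linarith [hx.1], by linarith [hx.2]⟩ hx.1
      nlinarith [hx.2]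
    · exact (i2.const_mul b).add (Continuous.intervalIntegrable (by fun_prop) _ _)
  rw [intervalIntegral.integral_add (i1.const_mul a)
    (Continuous.intervalIntegrable (by fun_prop) _ _), intervalIntegral.integral_const_mul,
    intervalIntegral.integral_mul_const] at L1
  rw [intervalIntegral.integral_add (i2.const_mul b)
    (Continuous.intervalIntegrable (by fun_prop) _ _), intervalIntegral.integral_const_mul,
    intervalIntegral.integral_mul_const] at L2
  have q1 : ∫ x in a..m, (x - a) = (m - a) ^ 2 / 2 := by
    rw [intervalIntegral.integral_sub (by simp) (by simp)]
    simp; ring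
  have q2 : ∫ x in m..b, (x - b) = - (b - m) ^ 2 / 2 := by
    rw [intervalIntegral.integral_sub (by simp) (by simp)]
    simp; ring
  rw [q1, hmid] at L1
  rw [q2] at L2
  rw [← e3]
  have k1 : ∫ x in m..b, p x = stH (y m) - stH (y b) := by linarith
  have k2 : ∫ x in a..m, p x = stH (y a) - stH (y m) := by linarith
  rw [k2] at L1
  rw [k1] at L2
  linarith

lemma st_cos {x : ℝ} (hx : 0 ≤ x) :
    1 - x ^ 2 / 2 + x ^ 4 / 24 - x ^ 6 / 720 ≤ Real.cos x := by
  have gen : ∀ (f f' : ℝ → ℝ), (∀ z, HasDerivAt f (f' z) z) → (∀ z, 0 ≤ z → 0 ≤ f' z) →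
      f 0 = 0 → ∀ z, 0 ≤ z → 0 ≤ f z := by
    intro f f' hd hn h0 z hz
    have hm : MonotoneOn f (Set.Ici 0) := by
      apply monotoneOn_of_deriv_nonneg (convex_Ici 0)
      · exact fun z _ => (hd z).continuousAt.continuousWithinAt
      · exact fun z _ => (hd z).differentiableAt.differentiableWithinAt
      · intro z hz
        rw [(hd z).deriv]
        rw [interior_Ici] at hz
        exact hn z (le_of_lt hz)
    have := hm (Set.mem_Ici.2 le_rfl) (Set.mem_Ici.2 hz) hz
    rwa [h0] at this
  have P : ∀ (n : ℕ) (c z : ℝ), HasDerivAt (fun t : ℝ => t ^ n / c) (n * z ^ (n - 1) / c) z :=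
    fun n c z => (hasDerivAt_pow n z).div_const c
  have s1 : ∀ z : ℝ, 0 ≤ z → 0 ≤ z - Real.sin z := fun z hz => by
    linarith [Real.sin_le hz]
  have c2 : ∀ z : ℝ, 0 ≤ z → 0 ≤ Real.cos z - (1 - z ^ 2 / 2) := fun z hz => by
    linarith [Real.one_sub_sq_div_two_le_cos (x := z)]
  have s3 := gen (fun z => Real.sin z - (z - z ^ 3 / 6)) _ (fun z =>
    (Real.hasDerivAt_sin z).sub ((hasDerivAt_id' z).sub (P 3 6 z)))
    (fun z hz => by have := c2 z hz; norm_num; linarith) (by simp)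
  have c4 := gen (fun z => (1 - z ^ 2 / 2 + z ^ 4 / 24) - Real.cos z) _ (fun z =>
    (((P 2 2 z).const_sub 1).add (P 4 24 z)).sub (Real.hasDerivAt_cos z))
    (fun z hz => by have := s3 z hz; norm_num; linarith) (by simp)
  have s5 := gen (fun z => (z - z ^ 3 / 6 + z ^ 5 / 120) - Real.sin z) _ (fun z =>
    (((hasDerivAt_id' z).sub (P 3 6 z)).add (P 5 120 z)).sub (Real.hasDerivAt_sin z))
    (fun z hz => by have := c4 z hz; norm_num; linarith) (by simp)
  have c6 := gen (fun z => Real.cos z - (1 - z ^ 2 / 2 + z ^ 4 / 24 - z ^ 6 / 720)) _ (fun z =>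
    (Real.hasDerivAt_cos z).sub ((((P 2 2 z).const_sub 1).add (P 4 24 z)).sub (P 6 720 z)))
    (fun z hz => by have := s5 z hz; norm_num; linarith) (by simp)
  linarith [c6 x hx]

lemma st_F_bound {m q s c : ℝ} (hm : m ∈ Set.Icc (0:ℝ) 1) (hq : q ∈ Set.Icc (0:ℝ) 1)
    (hs : Real.sqrt (1 - m ^ 2) ≤ s) (hc : Real.sqrt (1 - q ^ 2) ≤ c)
    (hR : m * s + q * c ≤ 1 ∧ m ^ 2 + q ^ 2 ≤ 1)
    (h : m * c + q * s ≤ 1 - (m * s + q * c) ^ 2 / 2 + (m * s + q * c) ^ 4 / 24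
      - (m * s + q * c) ^ 6 / 720) :
    satoTateCDF q ≤ 1 - satoTateCDF m := by
  have s0 := Real.sqrt_nonneg (1 - m ^ 2)
  have c0 := Real.sqrt_nonneg (1 - q ^ 2)
  have hR0 : 0 ≤ m * s + q * c := by nlinarith [hm.1, hq.1]
  have hcos := st_cos hR0
  have hpi := Real.pi_gt_three
  have a0 := Real.arcsin_nonneg.2 hm.1
  have b0 := Real.arcsin_nonneg.2 hq.1
  have a1 := Real.arcsin_le_pi_div_two m
  have b1 := Real.arcsin_le_pi_div_two q
  have hsin : Real.sin (Real.arcsin m + Real.arcsin q) ≤ Real.cos (m * s + q * c) := by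
    rw [Real.sin_add, Real.sin_arcsin (by linarith [hm.1]) hm.2,
      Real.sin_arcsin (by linarith [hq.1]) hq.2, Real.cos_arcsin, Real.cos_arcsin]
    nlinarith [hm.1, hq.1]
  have hq' : q ≤ Real.sqrt (1 - m ^ 2) := Real.le_sqrt_of_sq_le (by linarith)
  have hle : Real.arcsin q ≤ Real.pi / 2 - Real.arcsin m := by
    apply (Real.arcsin_le_iff_le_sin ⟨by linarith [hq.1], hq.2⟩ ⟨by linarith, by linarith⟩).2
    rwa [Real.sin_pi_div_two_sub, Real.cos_arcsin]
  have hfin : Real.arcsin m + Real.arcsin q ≤ Real.pi / 2 - (m * s + q * c) := by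
    have hR1 := hR.1
    by_contra! hcon
    have := Real.sin_lt_sin_of_lt_of_le_pi_div_two (by linarith) (by linarith) hcon
    rw [Real.sin_pi_div_two_sub] at this
    linarith
  have h1 : m * Real.sqrt (1 - m ^ 2) ≤ m * s := mul_le_mul_of_nonneg_left hs hm.1
  have h2 : q * Real.sqrt (1 - q ^ 2) ≤ q * c := mul_le_mul_of_nonneg_left hc hq.1
  have h3 : (q * Real.sqrt (1 - q ^ 2) + Real.arcsin q) +
      (m * Real.sqrt (1 - m ^ 2) + Real.arcsin m) ≤ Real.pi / 2 := by linarith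
  have h4 := mul_le_mul_of_nonneg_left h3 (show 0 ≤ 2 / Real.pi by positivity)
  have h5 : 2 / Real.pi * (Real.pi / 2) = 1 := by field_simp
  unfold satoTateCDF
  linarith

lemma key (y : ℝ → ℝ)
    (hy : ∀ x ∈ Set.Icc (0 : ℝ) 1, y x ∈ Set.Icc (0 : ℝ) 1 ∧
      satoTateCDF (y x) = 1 - satoTateCDF x) (m q s c e : ℝ)
    (hm : m ∈ Set.Icc (0:ℝ) 1) (hq : q ∈ Set.Icc (0:ℝ) 1)
    (hs : 0 ≤ s ∧ 1 - m ^ 2 ≤ s ^ 2) (hc : 0 ≤ c ∧ 1 - q ^ 2 ≤ c ^ 2)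
    (hR : m * s + q * c ≤ 1 ∧ m ^ 2 + q ^ 2 ≤ 1)
    (h : m * c + q * s ≤ 1 - (m * s + q * c) ^ 2 / 2 + (m * s + q * c) ^ 4 / 24
      - (m * s + q * c) ^ 6 / 720)
    (he : e ≤ 1 - c ^ 3) :
    4 / (3 * Real.pi) * e ≤ stH (y m) := by
  have hs' : Real.sqrt (1 - m ^ 2) ≤ s := Real.sqrt_le_iff.2 hs
  have hc' : Real.sqrt (1 - q ^ 2) ≤ c := Real.sqrt_le_iff.2 hc
  have hb := st_F_bound hm hq hs' hc' hR h
  have hh := hy m hm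
  rw [← hh.2, st_F_mono.le_iff_le hq hh.1] at hb
  have hpi := Real.pi_pos
  unfold stH
  gcongr
  refine he.trans ?_
  have h1 : Real.sqrt (1 - y m ^ 2) ≤ c :=
    (Real.sqrt_le_sqrt (by nlinarith [hq.1])).trans hc'
  have h2 : 1 - y m ^ 2 ≤ c ^ 2 := by nlinarith [hq.1, hc.2]
  have h3 := Real.sqrt_nonneg (1 - y m ^ 2)
  have h4 : 0 ≤ 1 - y m ^ 2 := by nlinarith [hh.1.1, hh.1.2]
  have : (1 - y m ^ 2) * Real.sqrt (1 - y m ^ 2) ≤ c ^ 2 * c := by gcongr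
  nlinarith

/-- Numerical lower bound `C₂ ≥ 0.11109` for the rearrangement integral. -/
theorem sato_tate_rearrangement_bound (y : ℝ → ℝ)
    (hy : ∀ x ∈ Set.Icc (0 : ℝ) 1, y x ∈ Set.Icc (0 : ℝ) 1 ∧
      satoTateCDF (y x) = 1 - satoTateCDF x) :
    0.11109 ≤ ∫ x in Set.Icc (0 : ℝ) 1,
      x * y x * ((4 / Real.pi) * Real.sqrt (1 - x ^ 2)) := by
  rw [integral_Icc_eq_integral_Ioc, ← intervalIntegral.integral_of_le zero_le_one]
  simp only [mul_assoc]
  have hJ : ∀ u v : ℝ, 0 ≤ u → u ≤ v → v ≤ 1 → IntervalIntegrable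
      (fun x => x * (y x * (4 / Real.pi * Real.sqrt (1 - x ^ 2)))) volume u v := by
    intro u v hu huv hv
    apply ContinuousOn.intervalIntegrable
    rw [Set.uIcc_of_le huv]
    exact continuousOn_id.mul ((st_p_cont y hy).mono (Set.Icc_subset_Icc hu hv))
  have hstep : ∀ n : ℕ, n ≤ 32 →
      ∑ k ∈ Finset.range n, (1 / 32) * stH (y ((2 * k + 1) / 64)) -
        (n / 32 : ℝ) * stH (y (n / 32)) ≤
      ∫ x in (0:ℝ)..(n / 32 : ℝ), x * (y x * (4 / Real.pi * Real.sqrt (1 - x ^ 2))) := by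
    intro n
    induction n with
    | zero => intro _; simp
    | succ n ih =>
      intro hn
      have hn' : ((n : ℝ) + 1) ≤ 32 := by exact_mod_cast hn
      have h0 : (0 : ℝ) ≤ n := Nat.cast_nonneg n
      have ih := ih (by omega)
      have hc := st_cell y hy (a := n / 32) (m := (2 * n + 1) / 64) (b := (n + 1) / 32)
        (by positivity) (by linarith) (by linarith) (by linarith) (by ring)
      rw [Finset.sum_range_succ]
      push_cast
      rw [← intervalIntegral.integral_add_adjacent_intervals
        (hJ 0 (n / 32) le_rfl (by linarith) (by linarith))
        (hJ (n / 32) ((n + 1) / 32) (by linarith) (by linarith) (by linarith))]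
      have : ((n + 1) / 32 - n / 32 : ℝ) = 1 / 32 := by ring
      rw [this] at hc
      linarith
  have hfin := hstep 32 le_rfl
  have hz : ((32 : ℕ) : ℝ) / 32 = 1 := by norm_num
  rw [hz, st_y_one y hy] at hfin
  have hH0 : stH 0 = 0 := by simp [stH]
  rw [hH0] at hfin
  refine le_trans ?_ hfin
  simp only [Finset.sum_range_succ, Finset.sum_range_zero]
  norm_num only [Nat.cast_ofNat, Nat.cast_zero, Nat.cast_one]
  have e0 := key y hy (1/64) (5841/6250) (999879/1000000) (355807/1000000) (190991/200000) (by norm_num)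
    (by norm_num) (by norm_num) (by norm_num) (by norm_num) (by norm_num) (by norm_num)
  have e1 := key y hy (3/64) (8629/10000) (499451/500000) (15793/31250) (217731/250000) (by norm_num)
    (by norm_num) (by norm_num) (by norm_num) (by norm_num) (by norm_num) (by norm_num)
  have e2 := key y hy (5/64) (80621/100000) (199389/200000) (591631/1000000) (792913/1000000) (by norm_num)
    (by norm_num) (by norm_num) (by norm_num) (by norm_num) (by norm_num) (by norm_num)
  have e3 := key y hy (7/64) (75633/100000) (497001/500000) (40887/62500) (720027/1000000) (by norm_num)
    (by norm_num) (by norm_num) (by norm_num) (by norm_num) (by norm_num) (by norm_num)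
  have e4 := key y hy (9/64) (7107/10000) (61879/62500) (703497/1000000) (651833/1000000) (by norm_num)
    (by norm_num) (by norm_num) (by norm_num) (by norm_num) (by norm_num) (by norm_num)
  have e5 := key y hy (11/64) (8351/12500) (6157/6250) (744091/1000000) (294009/500000) (by norm_num)
    (by norm_num) (by norm_num) (by norm_num) (by norm_num) (by norm_num) (by norm_num)
  have e6 := key y hy (13/64) (62777/100000) (489577/500000) (973/1250) (264181/500000) (by norm_num)
    (by norm_num) (by norm_num) (by norm_num) (by norm_num) (by norm_num) (by norm_num)
  have e7 := key y hy (15/64) (29467/50000) (243037/250000) (807887/1000000) (472707/1000000) (by norm_num)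
    (by norm_num) (by norm_num) (by norm_num) (by norm_num) (by norm_num) (by norm_num)
  have e8 := key y hy (17/64) (3453/6250) (482039/500000) (104191/125000) (42089/100000) (by norm_num)
    (by norm_num) (by norm_num) (by norm_num) (by norm_num) (by norm_num) (by norm_num)
  have e9 := key y hy (19/64) (51699/100000) (477459/500000) (855993/1000000) (372793/1000000) (by norm_num)
    (by norm_num) (by norm_num) (by norm_num) (by norm_num) (by norm_num) (by norm_num)
  have e10 := key y hy (21/64) (3017/6250) (236159/250000) (13684/15625) (164147/500000) (by norm_num)
    (by norm_num) (by norm_num) (by norm_num) (by norm_num) (by norm_num) (by norm_num)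
  have e11 := key y hy (23/64) (8991/20000) (186639/200000) (893257/1000000) (287263/1000000) (by norm_num)
    (by norm_num) (by norm_num) (by norm_num) (by norm_num) (by norm_num) (by norm_num)
  have e12 := key y hy (25/64) (2087/5000) (920551/1000000) (227181/250000) (124797/500000) (by norm_num)
    (by norm_num) (by norm_num) (by norm_num) (by norm_num) (by norm_num) (by norm_num)
  have e13 := key y hy (27/64) (19311/50000) (28333/31250) (115301/125000) (215181/1000000) (by norm_num)
    (by norm_num) (by norm_num) (by norm_num) (by norm_num) (by norm_num) (by norm_num)
  have e14 := key y hy (29/64) (7119/20000) (111431/125000) (934507/1000000) (183891/1000000) (by norm_num)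
    (by norm_num) (by norm_num) (by norm_num) (by norm_num) (by norm_num) (by norm_num)
  have e15 := key y hy (31/64) (32659/100000) (437431/500000) (59073/62500) (155641/1000000) (by norm_num)
    (by norm_num) (by norm_num) (by norm_num) (by norm_num) (by norm_num) (by norm_num)
  have e16 := key y hy (33/64) (2981/10000) (53551/62500) (119317/125000) (26057/200000) (by norm_num)
    (by norm_num) (by norm_num) (by norm_num) (by norm_num) (by norm_num) (by norm_num)
  have e17 := key y hy (35/64) (27049/100000) (26163/31250) (240681/250000) (107711/1000000) (by norm_num)
    (by norm_num) (by norm_num) (by norm_num) (by norm_num) (by norm_num) (by norm_num)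
  have e18 := key y hy (37/64) (39/160) (16319/20000) (12123/12500) (43889/500000) (by norm_num)
    (by norm_num) (by norm_num) (by norm_num) (by norm_num) (by norm_num) (by norm_num)
  have e19 := key y hy (39/64) (21791/100000) (198221/250000) (97597/100000) (70371/1000000) (by norm_num)
    (by norm_num) (by norm_num) (by norm_num) (by norm_num) (by norm_num) (by norm_num)
  have e20 := key y hy (41/64) (19299/100000) (153571/200000) (490601/500000) (2767/50000) (by norm_num)
    (by norm_num) (by norm_num) (by norm_num) (by norm_num) (by norm_num) (by norm_num)
  have e21 := key y hy (43/64) (16901/100000) (370333/500000) (61601/62500) (21267/500000) (by norm_num)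
    (by norm_num) (by norm_num) (by norm_num) (by norm_num) (by norm_num) (by norm_num)
  have e22 := key y hy (45/64) (3651/25000) (177767/250000) (6183/6250) (3977/125000) (by norm_num)
    (by norm_num) (by norm_num) (by norm_num) (by norm_num) (by norm_num) (by norm_num)
  have e23 := key y hy (47/64) (12411/100000) (135749/200000) (99227/100000) (23011/1000000) (by norm_num)
    (by norm_num) (by norm_num) (by norm_num) (by norm_num) (by norm_num) (by norm_num)
  have e24 := key y hy (49/64) (10331/100000) (643289/1000000) (994651/1000000) (15961/1000000) (by norm_num)
    (by norm_num) (by norm_num) (by norm_num) (by norm_num) (by norm_num) (by norm_num)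
  have e25 := key y hy (51/64) (2093/25000) (302073/500000) (996491/1000000) (1049/100000) (by norm_num)
    (by norm_num) (by norm_num) (by norm_num) (by norm_num) (by norm_num) (by norm_num)
  have e26 := key y hy (53/64) (3273/50000) (112109/200000) (997857/1000000) (1283/200000) (by norm_num)
    (by norm_num) (by norm_num) (by norm_num) (by norm_num) (by norm_num) (by norm_num)
  have e27 := key y hy (55/64) (4867/100000) (511347/1000000) (31213/31250) (3547/1000000) (by norm_num)
    (by norm_num) (by norm_num) (by norm_num) (by norm_num) (by norm_num) (by norm_num)
  have e28 := key y hy (57/64) (1677/50000) (22737/50000) (999439/1000000) (841/500000) (by norm_num)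
    (by norm_num) (by norm_num) (by norm_num) (by norm_num) (by norm_num) (by norm_num)
  have e29 := key y hy (59/64) (1017/50000) (387489/1000000) (199959/200000) (307/500000) (by norm_num)
    (by norm_num) (by norm_num) (by norm_num) (by norm_num) (by norm_num) (by norm_num)
  have e30 := key y hy (61/64) (949/100000) (151289/500000) (249989/250000) (131/1000000) (by norm_num)
    (by norm_num) (by norm_num) (by norm_num) (by norm_num) (by norm_num) (by norm_num)
  have e31 := key y hy (63/64) (183/100000) (88043/500000) (1/1) (0/1) (by norm_num)
    (by norm_num) (by norm_num) (by norm_num) (by norm_num) (by norm_num) (by norm_num)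
  have hpi : (0.42441 : ℝ) ≤ 4 / (3 * Real.pi) := by
    have := Real.pi_lt_d6
    have h0 := Real.pi_pos
    rw [le_div_iff₀ (by positivity)]
    linarith
  linarith [hpi]
end
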